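/- Let K be a number field and let D₁ and D₂ be quaternion division algebras over K, i.e., central division K-algebras of degree 2. If D₁ and D₂ have the same quadratic subfields — for every field extension F/K of degree 2, there is a K-algebra embedding F → D₁ if and only if there is a K-algebra embedding F → D₂ — then D₁ and D₂ are isomorphic as K-algebras. -/

import Mathlib

set_option linter.unusedSectionVars false
set_option linter.unusedSimpArgs false
set_option linter.unusedVariables false
namespace QH
open scoped WithZero
open WithZero

section Local
variable {K : Type*} [Field K]

/-- values of the binary norm form `p² - a q²`. -/
def Nm (a : K) : Subgroup Kˣ where
  carrier := {x | ∃ p q : K, (x : K) = p ^ 2 - a * q ^ 2}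
  one_mem' := ⟨1, 0, by simp⟩
  mul_mem' := by
    rintro x y ⟨p, q, h⟩ ⟨p', q', h'⟩
    exact ⟨p * p' + a * q * q', p * q' + q * p', by rw [Units.val_mul, h, h']; ring⟩
  inv_mem' := by
    rintro x ⟨p, q, h⟩
    refine ⟨p / x, q / x, ?_⟩
    have : (x : K) ≠ 0 := x.ne_zero
    rw [Units.val_inv_eq_inv_val]
    field_simp
    rw [h]

theorem mem_Nm {a : K} {x : Kˣ} : x ∈ Nm a ↔ ∃ p q : K, (x : K) = p ^ 2 - a * q ^ 2 := Iff.rfl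

theorem sq_mem_Nm (a : K) (x : Kˣ) : x ^ 2 ∈ Nm a := ⟨x, 0, by simp⟩

variable [CharZero K] (V : Valuation K ℤᵐ⁰)

theorem V_two_le : V 2 ≤ 1 := by
  have := V.map_add 1 1
  simp only [map_one, max_self] at this
  rwa [one_add_one_eq_two] at this

theorem V_four : V 4 = V 2 ^ 2 := by rw [← map_pow]; norm_num
theorem V_four_le : V 4 ≤ 1 := by rw [V_four]; exact pow_le_one' (V_two_le V) 2
theorem V_four_pos : 0 < V 4 := by
  rw [zero_lt_iff, Valuation.ne_zero_iff]; norm_num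

variable {V}
theorem V_eq_one_of_sub {x : K} (h : V (x - 1) < 1) : V x = 1 := by
  have := V.map_one_add_of_lt h
  simpa using this

variable (V)
/-- elements which are squares in the completion. -/
def Sq : Subgroup Kˣ where
  carrier := {x | ∃ y : K, y ≠ 0 ∧ V (x * y ^ 2 - 1) < V 4 }
  one_mem' := ⟨1, one_ne_zero, by simpa using V_four_pos V⟩
  mul_mem' := by
    rintro x x' ⟨y, hy, h⟩ ⟨y', hy', h'⟩
    refine ⟨y * y', mul_ne_zero hy hy', ?_⟩
    have e : ((x * x' : Kˣ) : K) * (y * y') ^ 2 - 1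
      = (x * y ^ 2) * (x' * y' ^ 2 - 1) + (x * y ^ 2 - 1) := by push_cast; ring
    rw [e]
    refine V.map_add_lt ?_ h
    rw [map_mul, V_eq_one_of_sub (h.trans_le (V_four_le V)), one_mul]
    exact h'
  inv_mem' := by
    rintro x ⟨y, hy, h⟩
    refine ⟨y⁻¹, inv_ne_zero hy, ?_⟩
    have h1 := V_eq_one_of_sub (h.trans_le (V_four_le V))
    have hx : (x : K) ≠ 0 := x.ne_zero
    have e : ((x⁻¹ : Kˣ) : K) * (y⁻¹) ^ 2 - 1 = - (x * y ^ 2 - 1) / (x * y ^ 2) := by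
      push_cast; field_simp; ring
    rw [e, map_div₀, h1, Valuation.map_neg, div_one]
    exact h
variable {V}

theorem mem_Sq {x : Kˣ} : x ∈ Sq V ↔ ∃ y : K, y ≠ 0 ∧ V (x * y ^ 2 - 1) < V 4 := Iff.rfl

theorem sq_mem_Sq (x : Kˣ) : x ^ 2 ∈ Sq V := by
  refine ⟨x⁻¹, inv_ne_zero x.ne_zero, ?_⟩
  have hx : (x : K) ≠ 0 := x.ne_zero
  have e : ((x ^ 2 : Kˣ) : K) * (x : K)⁻¹ ^ 2 - 1 = 0 := by push_cast; field_simp; simp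
  rw [e, map_zero]; exact V_four_pos V

theorem mem_Sq_of_near {x : Kˣ} (h : V (x - 1) < V 4) : x ∈ Sq V :=
  ⟨1, one_ne_zero, by simpa using h⟩

theorem lt_one_iff_le_exp {x : ℤᵐ⁰} : x < 1 ↔ x ≤ exp (-1 : ℤ) := by
  rcases eq_or_ne x 0 with rfl | hx
  · simp
  · rw [← exp_log hx, ← exp_zero, exp_lt_exp, exp_le_exp]; omega

theorem exists_exp_lt {g : ℤᵐ⁰} (hg : g ≠ 0) : ∃ n : ℕ, exp (-(n : ℤ)) < g := by
  refine ⟨((log g).natAbs + 1 : ℕ), ?_⟩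
  rw [← exp_log hg, log_exp, exp_lt_exp]; omega

theorem Sq_precise_aux {x : Kˣ} (hx : x ∈ Sq V) (n : ℕ) :
    ∃ y d : K, y ≠ 0 ∧ x * y ^ 2 = 1 + 4 * d ∧ V d ≤ exp (-((n : ℤ) + 1)) := by
  induction n with
  | zero =>
    obtain ⟨y, hy, h⟩ := hx
    refine ⟨y, (x * y ^ 2 - 1) / 4, hy, by ring, ?_⟩
    rw [map_div₀]
    have : V (x * y ^ 2 - 1) / V 4 < 1 := by
      rw [div_lt_one₀ (V_four_pos V)]; exact h
    simpa using lt_one_iff_le_exp.1 this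
  | succ n ih =>
    obtain ⟨y, d, hy, e, h⟩ := ih
    have hd : V d < 1 := lt_of_le_of_lt h (by rw [← exp_zero, exp_lt_exp]; omega)
    have h2 : V (2 * d) < 1 := by
      rw [map_mul]; exact mul_lt_one_of_nonneg_of_lt_one_right (V_two_le V) zero_le hd
    have h1 : V (1 + 2 * d) = 1 := V.map_one_add_of_lt h2
    have hne : (1 + 2 * d) ≠ 0 := by
      intro h0; rw [h0, map_zero] at h1; exact zero_ne_one h1
    refine ⟨y / (1 + 2 * d), - d ^ 2 / (1 + 2 * d) ^ 2, div_ne_zero hy hne, ?_, ?_⟩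
    · have h2 : (1 + 2 * d) ^ 2 ≠ 0 := pow_ne_zero 2 hne
      rw [div_pow, ← mul_div_assoc, e, div_eq_iff h2, add_mul, mul_assoc, div_mul_cancel₀ _ h2]; ring
    · rw [map_div₀, map_pow, h1, Valuation.map_neg, map_pow, one_pow, div_one]
      calc V d ^ 2 ≤ (exp (-((n : ℤ) + 1))) ^ 2 := pow_le_pow_left' h 2
        _ ≤ _ := by
          rw [pow_two, ← exp_add, exp_le_exp]; push_cast; omega

theorem Sq_precise {x : Kˣ} (hx : x ∈ Sq V) {g : ℤᵐ⁰} (hg : g ≠ 0) :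
    ∃ y : K, y ≠ 0 ∧ V (x * y ^ 2 - 1) < g := by
  obtain ⟨n, hn⟩ := exists_exp_lt hg
  obtain ⟨y, d, hy, e, h⟩ := Sq_precise_aux hx n
  refine ⟨y, hy, ?_⟩
  rw [e, add_sub_cancel_left, map_mul]
  calc V 4 * V d ≤ 1 * V d := mul_le_mul_left (V_four_le V) _
    _ ≤ exp (-((n : ℤ) + 1)) := by rwa [one_mul]
    _ < exp (-(n : ℤ)) := by rw [exp_lt_exp]; omega
    _ < g := hn

/-- perturbation. -/
theorem pert2 {q c : Kˣ} (hq : q ∈ Sq V) {b m n : K} (h : (c : K) = m ^ 2 - b * q * n ^ 2) :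
    c ∈ Sq V ⊔ Nm b := by
  have hc : (c : K) ≠ 0 := c.ne_zero
  have hq0 : (q : K) ≠ 0 := q.ne_zero
  have key : ∃ y : K, y ≠ 0 ∧ V (q * y ^ 2 - 1) < 1 ∧
      V (q * y ^ 2 - 1) * V (b * q * n ^ 2) < V 4 * V c := by
    have hcv : V (c : K) ≠ 0 := by rwa [Valuation.ne_zero_iff]
    have h4 := (V_four_pos V).ne'
    by_cases hz : V (b * q * n ^ 2) = 0
    · obtain ⟨y, hy, h1⟩ := Sq_precise hq (one_ne_zero (α := ℤᵐ⁰))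
      refine ⟨y, hy, h1, ?_⟩
      rw [hz, mul_zero]; exact zero_lt_iff.2 (mul_ne_zero h4 hcv)
    · obtain ⟨y, hy, h1⟩ := Sq_precise hq (g := min 1 (V 4 * V c / V (b * q * n ^ 2)))
        (by
          rcases min_choice 1 (V 4 * V c / V (b * q * n ^ 2)) with h | h <;> rw [h]
          · exact one_ne_zero
          · exact div_ne_zero (mul_ne_zero h4 hcv) hz)
      refine ⟨y, hy, h1.trans_le (min_le_left _ _), ?_⟩
      have := h1.trans_le (min_le_right _ _)
      rwa [lt_div_iff₀ (zero_lt_iff.2 hz)] at this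
  obtain ⟨y, hy, h1, h2⟩ := key
  set δ := (q : K) * y ^ 2 - 1 with hδ
  have hqy : (q : K) * y ^ 2 = 1 + δ := by rw [hδ]; ring
  have hv1 : V ((q : K) * y ^ 2) = 1 := V_eq_one_of_sub h1
  set ε := b * δ * n ^ 2 / (y ^ 2 * c) with hε
  have hεV : V ε < V 4 := by
    have e1 : ε * c * (q * y ^ 2) = δ * (b * q * n ^ 2) := by
      rw [hε]; field_simp
    have e2 : V ε * V c < V 4 * V c := by
      rw [← map_mul, ← mul_one (V (ε * c)), ← hv1, ← map_mul, e1, map_mul]; exact h2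
    exact lt_of_mul_lt_mul_right' e2
  have hone : V (1 + ε) = 1 := V.map_one_add_of_lt (hεV.trans_le (V_four_le V))
  have hne : 1 + ε ≠ 0 := by
    intro h0; rw [h0, map_zero] at hone; exact zero_ne_one hone
  have hmem : Units.mk0 (1 + ε) hne ∈ Sq V := mem_Sq_of_near (by simpa using hεV)
  have hc' : c * Units.mk0 (1 + ε) hne ∈ Nm b := by
    refine ⟨m, n / y, ?_⟩
    push_cast
    simp only [Units.val_mk0]
    have : (c : K) * ε = b * δ * n ^ 2 / y ^ 2 := by rw [hε]; field_simp
    rw [mul_add, this, mul_one, h]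
    have : (q : K) = (1 + δ) / y ^ 2 := by rw [← hqy]; field_simp
    rw [this]; field_simp; ring
  have : c = (Units.mk0 (1 + ε) hne)⁻¹ * (c * Units.mk0 (1 + ε) hne) := by
    rw [mul_comm c, inv_mul_cancel_left]
  rw [this]
  exact Subgroup.mul_mem_sup (inv_mem hmem) hc'

theorem pert1 {q c : Kˣ} (hq : q ∈ Sq V) {a m n : K} (h : (c : K) = q * m ^ 2 - a * n ^ 2) :
    c ∈ Sq V ⊔ Nm a := by
  have : c = q * (q⁻¹ * c) := by simp
  rw [this]
  refine mul_mem (Subgroup.mem_sup_left hq) (pert2 (inv_mem hq) (m := m) (n := n) ?_)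
  push_cast; rw [h]; field_simp

theorem hsymm {a b : Kˣ} (h : b ∈ Sq V ⊔ Nm (a : K)) : a ∈ Sq V ⊔ Nm (b : K) := by
  obtain ⟨q, hq, n, ⟨x, y, hn⟩, e⟩ := Subgroup.mem_sup.1 h
  have hb : (b : K) ≠ 0 := b.ne_zero
  have hq0 : (q : K) ≠ 0 := q.ne_zero
  have e' : (b : K) = q * (x ^ 2 - a * y ^ 2) := by rw [← hn, ← e]; simp
  by_cases hy : y = 0
  · subst hy
    have hx : x ≠ 0 := by rintro rfl; simp at e'
    refine pert2 (inv_mem hq) (m := (a + 1) / 2) (n := ((a - 1) / 2) / x) ?_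
    rw [Units.val_inv_eq_inv_val, e']; field_simp; ring
  · refine pert2 (inv_mem hq) (m := x / y) (n := 1 / y) ?_
    rw [Units.val_inv_eq_inv_val, e']; field_simp; ring

variable (V)
/-- even valuation. -/
def Ev : Subgroup Kˣ where
  carrier := {x | ∃ y : Kˣ, V x = V y ^ 2}
  one_mem' := ⟨1, by simp⟩
  mul_mem' := by
    rintro x x' ⟨y, h⟩ ⟨y', h'⟩
    exact ⟨y * y', by push_cast; rw [map_mul, h, h', map_mul, mul_pow]⟩
  inv_mem' := by
    rintro x ⟨y, h⟩
    exact ⟨y⁻¹, by push_cast; rw [map_inv₀, h, map_inv₀, inv_pow]⟩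
variable {V}

theorem mem_Ev {x : Kˣ} : x ∈ Ev V ↔ ∃ y : Kˣ, V x = V y ^ 2 := Iff.rfl

theorem Sq_le_Ev : Sq V ≤ Ev V := by
  rintro x ⟨y, hy, h⟩
  refine ⟨(Units.mk0 y hy)⁻¹, ?_⟩
  have h1 := V_eq_one_of_sub (h.trans_le (V_four_le V))
  rw [map_mul, map_pow] at h1
  have : V y ≠ 0 := by rwa [Valuation.ne_zero_iff]
  push_cast
  rw [map_inv₀, inv_pow, Units.val_mk0]
  exact eq_inv_of_mul_eq_one_left h1

theorem notMem_Ev {x : Kˣ} {k : ℤ} (h : V x = exp (2 * k + 1)) : x ∉ Ev V := by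
  rintro ⟨y, hy⟩
  have h0 : V (y : K) ≠ 0 := by rw [Valuation.ne_zero_iff]; exact y.ne_zero
  rw [h, ← exp_log h0, pow_two, ← exp_add] at hy
  have := exp_injective hy
  omega

/-- quadratic polynomial `t² + t - ρ` without root in the residue field. -/
def Irr (V : Valuation K ℤᵐ⁰) (ρ : K) : Prop := V ρ ≤ 1 ∧ ∀ t : K, V t ≤ 1 → V (t ^ 2 + t - ρ) = 1

theorem Nm_le_Ev_of_Irr {ρ : K} (h : Irr V ρ) : Nm (1 + 4 * ρ) ≤ Ev V := by
  rintro c ⟨p, q, hc⟩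
  set z := (p - q) / 2 with hz
  have hp : p = 2 * z + q := by rw [hz]; ring
  have hc' : (c : K) = 4 * (z ^ 2 + z * q - ρ * q ^ 2) := by rw [hc, hp]; ring
  rcases le_or_gt (V z) (V q) with hle | hlt
  · have hq : q ≠ 0 := by
      rintro rfl
      rw [map_zero, le_zero_iff, Valuation.zero_iff] at hle
      exact c.ne_zero (by rw [hc', hle]; ring)
    have hqV : 0 < V q := by rwa [zero_lt_iff, Valuation.ne_zero_iff]
    have ht : V (z / q) ≤ 1 := by rw [map_div₀, div_le_one₀ hqV]; exact hle
    refine ⟨Units.mk0 (2 * q) (by simpa using hq), ?_⟩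
    have : (c : K) = (2 * q) ^ 2 * ((z / q) ^ 2 + z / q - ρ) := by rw [hc']; field_simp; ring
    rw [this, map_mul, h.2 _ ht, mul_one, map_pow]; rfl
  · have hz0 : z ≠ 0 := by
      rintro h0; rw [h0, map_zero] at hlt; exact not_lt_zero hlt
    have hzV : 0 < V z := by rwa [zero_lt_iff, Valuation.ne_zero_iff]
    have hs : V (q / z) < 1 := by rw [map_div₀, div_lt_one₀ hzV]; exact hlt
    refine ⟨Units.mk0 (2 * z) (by simpa using hz0), ?_⟩
    have : (c : K) = (2 * z) ^ 2 * (1 + (q / z) * (1 - ρ * (q / z))) := by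
      rw [hc']; field_simp; ring
    have h2 : V (1 - ρ * (q / z)) ≤ 1 := by
      refine V.map_sub_le (by simp) ?_
      rw [map_mul]; exact mul_le_one' h.1 hs.le
    have h3 : V ((q / z) * (1 - ρ * (q / z))) < 1 := by
      rw [map_mul]; exact mul_lt_one_of_nonneg_of_lt_one_left zero_le hs h2
    rw [this, map_mul, V.map_one_add_of_lt h3, mul_one, map_pow]; rfl

theorem sup_le_Ev_of_Irr {ρ : K} (h : Irr V ρ) : Sq V ⊔ Nm (1 + 4 * ρ) ≤ Ev V :=
  sup_le Sq_le_Ev (Nm_le_Ev_of_Irr h)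

/-- the properties of the valuation used in the local theory. -/
structure Loc (V : Valuation K ℤᵐ⁰) : Prop where
  surj : ∀ k : ℤ, ∃ x : Kˣ, V x = exp k
  irr : ∃ ρ, Irr V ρ
  perf : V 2 < 1 → ∀ u : K, V u ≤ 1 → ∃ w : K, V w ≤ 1 ∧ V (u - w ^ 2) < 1

theorem Nm_mul_sq (a : K) (c : Kˣ) : Nm (a * c ^ 2) = Nm a := by
  have hc : (c : K) ≠ 0 := c.ne_zero
  ext x
  constructor
  · rintro ⟨p, q, h⟩; exact ⟨p, q * c, by rw [h]; ring⟩
  · rintro ⟨p, q, h⟩; exact ⟨p, q / c, by rw [h]; field_simp⟩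

end Local
end QH

namespace QH
open scoped WithZero
open WithZero
section Local2
variable {K : Type*} [Field K] [CharZero K] {V : Valuation K ℤᵐ⁰}

theorem Irr_ne {ρ : K} (h : Irr V ρ) : 1 + 4 * ρ ≠ 0 := by
  intro h0
  have hρ : ρ = -1 / 4 := by linear_combination h0 / 4
  have h2 : V 2 = 1 := by
    refine le_antisymm (V_two_le V) ?_
    by_contra hlt
    push Not at hlt
    have h4 : V 4 < 1 := by rw [V_four]; exact pow_lt_one₀ zero_le hlt two_ne_zero
    have h1 := h.1
    rw [hρ, map_div₀, Valuation.map_neg, map_one, one_div, inv_le_one₀ (V_four_pos V)] at h1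
    exact absurd h4 (not_lt.2 h1)
  have := h.2 (-1 / 2) (by rw [map_div₀, Valuation.map_neg, h2]; simp)
  rw [hρ] at this
  norm_num at this

theorem even_sub {a Δ B : Kˣ} {ρ : K} (h : Irr V ρ) (hΔ : (Δ : K) = 1 + 4 * ρ)
    (hR : ∀ x : Kˣ, x ∈ Sq V ⊔ Nm (a : K)) (hB : (B : K) = a - Δ) : B ∈ Ev V := by
  have h1 : -Δ * B ∈ Sq V ⊔ Nm ((a * Δ : Kˣ) : K) := by
    refine Subgroup.mem_sup_right ⟨Δ, 1, ?_⟩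
    push_cast; rw [hB]; ring
  have h2 := hsymm h1
  have h3 := hsymm (hR (-Δ * B))
  have h4 : Δ ∈ Sq V ⊔ Nm ((-Δ * B : Kˣ) : K) := by
    have := mul_mem (inv_mem h3) h2
    rwa [inv_mul_cancel_left] at this
  have h5 := hsymm h4
  have h6 : -Δ ∈ Sq V ⊔ Nm (Δ : K) := Subgroup.mem_sup_right ⟨0, 1, by push_cast; ring⟩
  have h7 := mul_mem (inv_mem h6) h5
  rw [inv_mul_cancel_left, hΔ] at h7
  exact sup_le_Ev_of_Irr h h7

theorem improve_even (hL : Loc V) {e n k : ℕ} (he : V 2 = exp (-(e : ℤ))) (hn : n + 1 ≤ 2 * e)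
    (hk : n = k + k) {a : Kˣ} (hc1 : V (a : K) = 1) (heq : V ((a : K) - 1) = exp (-(n : ℤ))) :
    ∃ c : Kˣ, V ((a * c ^ 2 : Kˣ) : K) = 1 ∧
      V (((a * c ^ 2 : Kˣ) : K) - 1) ≤ exp (-((n + 1 : ℕ) : ℤ)) := by
  have hke : k < e := by omega
  have h2lt : V 2 < 1 := by rw [he, ← exp_zero, exp_lt_exp]; omega
  obtain ⟨ϖ, hϖ⟩ := hL.surj (-(k : ℤ))
  have hϖ2 : V ((ϖ : K) ^ 2) = exp (-(n : ℤ)) := by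
    rw [map_pow, hϖ, pow_two, ← exp_add]; congr 1; omega
  obtain ⟨w, hw, hw2⟩ := hL.perf h2lt (((a : K) - 1) / ϖ ^ 2) (by
    rw [map_div₀, heq, hϖ2, div_self exp_ne_zero])
  obtain ⟨g, hg⟩ : ∃ g : K, g = 1 + ϖ * w := ⟨_, rfl⟩
  have hϖ0 : (ϖ : K) ≠ 0 := ϖ.ne_zero
  have hdiff : V ((a : K) - g ^ 2) ≤ exp (-((n + 1 : ℕ) : ℤ)) := by
    have e1 : (a : K) - g ^ 2 = ϖ ^ 2 * (((a : K) - 1) / ϖ ^ 2 - w ^ 2) + (- (2 * ϖ * w)) := by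
      rw [hg]; field_simp; ring
    rw [e1]
    refine V.map_add_le ?_ ?_
    · rw [map_mul, hϖ2]
      refine (mul_le_mul' le_rfl (lt_one_iff_le_exp.1 hw2)).trans ?_
      rw [← exp_add, exp_le_exp]; push_cast; omega
    · rw [Valuation.map_neg, map_mul, map_mul, he, hϖ]
      refine (mul_le_mul' le_rfl hw).trans ?_
      rw [mul_one, ← exp_add, exp_le_exp]; push_cast; omega
  have hg1 : V g = 1 := by
    have h1 : V ((a : K) - g ^ 2) < V (a : K) := by
      rw [hc1]; refine hdiff.trans_lt ?_
      rw [← exp_zero, exp_lt_exp]; push_cast; omega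
    have h2 : V (g ^ 2) = V (a : K) := by
      have := V.map_sub_eq_of_lt_right h1
      rwa [show (a : K) - g ^ 2 - a = - (g ^ 2) by ring, Valuation.map_neg] at this
    rw [hc1, map_pow] at h2
    exact (pow_eq_one_iff.1 h2).resolve_right two_ne_zero
  have hg0 : g ≠ 0 := by
    intro h0; rw [h0, map_zero] at hg1; exact zero_ne_one hg1
  refine ⟨(Units.mk0 g hg0)⁻¹, ?_, ?_⟩
  · push_cast; simp [hc1, hg1]
  · have : ((a * (Units.mk0 g hg0)⁻¹ ^ 2 : Kˣ) : K) - 1 = ((a : K) - g ^ 2) / g ^ 2 := by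
      push_cast; simp only [Units.val_mk0]; field_simp
    rw [this, map_div₀, map_pow, hg1, one_pow, div_one]
    exact hdiff

theorem odd_absurd {e n k : ℕ} (h4 : V 4 = exp (-(2 * e : ℤ))) (hn : n + 1 ≤ 2 * e)
    (hk : n = 2 * k + 1) {a : Kˣ} (hR : ∀ x : Kˣ, x ∈ Sq V ⊔ Nm (a : K))
    (heq : V ((a : K) - 1) = exp (-(n : ℤ))) {ρ : K} (hρ : Irr V ρ) : False := by
  have hBV : V ((a : K) - (1 + 4 * ρ)) = exp (-(n : ℤ)) := by
    have e1 : (a : K) - (1 + 4 * ρ) = (- (4 * ρ)) + ((a : K) - 1) := by ring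
    rw [e1, V.map_add_eq_of_lt_right, heq]
    rw [heq, Valuation.map_neg, map_mul, h4]
    refine lt_of_le_of_lt (mul_le_mul' le_rfl hρ.1) ?_
    rw [mul_one, exp_lt_exp]; omega
  have hB0 : (a : K) - (1 + 4 * ρ) ≠ 0 := by
    rw [← Valuation.ne_zero_iff V, hBV]; exact exp_ne_zero
  have := even_sub (Δ := Units.mk0 _ (Irr_ne hρ)) (B := Units.mk0 _ hB0) hρ rfl hR rfl
  refine notMem_Ev (k := -(k : ℤ) - 1) ?_ this
  rw [Units.val_mk0, hBV]; congr 1; omega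

theorem nondeg_final (hL : Loc V) {a : Kˣ} (hc1 : V (a : K) = 1) (hc2 : V ((a : K) - 1) ≤ V 4)
    (hR : ∀ x : Kˣ, x ∈ Sq V ⊔ Nm (a : K)) : a ∈ Sq V := by
  obtain ⟨ρ, hρ⟩ : ∃ ρ, ρ = ((a : K) - 1) / 4 := ⟨_, rfl⟩
  have hρa : (a : K) = 1 + 4 * ρ := by rw [hρ]; ring
  have hρV : V ρ ≤ 1 := by
    rw [hρ, map_div₀, div_le_one₀ (V_four_pos V)]; exact hc2
  by_cases hI : ∀ t : K, V t ≤ 1 → V (t ^ 2 + t - ρ) = 1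
  · exfalso
    obtain ⟨ϖ, hϖ⟩ := hL.surj 1
    have h1 := hR ϖ
    rw [hρa] at h1
    exact notMem_Ev (k := 0) (by simpa using hϖ) (sup_le_Ev_of_Irr ⟨hρV, hI⟩ h1)
  · push Not at hI
    obtain ⟨t, ht, htn⟩ := hI
    have hle : V (t ^ 2 + t - ρ) ≤ 1 :=
      V.map_sub_le (V.map_add_le (by rw [map_pow]; exact pow_le_one' ht 2) ht) hρV
    have hlt := lt_of_le_of_ne hle htn
    have hd : V ((a : K) - (1 + 2 * t) ^ 2) < V 4 := by
      have : (a : K) - (1 + 2 * t) ^ 2 = - (4 * (t ^ 2 + t - ρ)) := by rw [hρa]; ring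
      rw [this, Valuation.map_neg, map_mul]
      exact mul_lt_of_lt_one_right (V_four_pos V) hlt
    have hg1 : V (1 + 2 * t) = 1 := by
      have h1 : V ((a : K) - (1 + 2 * t) ^ 2) < V (a : K) := by
        rw [hc1]; exact hd.trans_le (V_four_le V)
      have h2 := V.map_sub_eq_of_lt_right h1
      rw [show (a : K) - (1 + 2 * t) ^ 2 - a = - ((1 + 2 * t) ^ 2) by ring, Valuation.map_neg,
        hc1, map_pow] at h2
      exact (pow_eq_one_iff.1 h2).resolve_right two_ne_zero
    have hg0 : 1 + 2 * t ≠ 0 := by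
      intro h0; rw [h0, map_zero] at hg1; exact zero_ne_one hg1
    refine ⟨(1 + 2 * t)⁻¹, inv_ne_zero hg0, ?_⟩
    have : (a : K) * ((1 + 2 * t)⁻¹) ^ 2 - 1 = ((a : K) - (1 + 2 * t) ^ 2) / (1 + 2 * t) ^ 2 := by
      field_simp
    rw [this, map_div₀, map_pow, hg1, one_pow, div_one]
    exact hd

/-- nondegeneracy of the local norm residue relation. -/
theorem nondeg (hL : Loc V) {a : Kˣ} (ha : a ∉ Sq V) : ∃ x : Kˣ, x ∉ Sq V ⊔ Nm (a : K) := by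
  by_contra hcon
  push Not at hcon
  apply ha
  obtain ⟨ρ, hρ⟩ := hL.irr
  have hR : ∀ c : Kˣ, ∀ x : Kˣ, x ∈ Sq V ⊔ Nm ((a * c ^ 2 : Kˣ) : K) := by
    intro c x; push_cast; rw [Nm_mul_sq]; exact hcon x
  have ha1 : a ∈ Ev V :=
    sup_le_Ev_of_Irr hρ (hsymm (b := Units.mk0 _ (Irr_ne hρ)) (hcon _))
  obtain ⟨y, hy⟩ := ha1
  have h20 : V 2 ≠ 0 := by rw [Valuation.ne_zero_iff]; norm_num
  obtain ⟨e, he⟩ : ∃ e : ℕ, V 2 = exp (-(e : ℤ)) := by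
    have := V_two_le V
    rw [← exp_log h20, ← exp_zero, exp_le_exp] at this
    refine ⟨(log (V 2)).natAbs, ?_⟩
    rw [← exp_log h20, log_exp]; congr 1; omega
  have h4 : V 4 = exp (-(2 * e : ℤ)) := by rw [V_four, he, pow_two, ← exp_add]; congr 1; ring
  have claim : ∀ n : ℕ, n ≤ 2 * e → ∃ c : Kˣ, V ((a * c ^ 2 : Kˣ) : K) = 1 ∧
      V (((a * c ^ 2 : Kˣ) : K) - 1) ≤ exp (-(n : ℤ)) := by
    intro n
    induction n with
    | zero =>
      intro _
      have h1 : V ((a * y⁻¹ ^ 2 : Kˣ) : K) = 1 := by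
        have h0 : V (y : K) ≠ 0 := by rw [Valuation.ne_zero_iff]; exact y.ne_zero
        push_cast; rw [map_mul, hy, map_pow, map_inv₀, inv_pow]
        exact mul_inv_cancel₀ (pow_ne_zero 2 h0)
      refine ⟨y⁻¹, h1, ?_⟩
      have := V.map_sub_le h1.le (by simp : V 1 ≤ 1)
      simpa using this
    | succ n ih =>
      intro hn
      obtain ⟨c, hc1, hc2⟩ := ih (by omega)
      by_cases hlt : V (((a * c ^ 2 : Kˣ) : K) - 1) ≤ exp (-((n + 1 : ℕ) : ℤ))
      · exact ⟨c, hc1, hlt⟩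
      have heq : V (((a * c ^ 2 : Kˣ) : K) - 1) = exp (-(n : ℤ)) := by
        push Not at hlt
        refine le_antisymm hc2 ?_
        have h0 : V (((a * c ^ 2 : Kˣ) : K) - 1) ≠ 0 := (lt_of_le_of_lt zero_le hlt).ne'
        rw [← exp_log h0, exp_lt_exp] at hlt
        rw [← exp_log h0, exp_le_exp]; push_cast at hlt; push_cast; omega
      rcases Nat.even_or_odd n with ⟨k, hk⟩ | ⟨k, hk⟩
      · obtain ⟨g, hg1, hg2⟩ := improve_even hL he hn hk hc1 heq
        rw [mul_assoc, ← mul_pow] at hg1 hg2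
        exact ⟨c * g, hg1, hg2⟩
      · exact (odd_absurd h4 hn hk (hR c) heq hρ).elim
  obtain ⟨c, hc1, hc2⟩ := claim (2 * e) le_rfl
  have := nondeg_final hL hc1 (by rw [h4]; simpa using hc2) (hR c)
  have h2 := mul_mem this (inv_mem (sq_mem_Sq (V := V) c))
  rwa [mul_inv_cancel_right] at h2

end Local2
end QH

namespace QH
open scoped WithZero
open WithZero IsDedekindDomain NumberField
section LocNF
variable {K : Type*} [Field K] [NumberField K] (v : HeightOneSpectrum (𝓞 K))

theorem exists_int_near {x : K} (hx : v.valuation K x ≤ 1) :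
    ∃ a : 𝓞 K, v.valuation K (x - algebraMap (𝓞 K) K a) < 1 := by
  obtain ⟨a, ha⟩ := HeightOneSpectrum.exists_valuation_sub_lt_of_integer v hx 1
  exact ⟨a, by rw [Valuation.map_sub_swap]; simpa using ha⟩

theorem val_int_le (a : 𝓞 K) : v.valuation K (algebraMap (𝓞 K) K a) ≤ 1 := v.valuation_le_one a

theorem val_int_lt_iff {a : 𝓞 K} : v.valuation K (algebraMap (𝓞 K) K a) < 1 ↔ a ∈ v.asIdeal :=
  v.valuation_lt_one_iff_mem a

instance finQuot : Finite (𝓞 K ⧸ v.asIdeal) := v.asIdeal.finiteQuotientOfFreeOfNeBot v.ne_bot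

theorem loc_irr : ∃ ρ, Irr (v.valuation K) ρ := by
  have hns : ¬ Function.Surjective (fun t : 𝓞 K ⧸ v.asIdeal => t ^ 2 + t) := by
    rw [← Finite.injective_iff_surjective]
    intro hinj
    have h := @hinj 0 (-1) (by simp)
    have : Nontrivial (𝓞 K ⧸ v.asIdeal) := Ideal.Quotient.nontrivial_iff.2 v.isPrime.ne_top
    simp at h
  rw [Function.Surjective] at hns
  push Not at hns
  obtain ⟨r, hr⟩ := hns
  obtain ⟨r, rfl⟩ := Ideal.Quotient.mk_surjective r
  refine ⟨algebraMap (𝓞 K) K r, val_int_le v r, ?_⟩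
  intro t ht
  have hle : v.valuation K (t ^ 2 + t - algebraMap (𝓞 K) K r) ≤ 1 :=
    Valuation.map_sub_le _ (Valuation.map_add_le _ (by rw [map_pow]; exact pow_le_one' ht 2) ht)
      (val_int_le v r)
  by_contra hne
  have hlt := lt_of_le_of_ne hle hne
  obtain ⟨a, ha⟩ := exists_int_near v ht
  have h1 : v.valuation K (algebraMap (𝓞 K) K (a ^ 2 + a - r)) < 1 := by
    have e : algebraMap (𝓞 K) K (a ^ 2 + a - r) = (t ^ 2 + t - algebraMap (𝓞 K) K r) -
        (t - algebraMap (𝓞 K) K a) * (t + algebraMap (𝓞 K) K a + 1) := by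
      simp only [map_sub, map_add, map_pow]; ring
    rw [e]
    refine Valuation.map_sub_lt _ hlt ?_
    rw [map_mul]
    refine mul_lt_of_lt_of_le_one ha ?_
    exact Valuation.map_add_le _ (Valuation.map_add_le _ ht (val_int_le v a)) (by simp)
  rw [val_int_lt_iff] at h1
  apply hr (Ideal.Quotient.mk _ a)
  have := Ideal.Quotient.eq_zero_iff_mem.2 h1
  rw [map_sub, map_add, map_pow, sub_eq_zero] at this
  exact this

theorem loc_perf (h2 : v.valuation K 2 < 1) {u : K} (hu : v.valuation K u ≤ 1) :
    ∃ w : K, v.valuation K w ≤ 1 ∧ v.valuation K (u - w ^ 2) < 1 := by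
  have h2' : (2 : 𝓞 K) ∈ v.asIdeal := by
    rw [← val_int_lt_iff (K := K), map_ofNat]; exact h2
  have h20 : (2 : 𝓞 K ⧸ v.asIdeal) = 0 := by
    have := Ideal.Quotient.eq_zero_iff_mem.2 h2'
    rwa [map_ofNat] at this
  have hs : Function.Surjective (fun t : 𝓞 K ⧸ v.asIdeal => t ^ 2) := by
    rw [← Finite.injective_iff_surjective]
    intro s t hst
    simp only at hst
    have : (s - t) ^ 2 = 0 := by linear_combination hst + h20 * (t ^ 2 - s * t)
    exact sub_eq_zero.1 (pow_eq_zero_iff two_ne_zero |>.1 this)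
  obtain ⟨a, ha⟩ := exists_int_near v hu
  obtain ⟨w, hw⟩ := hs (Ideal.Quotient.mk _ a)
  obtain ⟨w, rfl⟩ := Ideal.Quotient.mk_surjective w
  simp only at hw
  rw [← map_pow, Ideal.Quotient.eq, ← val_int_lt_iff (K := K), map_sub, map_pow, Valuation.map_sub_swap] at hw
  refine ⟨algebraMap (𝓞 K) K w, val_int_le v w, ?_⟩
  have := Valuation.map_add_lt _ ha hw
  simpa using this

theorem loc_v : Loc (v.valuation K) where
  surj k := by
    obtain ⟨x, hx⟩ := v.valuation_surjective K (exp k)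
    have h0 : x ≠ 0 := by rintro rfl; rw [map_zero] at hx; exact exp_ne_zero hx.symm
    exact ⟨Units.mk0 x h0, hx⟩
  irr := loc_irr v
  perf h2 _ hu := loc_perf v h2 hu

theorem Ev_index : (Ev (v.valuation K)).index = 2 := by
  rw [Subgroup.index_eq_two_iff]
  obtain ⟨ϖ, hϖ⟩ := (loc_v v).surj 1
  refine ⟨ϖ, fun b => ?_⟩
  have hb0 : v.valuation K (b : K) ≠ 0 := by rw [Valuation.ne_zero_iff]; exact b.ne_zero
  have hb := exp_log hb0
  rcases Int.even_or_odd (log (v.valuation K (b : K))) with ⟨k, hk⟩ | ⟨k, hk⟩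
  · right
    obtain ⟨y, hy⟩ := (loc_v v).surj k
    refine ⟨⟨y, ?_⟩, notMem_Ev (k := k) ?_⟩
    · rw [hy, ← hb, hk, pow_two, exp_add]
    · push_cast; rw [map_mul, hϖ, ← hb, hk, ← exp_add]; congr 1; ring
  · left
    obtain ⟨y, hy⟩ := (loc_v v).surj (k + 1)
    refine ⟨⟨y, ?_⟩, notMem_Ev (k := k) ?_⟩
    · push_cast; rw [map_mul, hϖ, hy, ← hb, hk, pow_two, ← exp_add, ← exp_add]; congr 1; ring
    · rw [← hb, hk]

/-- exponent of `2`. -/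
theorem exists_e : ∃ e : ℕ, v.valuation K 2 = exp (-(e : ℤ)) := by
  have h20 : v.valuation K 2 ≠ 0 := by rw [Valuation.ne_zero_iff]; norm_num
  have := V_two_le (v.valuation K)
  rw [← exp_log h20, ← exp_zero, exp_le_exp] at this
  refine ⟨(log (v.valuation K 2)).natAbs, ?_⟩
  rw [← exp_log h20, log_exp]; congr 1; omega

noncomputable def ev : ℕ := (exists_e v).choose
theorem ev_spec : v.valuation K 2 = exp (-(ev v : ℤ)) := (exists_e v).choose_spec

theorem val_four : v.valuation K 4 = exp (-(2 * ev v : ℤ)) := by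
  rw [V_four, ev_spec, pow_two, ← exp_add]; congr 1; ring

theorem val_int_le_pow {a : 𝓞 K} {n : ℕ} :
    v.valuation K (algebraMap (𝓞 K) K a) ≤ exp (-(n : ℤ)) ↔ a ∈ v.asIdeal ^ n := by
  rw [← v.intValuation_le_pow_iff_mem, ← v.valuation_of_algebraMap (K := K)]

end LocNF
end QH

namespace QH
set_option linter.unusedSectionVars false
set_option linter.unusedSimpArgs false
open scoped WithZero
open WithZero IsDedekindDomain NumberField

theorem index_range_pow_two (G : Type*) [CommGroup G] [Finite G] :
    (powMonoidHom 2 : G →* G).range.index = Nat.card (powMonoidHom 2 : G →* G).ker := by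
  have h1 := Subgroup.card_mul_index (powMonoidHom 2 : G →* G).range
  have h2 := Subgroup.card_mul_index (powMonoidHom 2 : G →* G).ker
  rw [Subgroup.index_ker] at h2
  have h0 : 0 < Nat.card (powMonoidHom 2 : G →* G).range := Nat.card_pos
  nlinarith

section Idx
variable {K : Type*} [Field K] [NumberField K] (v : HeightOneSpectrum (𝓞 K))

theorem finQuotPow (n : ℕ) : Finite (𝓞 K ⧸ v.asIdeal ^ n) :=
  (v.asIdeal ^ n).finiteQuotientOfFreeOfNeBot (pow_ne_zero n v.ne_bot)

theorem card_quot_pow (n : ℕ) : Nat.card (𝓞 K ⧸ v.asIdeal ^ n) = Ideal.absNorm v.asIdeal ^ n := by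
  rw [← map_pow, Ideal.absNorm_apply, Submodule.cardQuot_apply]

theorem card_kerI (e : ℕ) : Nat.card
    (RingHom.ker (Ideal.Quotient.factor (Ideal.pow_le_pow_right (by omega : e + 1 ≤ 2 * e + 1)) :
      𝓞 K ⧸ v.asIdeal ^ (2 * e + 1) →+* 𝓞 K ⧸ v.asIdeal ^ (e + 1))) = Ideal.absNorm v.asIdeal ^ e := by
  have := finQuotPow v (2 * e + 1)
  have := finQuotPow v (e + 1)
  set f := (Ideal.Quotient.factor (Ideal.pow_le_pow_right (by omega : e + 1 ≤ 2 * e + 1)) :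
      𝓞 K ⧸ v.asIdeal ^ (2 * e + 1) →+* 𝓞 K ⧸ v.asIdeal ^ (e + 1))
  have h1 := AddSubgroup.card_mul_index f.toAddMonoidHom.ker
  have hs : Function.Surjective f := Ideal.Quotient.factor_surjective _
  have h2 : f.toAddMonoidHom.ker.index = Nat.card (𝓞 K ⧸ v.asIdeal ^ (e + 1)) := by
    have h3 : f.toAddMonoidHom.range = ⊤ :=
      (AddMonoidHom.range_eq_top (f := f.toAddMonoidHom)).2 hs
    rw [AddSubgroup.index_ker, h3]
    exact AddSubgroup.card_top
  rw [h2, card_quot_pow, card_quot_pow] at h1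
  have h0 : 0 < Ideal.absNorm v.asIdeal := Nat.pos_of_ne_zero (by
    rw [Ne, Ideal.absNorm_eq_zero_iff]; exact v.ne_bot)
  have h3 : Ideal.absNorm v.asIdeal ^ (2 * e + 1) =
    Ideal.absNorm v.asIdeal ^ e * Ideal.absNorm v.asIdeal ^ (e + 1) := by
    rw [← pow_add]; congr 1; ring
  rw [h3] at h1
  exact Nat.eq_of_mul_eq_mul_right (pow_pos h0 _) h1

theorem unit_dichotomy {x : 𝓞 K} (h : x ^ 2 - 1 ∈ v.asIdeal ^ (2 * ev v + 1)) :
    x - 1 ∈ v.asIdeal ^ (ev v + 1) ∨ x + 1 ∈ v.asIdeal ^ (ev v + 1) := by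
  rw [← val_int_le_pow (K := K)] at h ⊢
  rw [← val_int_le_pow (K := K)]
  by_contra hcon
  push Not at hcon
  obtain ⟨h1, h2⟩ := hcon
  rw [show x ^ 2 - 1 = (x - 1) * (x + 1) by ring, map_mul, map_mul] at h
  have n1 := (lt_of_le_of_lt zero_le h1).ne'
  have n2 := (lt_of_le_of_lt zero_le h2).ne'
  rw [← exp_log n1, exp_lt_exp] at h1
  rw [← exp_log n2, exp_lt_exp] at h2
  rw [← exp_log n1, ← exp_log n2, ← exp_add, exp_le_exp] at h
  push_cast at *
  omega

theorem card_two_torsion : Nat.card (powMonoidHom 2 : (𝓞 K ⧸ v.asIdeal ^ (2 * ev v + 1))ˣ →* _).ker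
    ≤ 2 * Ideal.absNorm v.asIdeal ^ ev v := by
  have := finQuotPow v (2 * ev v + 1)
  have hB : 2 * Ideal.absNorm v.asIdeal ^ ev v = Nat.card (Bool × (RingHom.ker
    (Ideal.Quotient.factor (Ideal.pow_le_pow_right (by omega : ev v + 1 ≤ 2 * ev v + 1)) :
      𝓞 K ⧸ v.asIdeal ^ (2 * ev v + 1) →+* 𝓞 K ⧸ v.asIdeal ^ (ev v + 1)))) := by
    rw [Nat.card_prod, card_kerI v (ev v)]; simp
  rw [hB]
  set f := (Ideal.Quotient.factor (Ideal.pow_le_pow_right (by omega : ev v + 1 ≤ 2 * ev v + 1)) :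
      𝓞 K ⧸ v.asIdeal ^ (2 * ev v + 1) →+* 𝓞 K ⧸ v.asIdeal ^ (ev v + 1)) with hf
  have key : ∀ x : (powMonoidHom 2 : (𝓞 K ⧸ v.asIdeal ^ (2 * ev v + 1))ˣ →* _).ker,
      ((x.1 : (𝓞 K ⧸ v.asIdeal ^ (2 * ev v + 1))) - 1) ∈ RingHom.ker f ∨
      ((x.1 : (𝓞 K ⧸ v.asIdeal ^ (2 * ev v + 1))) + 1) ∈ RingHom.ker f := by
    rintro ⟨x, hx⟩
    obtain ⟨y, hy⟩ := Ideal.Quotient.mk_surjective (x : (𝓞 K ⧸ v.asIdeal ^ (2 * ev v + 1)))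
    have h1 : (x : (𝓞 K ⧸ v.asIdeal ^ (2 * ev v + 1))) ^ 2 = 1 := by
      have : x ^ 2 = 1 := hx
      rw [← Units.val_pow_eq_pow_val, this, Units.val_one]
    simp only
    rw [← hy, ← map_pow, ← map_one (Ideal.Quotient.mk _), Ideal.Quotient.eq] at h1
    rw [← hy, ← map_one (Ideal.Quotient.mk _), ← map_sub, ← map_add, RingHom.mem_ker, RingHom.mem_ker,
      hf, Ideal.Quotient.factor_mk, Ideal.Quotient.factor_mk, Ideal.Quotient.eq_zero_iff_mem,
      Ideal.Quotient.eq_zero_iff_mem]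
    exact unit_dichotomy v h1
  classical
  refine Nat.card_le_card_of_injective (fun x => if h : ((x.1 : (𝓞 K ⧸ v.asIdeal ^ (2 * ev v + 1))) - 1)
    ∈ RingHom.ker f then (true, ⟨_, h⟩) else (false, ⟨_, (key x).resolve_left h⟩)) ?_
  intro x y hxy
  simp only at hxy
  split_ifs at hxy <;> simp at hxy <;> exact Subtype.ext (Units.ext hxy)

theorem ne_zero_of_notMem {a : 𝓞 K} (ha : a ∉ v.asIdeal) : algebraMap (𝓞 K) K a ≠ 0 := by
  rw [Ne, FaithfulSMul.algebraMap_eq_zero_iff]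
  rintro rfl; exact ha (zero_mem _)

theorem near_mem_Sq {a b : 𝓞 K} (ha : a ∉ v.asIdeal) (hb : b ∉ v.asIdeal)
    (h : a - b ∈ v.asIdeal ^ (2 * ev v + 1)) :
    (Units.mk0 _ (ne_zero_of_notMem v ha))⁻¹ * (Units.mk0 _ (ne_zero_of_notMem v hb)) ∈
      Sq (v.valuation K) := by
  have ha0 := ne_zero_of_notMem (K := K) v ha
  refine mem_Sq_of_near ?_
  push_cast
  simp only [Units.val_mk0]
  have e : (algebraMap (𝓞 K) K a)⁻¹ * algebraMap (𝓞 K) K b - 1 =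
      - algebraMap (𝓞 K) K (a - b) / algebraMap (𝓞 K) K a := by
    rw [map_sub]; field_simp; ring
  rw [e, map_div₀, Valuation.map_neg, v.valuation_eq_one_iff_notMem.2 ha, div_one, val_four]
  refine ((val_int_le_pow v).2 h).trans_lt ?_
  rw [exp_lt_exp]; push_cast; omega

theorem lift_notMem (x : (𝓞 K ⧸ v.asIdeal ^ (2 * ev v + 1))ˣ) {a : 𝓞 K}
    (h : Ideal.Quotient.mk _ a = (x : 𝓞 K ⧸ v.asIdeal ^ (2 * ev v + 1))) : a ∉ v.asIdeal := by
  intro ha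
  obtain ⟨b, hb⟩ := Ideal.Quotient.mk_surjective ((x⁻¹ : (𝓞 K ⧸ v.asIdeal ^ (2 * ev v + 1))ˣ) :
    𝓞 K ⧸ v.asIdeal ^ (2 * ev v + 1))
  have h1 : Ideal.Quotient.mk (v.asIdeal ^ (2 * ev v + 1)) (a * b) = Ideal.Quotient.mk _ 1 := by
    rw [map_mul, h, hb, map_one, Units.mul_inv]
  rw [Ideal.Quotient.eq] at h1
  have h2 := Ideal.pow_le_self (by omega) h1
  have h3 : (1 : 𝓞 K) ∈ v.asIdeal := by
    have := sub_mem (Ideal.mul_mem_right b _ ha) h2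
    simpa using this
  exact v.isPrime.ne_top ((Ideal.eq_top_iff_one _).2 h3)

noncomputable def lft (x : (𝓞 K ⧸ v.asIdeal ^ (2 * ev v + 1))ˣ) : 𝓞 K :=
  (Ideal.Quotient.mk_surjective (x : 𝓞 K ⧸ v.asIdeal ^ (2 * ev v + 1))).choose

theorem lft_spec (x : (𝓞 K ⧸ v.asIdeal ^ (2 * ev v + 1))ˣ) :
    Ideal.Quotient.mk _ (lft v x) = (x : 𝓞 K ⧸ v.asIdeal ^ (2 * ev v + 1)) :=
  (Ideal.Quotient.mk_surjective (x : 𝓞 K ⧸ v.asIdeal ^ (2 * ev v + 1))).choose_spec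

noncomputable def gHom : (𝓞 K ⧸ v.asIdeal ^ (2 * ev v + 1))ˣ →* Kˣ ⧸ Sq (v.valuation K) :=
  MonoidHom.mk' (fun x => QuotientGroup.mk
    (Units.mk0 _ (ne_zero_of_notMem v (lift_notMem v x (lft_spec v x))))) (by
    intro x y
    rw [← QuotientGroup.mk_mul, QuotientGroup.eq]
    have hxy : lft v x * lft v y ∉ v.asIdeal := by
      intro hc
      rcases v.isPrime.mem_or_mem hc with h | h
      · exact lift_notMem v x (lft_spec v x) h
      · exact lift_notMem v y (lft_spec v y) h
    have := near_mem_Sq v (lift_notMem v _ (lft_spec v (x * y))) hxy (by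
      rw [← Ideal.Quotient.eq, lft_spec, map_mul, lft_spec, lft_spec, Units.val_mul])
    convert this using 2
    ext; simp)

theorem Ev_le_range : (Ev (v.valuation K)).map (QuotientGroup.mk' (Sq (v.valuation K))) ≤
    (gHom v).range := by
  rintro _ ⟨x, ⟨y, hy⟩, rfl⟩
  obtain ⟨n, d, h⟩ := HeightOneSpectrum.exists_primeCompl_mul_eq_of_integer v
    ((x : K) / y ^ 2) (by
      have h0 : v.valuation K (y : K) ≠ 0 := by rw [Valuation.ne_zero_iff]; exact y.ne_zero
      rw [map_div₀, hy, map_pow, div_self (pow_ne_zero 2 h0)])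
  have hd : (d : 𝓞 K) ∉ v.asIdeal := d.2
  have hy0 : (y : K) ≠ 0 := y.ne_zero
  have hn : n ∉ v.asIdeal := by
    rw [← v.valuation_eq_one_iff_notMem (K := K), ← h, map_mul, v.valuation_eq_one_iff_notMem.2 hd,
      mul_one, map_div₀, hy, map_pow]
    have h0 : v.valuation K (y : K) ≠ 0 := by rw [Valuation.ne_zero_iff]; exact y.ne_zero
    exact div_self (pow_ne_zero 2 h0)
  have hnd : n * d ∉ v.asIdeal := fun hc => (v.isPrime.mem_or_mem hc).elim hn hd
  have hu : IsUnit (Ideal.Quotient.mk (v.asIdeal ^ (2 * ev v + 1)) (n * d)) := by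
    have hmax := v.isMaximal
    have : IsCoprime (Ideal.span {n * (d : 𝓞 K)}) (v.asIdeal ^ (2 * ev v + 1)) := by
      refine IsCoprime.pow_right ?_
      obtain ⟨y, i, hi, hyi⟩ := hmax.exists_inv hnd
      exact Ideal.isCoprime_iff_exists.2
        ⟨y * (n * d), Ideal.mem_span_singleton'.2 ⟨y, rfl⟩, i, hi, hyi⟩
    rw [Ideal.isCoprime_iff_exists] at this
    obtain ⟨i, hi, j, hj, hij⟩ := this
    obtain ⟨c, rfl⟩ := Ideal.mem_span_singleton'.1 hi
    refine IsUnit.of_mul_eq_one (Ideal.Quotient.mk _ c) ?_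
    rw [← map_mul, ← map_one (Ideal.Quotient.mk _), Ideal.Quotient.eq]
    have : n * (d : 𝓞 K) * c - 1 = - j := by rw [← hij]; ring
    rw [this]; exact neg_mem hj
  refine ⟨hu.unit, ?_⟩
  change QuotientGroup.mk _ = QuotientGroup.mk _
  rw [QuotientGroup.eq]
  have h1 := near_mem_Sq v (lift_notMem v _ (lft_spec v hu.unit)) hnd (by
      rw [← Ideal.Quotient.eq, lft_spec]; rfl)
  have hd0 := ne_zero_of_notMem (K := K) v hd
  have h2 := mul_mem h1 (sq_mem_Sq (V := v.valuation K) (y * (Units.mk0 _ hd0)⁻¹))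
  convert h2 using 1
  rw [mul_assoc]
  congr 1
  ext
  push_cast
  simp only [Units.val_mk0, map_mul, ← h]
  field_simp

theorem relIndex_Sq_Ev : (Sq (v.valuation K)).relIndex (Ev (v.valuation K)) ≠ 0 ∧
    (Sq (v.valuation K)).relIndex (Ev (v.valuation K)) ≤ 2 * Ideal.absNorm v.asIdeal ^ ev v := by
  have := finQuotPow v (2 * ev v + 1)
  have h1 : (Sq (v.valuation K)).relIndex (Ev (v.valuation K)) =
      Nat.card ((Ev (v.valuation K)).map (QuotientGroup.mk' (Sq (v.valuation K)))) := by
    rw [← Subgroup.relIndex_ker, QuotientGroup.ker_mk']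
  have hfin : Finite (gHom v).range := inferInstanceAs (Finite (Set.range (gHom v)))
  have hf2 : Finite ((Ev (v.valuation K)).map (QuotientGroup.mk' (Sq (v.valuation K)))) :=
    Finite.of_injective _ (Subgroup.inclusion_injective (Ev_le_range v))
  rw [h1]
  refine ⟨Nat.card_pos.ne', ?_⟩
  refine (Nat.card_le_card_of_injective _ (Subgroup.inclusion_injective (Ev_le_range v))).trans ?_
  refine le_trans ?_ (card_two_torsion v)
  rw [← index_range_pow_two, ← Subgroup.index_ker]
  refine Nat.le_of_dvd (Nat.pos_of_ne_zero Subgroup.index_ne_zero_of_finite) ?_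
  refine Subgroup.index_dvd_of_le ?_
  rintro _ ⟨x, rfl⟩
  rw [MonoidHom.mem_ker]
  change gHom v (x ^ 2) = 1
  rw [map_pow]
  obtain ⟨y, hy⟩ := QuotientGroup.mk_surjective (gHom v x)
  rw [← hy, ← QuotientGroup.mk_pow, QuotientGroup.eq_one_iff]
  exact sq_mem_Sq y

theorem index_Sq : (Sq (v.valuation K)).index ≠ 0 ∧
    (Sq (v.valuation K)).index ≤ 4 * Ideal.absNorm v.asIdeal ^ ev v := by
  have h := Subgroup.relIndex_mul_index (Sq_le_Ev (V := v.valuation K))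
  obtain ⟨h1, h2⟩ := relIndex_Sq_Ev v
  rw [Ev_index] at h
  constructor
  · rw [← h]; exact mul_ne_zero h1 two_ne_zero
  · rw [← h]; linarith

theorem ev_eq_zero (h : v.valuation K 2 = 1) : ev v = 0 := by
  have := ev_spec v
  rw [h, ← exp_zero] at this
  have := exp_injective this
  omega

theorem prod_index_Sq (S : Finset (HeightOneSpectrum (𝓞 K))) :
    ∏ v ∈ S, (Sq (v.valuation K)).index ≤ 4 ^ S.card * 2 ^ Module.finrank ℚ K := by
  calc ∏ v ∈ S, (Sq (v.valuation K)).index ≤ ∏ v ∈ S, (4 * Ideal.absNorm v.asIdeal ^ ev v) :=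
        Finset.prod_le_prod' fun v _ => (index_Sq v).2
    _ = 4 ^ S.card * Ideal.absNorm (∏ v ∈ S, v.asIdeal ^ ev v) := by
        rw [Finset.prod_mul_distrib, Finset.prod_const, map_prod]; simp only [map_pow]
    _ ≤ _ := by
        refine Nat.mul_le_mul_left _ ?_
        have hN : Ideal.absNorm (Ideal.span {(2 : 𝓞 K)}) = 2 ^ Module.finrank ℚ K := by
          have := Ideal.absNorm_span_natCast (S := 𝓞 K) 2
          rw [RingOfIntegers.rank] at this
          exact_mod_cast this
        rw [← hN]
        refine Nat.le_of_dvd (by rw [hN]; positivity) ?_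
        refine map_dvd _ ?_
        refine Finset.prod_dvd_of_coprime ?_ ?_
        · intro v _ w _ hvw
          refine IsCoprime.pow ?_
          have hv := v.isMaximal
          have hw := w.isMaximal
          rw [Ideal.isCoprime_iff_sup_eq]
          exact Ideal.IsMaximal.coprime_of_ne hv hw (fun h => hvw (HeightOneSpectrum.ext h))
        · intro v _
          rw [Ideal.dvd_span_singleton, ← val_int_le_pow (K := K), map_ofNat, ev_spec]

end Idx
end QH

namespace QH
open Module

theorem index_two_free (n : ℕ) : (nsmulAddMonoidHom 2 : (Fin n → ℤ) →+ _).range.index = 2 ^ n := by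
  let f : (Fin n → ℤ) →+ (Fin n → ZMod 2) :=
    AddMonoidHom.mk' (fun x i => (x i : ZMod 2)) (by intro a b; ext i; simp)
  have hk : f.ker = (nsmulAddMonoidHom 2 : (Fin n → ℤ) →+ _).range := by
    ext x
    rw [AddMonoidHom.mem_ker]
    constructor
    · intro h
      have h1 : ∀ i, (2 : ℤ) ∣ x i := fun i => by
        have := congrFun h i
        exact (ZMod.intCast_zmod_eq_zero_iff_dvd _ 2).1 this
      choose y hy using h1
      exact ⟨y, by ext i; simp [hy i]⟩
    · rintro ⟨y, rfl⟩
      ext i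
      change (((2 • y) i : ℤ) : ZMod 2) = 0
      simp only [Pi.smul_apply, nsmul_eq_mul]
      push_cast
      have : (2 : ZMod 2) = 0 := rfl
      rw [this, zero_mul]
  have hs : f.range = ⊤ := by
    rw [AddMonoidHom.range_eq_top]
    intro y
    refine ⟨fun i => ((y i).val : ℤ), ?_⟩
    ext i
    change ((((y i).val : ℤ) : ℤ) : ZMod 2) = y i
    simp
  rw [← hk, AddSubgroup.index_ker, hs, Nat.card_congr (AddSubgroup.topEquiv (G := Fin n → ZMod 2)).toEquiv]
  simp

theorem add_index_finite (T : Type*) [AddCommGroup T] [Finite T] :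
    (nsmulAddMonoidHom 2 : T →+ T).range.index = Nat.card (nsmulAddMonoidHom 2 : T →+ T).ker := by
  have h1 := AddSubgroup.card_mul_index (nsmulAddMonoidHom 2 : T →+ T).range
  have h2 := AddSubgroup.card_mul_index (nsmulAddMonoidHom 2 : T →+ T).ker
  rw [AddSubgroup.index_ker] at h2
  have h0 : 0 < Nat.card (nsmulAddMonoidHom 2 : T →+ T).range := Nat.card_pos
  nlinarith

theorem add_index_prod (n : ℕ) (T : Type*) [AddCommGroup T] [Finite T] :
    (nsmulAddMonoidHom 2 : ((Fin n → ℤ) × T) →+ _).range.index =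
      2 ^ n * Nat.card (nsmulAddMonoidHom 2 : ((Fin n → ℤ) × T) →+ _).ker := by
  have h1 : (nsmulAddMonoidHom 2 : ((Fin n → ℤ) × T) →+ _).range =
      ((nsmulAddMonoidHom 2 : (Fin n → ℤ) →+ _).range).prod (nsmulAddMonoidHom 2 : T →+ T).range := by
    ext ⟨x, y⟩
    rw [AddSubgroup.mem_prod]
    constructor
    · rintro ⟨⟨a, b⟩, h⟩
      exact ⟨⟨a, congrArg Prod.fst h⟩, ⟨b, congrArg Prod.snd h⟩⟩
    · rintro ⟨⟨a, ha⟩, ⟨b, hb⟩⟩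
      exact ⟨⟨a, b⟩, Prod.ext ha hb⟩
  have h2 : Nat.card (nsmulAddMonoidHom 2 : ((Fin n → ℤ) × T) →+ _).ker =
      Nat.card (nsmulAddMonoidHom 2 : T →+ T).ker := by
    refine Nat.card_congr ⟨fun x => ⟨x.1.2, congrArg Prod.snd x.2⟩,
      fun y => ⟨(0, y.1), Prod.ext (by simp) y.2⟩, ?_, ?_⟩
    · rintro ⟨⟨a, b⟩, h⟩
      have : (2 : ℕ) • a = 0 := congrArg Prod.fst h
      have ha : a = 0 := (smul_eq_zero.1 this).resolve_left two_ne_zero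
      subst ha; rfl
    · rintro ⟨b, h⟩; rfl
  rw [h1, h2, AddSubgroup.index_prod, index_two_free, add_index_finite]

theorem add_index_fg (M : Type*) [AddCommGroup M] [Module.Finite ℤ M] :
    (nsmulAddMonoidHom 2 : M →+ M).range.index =
      2 ^ finrank ℤ M * Nat.card (nsmulAddMonoidHom 2 : M →+ M).ker := by
  have : AddGroup.FG M := Module.Finite.iff_addGroup_fg.1 inferInstance
  obtain ⟨n, ι, fι, p, hp, e, ⟨f⟩⟩ := AddCommGroup.equiv_free_prod_directSum_zmod M
  have : ∀ i, NeZero (p i ^ e i) := fun i => ⟨pow_ne_zero _ (hp i).ne_zero⟩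
  have : ∀ i, Finite (ZMod (p i ^ e i)) := fun i => inferInstance
  classical
  have hfin : Finite (DirectSum ι fun i => ZMod (p i ^ e i)) :=
    Finite.of_equiv _ (DirectSum.addEquivProd (fun i => ZMod (p i ^ e i))).symm.toEquiv
  let T := DirectSum ι fun i => ZMod (p i ^ e i)
  let g : M ≃+ (Fin n → ℤ) × T :=
    f.trans (AddEquiv.prodCongr (Finsupp.linearEquivFunOnFinite ℤ ℤ (Fin n)).toAddEquiv (AddEquiv.refl _))
  have hrank : finrank ℤ M = n := by
    have hT : finrank ℤ T = 0 := by
      rw [Module.finrank_eq_zero_iff_isTorsion]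
      intro x
      refine ⟨⟨Nat.card T, ?_⟩, ?_⟩
      · rw [mem_nonZeroDivisors_iff_ne_zero]; exact_mod_cast Nat.card_pos.ne'
      · have := card_nsmul_eq_zero' (G := T) (x := x)
        rw [← natCast_zsmul] at this
        exact this
    have hfT : Module.Finite ℤ T := Module.Finite.of_finite
    rw [g.toIntLinearEquiv.finrank_eq]
    have h1 := Submodule.finrank_quotient_add_finrank (LinearMap.ker (LinearMap.fst ℤ (Fin n → ℤ) T))
    rw [LinearEquiv.finrank_eq (LinearMap.quotKerEquivOfSurjective _ (LinearMap.fst_surjective)),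
      LinearMap.ker_fst, LinearEquiv.finrank_eq (LinearEquiv.ofInjective _ LinearMap.inr_injective).symm,
      hT] at h1
    rw [← h1]; simp
  have h1 : (nsmulAddMonoidHom 2 : M →+ M).range.index =
      (nsmulAddMonoidHom 2 : ((Fin n → ℤ) × T) →+ _).range.index := by
    rw [← AddSubgroup.index_map_equiv _ g]
    congr 1
    ext x
    constructor
    · rintro ⟨_, ⟨y, rfl⟩, rfl⟩
      exact ⟨g y, by simp⟩
    · rintro ⟨y, rfl⟩
      refine ⟨2 • g.symm y, ⟨g.symm y, rfl⟩, ?_⟩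
      simp
  have h2 : Nat.card (nsmulAddMonoidHom 2 : M →+ M).ker =
      Nat.card (nsmulAddMonoidHom 2 : ((Fin n → ℤ) × T) →+ _).ker := by
    refine Nat.card_congr (g.toEquiv.subtypeEquiv ?_)
    intro x
    change (2 • x = 0) ↔ (2 • g x = 0)
    rw [← map_nsmul, map_eq_zero_iff g g.injective]
  rw [h1, h2, hrank, add_index_prod]

/-- multiplicative version. -/
theorem index_fg (G : Type*) [CommGroup G] [Module.Finite ℤ (Additive G)] :
    (powMonoidHom 2 : G →* G).range.index =
      2 ^ finrank ℤ (Additive G) * Nat.card (powMonoidHom 2 : G →* G).ker :=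
  add_index_fg (Additive G)

/-- abstract index computation. -/
theorem abstract_index {U A : Type*} [CommGroup U] [CommGroup A] (f : A →* U) (i : U →* A)
    (d : A →* A) (hfi : ∀ u, f (i u) = u ^ 2) (hk : d.ker = i.range) (hr : d.range = f.ker)
    (hd : ∀ b ∈ f.ker, d b = b ^ 2) :
    (powMonoidHom 2 : U →* U).range.index =
      f.range.index * (powMonoidHom 2 : f.ker →* f.ker).range.index := by
  have h1 : (powMonoidHom 2 : U →* U).range = (i.range).map f := by
    ext u
    constructor
    · rintro ⟨w, rfl⟩; exact ⟨i w, ⟨w, rfl⟩, hfi w⟩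
    · rintro ⟨_, ⟨w, rfl⟩, rfl⟩; exact ⟨w, (hfi w).symm⟩
  let d' : A →* f.ker := d.codRestrict f.ker (fun x => by rw [← hr]; exact ⟨x, rfl⟩)
  have hd's : Function.Surjective d' := by
    rintro ⟨y, hy⟩
    rw [← hr] at hy
    obtain ⟨x, hx⟩ := hy
    exact ⟨x, Subtype.ext hx⟩
  have hd'k : d'.ker = i.range := by
    rw [← hk]; ext x
    rw [MonoidHom.mem_ker, MonoidHom.mem_ker, Subtype.ext_iff]; rfl
  have h2 : (powMonoidHom 2 : f.ker →* f.ker).range = (f.ker).map d' := by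
    ext ⟨y, hy⟩
    constructor
    · rintro ⟨w, hw⟩
      refine ⟨w, w.2, ?_⟩
      rw [← hw]; exact Subtype.ext (hd _ w.2)
    · rintro ⟨w, hw, hw2⟩
      refine ⟨⟨w, hw⟩, ?_⟩
      rw [← hw2]; exact Subtype.ext (hd _ hw).symm
  rw [h1, h2, Subgroup.index_map, Subgroup.index_map, hd'k, MonoidHom.range_eq_top.2 hd's,
    Subgroup.index_top, mul_one, mul_comm, sup_comm]

end QH

namespace QH
set_option linter.unusedSectionVars false
set_option linter.unusedSimpArgs false
open scoped WithZero
open WithZero IsDedekindDomain NumberField Module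

section SU
variable {K : Type*} [Field K] [NumberField K]

/-- the logarithmic valuation. -/
noncomputable def lg (v : HeightOneSpectrum (𝓞 K)) (x : Kˣ) : ℤ := log (v.valuation K (x : K))

theorem val_ne (v : HeightOneSpectrum (𝓞 K)) (x : Kˣ) : v.valuation K (x : K) ≠ 0 := by
  rw [Valuation.ne_zero_iff]; exact x.ne_zero

theorem exp_lg (v : HeightOneSpectrum (𝓞 K)) (x : Kˣ) : exp (lg v x) = v.valuation K (x : K) :=
  exp_log (val_ne v x)

theorem lg_eq_iff {v : HeightOneSpectrum (𝓞 K)} {x : Kˣ} {k : ℤ} :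
    lg v x = k ↔ v.valuation K (x : K) = exp k := by
  rw [← exp_lg]; exact exp_injective.eq_iff.symm

theorem lg_zero_iff {v : HeightOneSpectrum (𝓞 K)} {x : Kˣ} :
    lg v x = 0 ↔ v.valuation K (x : K) = 1 := by
  rw [lg_eq_iff, exp_zero]

theorem lg_mul (v : HeightOneSpectrum (𝓞 K)) (x y : Kˣ) : lg v (x * y) = lg v x + lg v y := by
  rw [lg_eq_iff, exp_add, exp_lg, exp_lg]; push_cast; rw [map_mul]

theorem lg_one (v : HeightOneSpectrum (𝓞 K)) : lg v 1 = 0 := by rw [lg_zero_iff]; simp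

theorem lg_inv (v : HeightOneSpectrum (𝓞 K)) (x : Kˣ) : lg v x⁻¹ = - lg v x := by
  have := lg_mul v x x⁻¹
  rw [mul_inv_cancel, lg_one] at this; omega

theorem lg_pow (v : HeightOneSpectrum (𝓞 K)) (x : Kˣ) (n : ℕ) : lg v (x ^ n) = n * lg v x := by
  induction n with
  | zero => simp [lg_one]
  | succ n ih => rw [pow_succ, lg_mul, ih]; push_cast; ring

theorem lg_zpow (v : HeightOneSpectrum (𝓞 K)) (x : Kˣ) (n : ℤ) : lg v (x ^ n) = n * lg v x := by
  obtain ⟨m, rfl | rfl⟩ := n.eq_nat_or_neg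
  · rw [zpow_natCast, lg_pow]
  · rw [zpow_neg, lg_inv, zpow_natCast, lg_pow]; ring

theorem lg_prod {ι : Type*} (v : HeightOneSpectrum (𝓞 K)) (s : Finset ι) (f : ι → Kˣ) :
    lg v (∏ i ∈ s, f i) = ∑ i ∈ s, lg v (f i) := by
  classical
  induction s using Finset.induction_on with
  | empty => simp [lg_one]
  | insert a s ha ih => rw [Finset.prod_insert ha, Finset.sum_insert ha, lg_mul, ih]

/-- group of `S`-units. -/
def US (S : Finset (HeightOneSpectrum (𝓞 K))) : Subgroup Kˣ where
  carrier := {x | ∀ v ∉ S, lg v x = 0}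
  one_mem' := fun v _ => lg_one v
  mul_mem' := fun {x y} hx hy v hv => by rw [lg_mul, hx v hv, hy v hv, add_zero]
  inv_mem' := fun {x} hx v hv => by rw [lg_inv, hx v hv, neg_zero]

theorem mem_US {S : Finset (HeightOneSpectrum (𝓞 K))} {x : Kˣ} :
    x ∈ US S ↔ ∀ v ∉ S, lg v x = 0 := Iff.rfl

theorem US_mono {S S' : Finset (HeightOneSpectrum (𝓞 K))} (h : S ⊆ S') : US S ≤ US S' :=
  fun _ hx v hv => hx v (fun hc => hv (h hc))

/-- only finitely many primes divide an element. -/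
theorem finite_supp (x : Kˣ) : {v : HeightOneSpectrum (𝓞 K) | lg v x ≠ 0}.Finite := by
  have hintg : ∀ a : 𝓞 K, a ≠ 0 →
      {v : HeightOneSpectrum (𝓞 K) | v.valuation K (algebraMap (𝓞 K) K a) ≠ 1}.Finite := by
    intro a ha
    refine (Ideal.finite_factors (I := Ideal.span {a}) (by simpa using ha)).subset ?_
    intro v hv
    have h1 : v.valuation K (algebraMap (𝓞 K) K a) < 1 := lt_of_le_of_ne (val_int_le v a) hv
    exact (v.valuation_lt_one_iff_dvd (K := K) a).1 h1
  obtain ⟨a, b, hb, hab⟩ := IsFractionRing.div_surjective (A := 𝓞 K) (x : K)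
  have hb0 : b ≠ 0 := nonZeroDivisors.ne_zero hb
  have ha0 : a ≠ 0 := by
    rintro rfl
    rw [map_zero, zero_div] at hab
    exact x.ne_zero hab.symm
  refine ((hintg a ha0).union (hintg b hb0)).subset ?_
  intro v hv
  by_contra hcon
  simp only [Set.mem_union, Set.mem_ofPred_eq, not_or, not_not] at hcon
  apply hv
  rw [lg_zero_iff, ← hab, map_div₀, hcon.1, hcon.2, div_one]

/-- a generator of a power of a prime. -/
theorem exists_gen_pow (v : HeightOneSpectrum (𝓞 K)) : ∃ (h : ℕ) (x : Kˣ), 0 < h ∧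
    lg v x = -(h : ℤ) ∧ ∀ u ≠ v, lg u x = 0 := by
  obtain ⟨h, hh⟩ : ∃ h : ℕ, h = Fintype.card (ClassGroup (𝓞 K)) := ⟨_, rfl⟩
  have hpos : 0 < h := by rw [hh]; exact Fintype.card_pos
  have hv0 : v.asIdeal ∈ nonZeroDivisors (Ideal (𝓞 K)) := mem_nonZeroDivisors_of_ne_zero v.ne_bot
  have h1 : ClassGroup.mk0 (⟨v.asIdeal, hv0⟩ ^ h) = 1 := by
    rw [map_pow, hh]; exact pow_card_eq_one
  rw [ClassGroup.mk0_eq_one_iff] at h1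
  obtain ⟨π, hπ⟩ := h1.principal
  have hπ' : v.asIdeal ^ h = Ideal.span {π} := by simpa using hπ
  have hπ0 : π ≠ 0 := by
    rintro rfl
    have : v.asIdeal ^ h = ⊥ := by rw [hπ']; simp
    exact pow_ne_zero h v.ne_bot this
  have hπK : algebraMap (𝓞 K) K π ≠ 0 := by rwa [Ne, FaithfulSMul.algebraMap_eq_zero_iff]
  refine ⟨h, Units.mk0 _ hπK, hpos, ?_, ?_⟩
  · rw [lg_eq_iff, Units.val_mk0]
    refine le_antisymm ((val_int_le_pow v).2 (by rw [hπ']; exact Ideal.mem_span_singleton_self π)) ?_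
    by_contra hlt
    push Not at hlt
    have h2 : v.valuation K (algebraMap (𝓞 K) K π) ≤ exp (-((h + 1 : ℕ) : ℤ)) := by
      have h0 : v.valuation K (algebraMap (𝓞 K) K π) ≠ 0 := by rwa [Valuation.ne_zero_iff]
      rw [← exp_log h0, exp_lt_exp] at hlt
      rw [← exp_log h0, exp_le_exp]; push_cast; omega
    rw [val_int_le_pow, ← Ideal.dvd_span_singleton, ← hπ'] at h2
    have h3 := (pow_dvd_pow_iff v.ne_bot (by
      intro hu; exact v.isPrime.ne_top (Ideal.isUnit_iff.1 hu))).1 h2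
    omega
  · intro u hu
    rw [lg_zero_iff, Units.val_mk0, u.valuation_eq_one_iff_notMem]
    intro hmem
    have h2 : v.asIdeal ^ h ≤ u.asIdeal := by
      rw [hπ', Ideal.span_singleton_le_iff_mem]; exact hmem
    have h3 := u.isPrime.le_of_pow_le h2
    exact hu (HeightOneSpectrum.ext (v.isMaximal.eq_of_le u.isPrime.ne_top h3).symm)

noncomputable def lgMap (S : Finset (HeightOneSpectrum (𝓞 K))) :
    Additive (US S) →ₗ[ℤ] (S → ℤ) :=
  AddMonoidHom.toIntLinearMap
    { toFun := fun x v => lg v.1 (x.toMul : Kˣ)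
      map_zero' := by ext v; exact lg_one _
      map_add' := by intro x y; ext v; exact lg_mul _ _ _ }

theorem unit_lg (u : (𝓞 K)ˣ) (v : HeightOneSpectrum (𝓞 K)) :
    lg v (Units.map (algebraMap (𝓞 K) K).toMonoidHom u) = 0 := by
  rw [lg_zero_iff]
  exact v.valuation_eq_one_iff_notMem.2 (fun h => v.isPrime.ne_top (Ideal.eq_top_of_isUnit_mem _ h u.isUnit))

theorem exists_unit_of_lg {x : Kˣ} (h : ∀ v, lg v x = 0) :
    ∃ u : (𝓞 K)ˣ, Units.map (algebraMap (𝓞 K) K).toMonoidHom u = x := by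
  obtain ⟨a, ha⟩ := HeightOneSpectrum.mem_integers_of_valuation_le_one (R := 𝓞 K) K (x : K)
    (fun v => (lg_zero_iff.1 (h v)).le)
  obtain ⟨b, hb⟩ := HeightOneSpectrum.mem_integers_of_valuation_le_one (R := 𝓞 K) K ((x⁻¹ : Kˣ) : K)
    (fun v => (lg_zero_iff.1 (by rw [lg_inv, h v, neg_zero])).le)
  have hab : a * b = 1 := by
    apply FaithfulSMul.algebraMap_injective (𝓞 K) K
    rw [map_mul, ha, hb, map_one, Units.mul_inv]
  exact ⟨Units.mkOfMulEqOne a b hab, Units.ext ha⟩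

noncomputable def unitsToUS (S : Finset (HeightOneSpectrum (𝓞 K))) :
    Additive (𝓞 K)ˣ →ₗ[ℤ] Additive (US S) :=
  AddMonoidHom.toIntLinearMap (MonoidHom.toAdditive
    ((Units.map (algebraMap (𝓞 K) K).toMonoidHom).codRestrict (US S) (fun u v _ => unit_lg u v)))

theorem unitsToUS_inj (S : Finset (HeightOneSpectrum (𝓞 K))) : Function.Injective (unitsToUS S) := by
  intro x y h
  have h1 : (algebraMap (𝓞 K) K) (x.toMul : 𝓞 K) = (algebraMap (𝓞 K) K) (y.toMul : 𝓞 K) :=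
    congrArg (fun z : Additive (US S) => ((z.toMul : Kˣ) : K)) h
  exact congrArg Additive.ofMul (Units.ext (FaithfulSMul.algebraMap_injective (𝓞 K) K h1))

theorem range_unitsToUS (S : Finset (HeightOneSpectrum (𝓞 K))) :
    LinearMap.range (unitsToUS S) = LinearMap.ker (lgMap S) := by
  ext x
  constructor
  · rintro ⟨u, rfl⟩
    rw [LinearMap.mem_ker]
    ext v
    exact unit_lg _ _
  · intro hx
    rw [LinearMap.mem_ker] at hx
    obtain ⟨u, hu⟩ := exists_unit_of_lg (x := (x.toMul : Kˣ)) (fun v => by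
      by_cases hv : v ∈ S
      · exact congrFun hx ⟨v, hv⟩
      · exact x.toMul.2 v hv)
    exact ⟨Additive.ofMul u, congrArg Additive.ofMul (Subtype.ext hu)⟩

theorem finrank_range_lgMap (S : Finset (HeightOneSpectrum (𝓞 K))) :
    finrank ℤ (LinearMap.range (lgMap S)) = S.card := by
  classical
  apply le_antisymm
  · refine (Submodule.finrank_le _).trans ?_
    simp
  · choose h x hh hx hx' using fun v : HeightOneSpectrum (𝓞 K) => exists_gen_pow v
    have hxS : ∀ v : S, x v.1 ∈ US S := fun v u hu => hx' v.1 u (fun e => hu (e ▸ v.2))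
    let g : S → LinearMap.range (lgMap S) := fun v => ⟨_, ⟨Additive.ofMul ⟨x v.1, hxS v⟩, rfl⟩⟩
    have hg : ∀ v u : S, (g v : S → ℤ) u = if u = v then -(h v.1 : ℤ) else 0 := by
      intro v u
      change lg u.1 (x v.1) = _
      split_ifs with he
      · rw [he]; exact hx v.1
      · exact hx' v.1 u.1 (fun e => he (Subtype.ext e))
    have hli : LinearIndependent ℤ g := by
      rw [Fintype.linearIndependent_iff]
      intro c hc v
      have h1 := congrArg (fun z : LinearMap.range (lgMap S) => (z : S → ℤ) v) hc
      simp only [AddSubmonoidClass.coe_finsetSum, Finset.sum_apply, SetLike.val_smul, Pi.smul_apply, hg,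
        smul_eq_mul, mul_ite, mul_zero, Finset.sum_ite_eq, Finset.mem_univ, if_true] at h1
      have h2 : c v * -(h v.1 : ℤ) = 0 := h1
      have h3 := hh v.1
      rcases mul_eq_zero.1 h2 with h4 | h4
      · exact h4
      · omega
    have := hli.fintype_card_le_finrank
    simpa using this

instance finite_US (S : Finset (HeightOneSpectrum (𝓞 K))) : Module.Finite ℤ (Additive (US S)) := by
  have h1 : Module.Finite ℤ (LinearMap.ker (lgMap S)) := by
    rw [← range_unitsToUS]; infer_instance
  have h2 : Module.Finite ℤ (Additive (US S) ⧸ LinearMap.ker (lgMap S)) :=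
    Module.Finite.equiv (lgMap S).quotKerEquivRange.symm
  exact Module.Finite.of_submodule_quotient (LinearMap.ker (lgMap S))

theorem finrank_US (S : Finset (HeightOneSpectrum (𝓞 K))) :
    finrank ℤ (Additive (US S)) + 1 = S.card + Fintype.card (InfinitePlace K) := by
  have h1 := Submodule.finrank_quotient_add_finrank (LinearMap.ker (lgMap S))
  rw [(lgMap S).quotKerEquivRange.finrank_eq, finrank_range_lgMap, ← range_unitsToUS,
    ← (LinearEquiv.ofInjective _ (unitsToUS_inj S)).finrank_eq, Units.finrank_eq, Units.rank] at h1
  have : 0 < Fintype.card (InfinitePlace K) := Fintype.card_pos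
  omega

theorem card_two_ker (H : Subgroup Kˣ) (hH : -1 ∈ H) :
    Nat.card (powMonoidHom 2 : H →* H).ker = 2 := by
  rw [Nat.card_eq_two_iff]
  refine ⟨1, ⟨⟨-1, hH⟩, ?_⟩, ?_, ?_⟩
  · rw [MonoidHom.mem_ker]; exact Subtype.ext (by simp)
  · intro h
    have h1 := congrArg (fun z : (powMonoidHom 2 : H →* H).ker => (((z : H) : Kˣ) : K)) h
    simp at h1
    have : (2 : K) = 0 := by linear_combination h1
    exact two_ne_zero this
  · ext ⟨⟨x, hx⟩, h⟩
    simp only [Set.mem_insert_iff, Set.mem_singleton_iff, Set.mem_univ, iff_true]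
    have h1 : x ^ 2 = 1 := congrArg Subtype.val (MonoidHom.mem_ker.1 h)
    have h2 : (x : K) ^ 2 = 1 := by rw [← Units.val_pow_eq_pow_val, h1, Units.val_one]
    rw [pow_two] at h2
    rcases mul_self_eq_one_iff.1 h2 with h3 | h3
    · left; exact Subtype.ext (Subtype.ext (Units.ext h3))
    · right; exact Subtype.ext (Subtype.ext (Units.ext (by simpa using h3)))

theorem neg_one_mem_US (S : Finset (HeightOneSpectrum (𝓞 K))) : -1 ∈ US S := fun v _ => by
  rw [lg_zero_iff]; simp

theorem index_sq_US (S : Finset (HeightOneSpectrum (𝓞 K))) :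
    (powMonoidHom 2 : US S →* US S).range.index = 2 ^ (S.card + Fintype.card (InfinitePlace K)) := by
  rw [index_fg, card_two_ker _ (neg_one_mem_US S), ← pow_succ, finrank_US]

end SU
end QH

namespace QH
set_option linter.unusedSectionVars false
set_option linter.unusedSimpArgs false
open scoped WithZero
open WithZero IsDedekindDomain NumberField Module

section Primes
variable {K : Type*} [Field K] [NumberField K] {M : Type*} [Field M] [NumberField M] [Algebra K M]

/-- the prime below. -/
noncomputable def bel (K : Type*) [Field K] [NumberField K] {M : Type*} [Field M] [NumberField M]
    [Algebra K M] (w : HeightOneSpectrum (𝓞 M)) : HeightOneSpectrum (𝓞 K) := w.under (𝓞 K)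

theorem val_bel (w : HeightOneSpectrum (𝓞 M)) :
    ∃ e : ℕ, e ≠ 0 ∧ ∀ x : K, w.valuation M (algebraMap K M x) = (bel K w).valuation K x ^ e := by
  haveI : w.asIdeal.LiesOver (bel K w).asIdeal := ⟨rfl⟩
  refine ⟨(bel K w).asIdeal.ramificationIdx' w.asIdeal, ?_, fun x => ?_⟩
  · exact Ideal.IsDedekindDomain.ramificationIdx'_ne_zero_of_liesOver w.asIdeal (bel K w).ne_bot
  · exact (HeightOneSpectrum.valuation_liesOver M (bel K w) w x).symm

theorem val_bel_one (w : HeightOneSpectrum (𝓞 M)) (x : K) :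
    w.valuation M (algebraMap K M x) = 1 ↔ (bel K w).valuation K x = 1 := by
  obtain ⟨e, he, h⟩ := val_bel (K := K) w
  rw [h, pow_eq_one_iff]; simp [he]

theorem val_bel_lt (w : HeightOneSpectrum (𝓞 M)) (x : K) :
    w.valuation M (algebraMap K M x) < 1 ↔ (bel K w).valuation K x < 1 := by
  obtain ⟨e, he, h⟩ := val_bel (K := K) w
  rw [h, pow_lt_one_iff he]

theorem val_bel_le (w : HeightOneSpectrum (𝓞 M)) (x : K) :
    w.valuation M (algebraMap K M x) ≤ 1 ↔ (bel K w).valuation K x ≤ 1 := by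
  obtain ⟨e, he, h⟩ := val_bel (K := K) w
  rw [h, pow_le_one_iff he]

theorem val_bel_mono (w : HeightOneSpectrum (𝓞 M)) {x y : K}
    (hxy : (bel K w).valuation K x < (bel K w).valuation K y) :
    w.valuation M (algebraMap K M x) < w.valuation M (algebraMap K M y) := by
  obtain ⟨e, he, h⟩ := val_bel (K := K) w
  rw [h, h]
  exact pow_lt_pow_left₀ hxy zero_le he

theorem bel_surj (v : HeightOneSpectrum (𝓞 K)) : ∃ w : HeightOneSpectrum (𝓞 M), bel K w = v := by
  obtain ⟨p, _, hp⟩ := v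
  obtain ⟨P, hP, rfl⟩ := p.exists_ideal_over_prime_of_isIntegral_of_isDomain (S := 𝓞 M) (by simp)
  exact ⟨⟨P, hP, by aesop⟩, rfl⟩

theorem bel_fin (v : HeightOneSpectrum (𝓞 K)) :
    {w : HeightOneSpectrum (𝓞 M) | bel K w = v}.Finite := by
  obtain ⟨p, hp⟩ := v.valuation_exists_uniformizer K
  have h0 : p ≠ 0 := by
    rintro rfl
    rw [map_zero] at hp
    exact absurd hp.symm exp_ne_zero
  refine (finite_supp (Units.map (algebraMap K M).toMonoidHom (Units.mk0 p h0))).subset ?_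
  rintro w rfl
  simp only [Set.mem_ofPred_eq, ne_eq, lg_zero_iff]
  change ¬ w.valuation M (algebraMap K M p) = 1
  rw [val_bel_one, hp, ← exp_zero, exp_inj]
  simp

/-- primes above a finite set. -/
noncomputable def ab (M : Type*) [Field M] [NumberField M] [Algebra K M]
    (S : Finset (HeightOneSpectrum (𝓞 K))) : Finset (HeightOneSpectrum (𝓞 M)) :=
  ((S.finite_toSet.biUnion (fun v _ => bel_fin (M := M) v))).toFinset

theorem mem_ab {S : Finset (HeightOneSpectrum (𝓞 K))} {w : HeightOneSpectrum (𝓞 M)} :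
    w ∈ ab M S ↔ bel K w ∈ S := by
  unfold ab
  simp

/-- conjugate prime. -/
noncomputable def sw (σ : M ≃ₐ[K] M) (w : HeightOneSpectrum (𝓞 M)) : HeightOneSpectrum (𝓞 M) where
  asIdeal := w.asIdeal.comap (RingOfIntegers.mapRingHom (σ : M →+* M))
  isPrime := Ideal.IsPrime.comap _
  ne_bot := by
    intro h
    obtain ⟨x, hx, h0⟩ := Submodule.exists_mem_ne_zero_of_ne_bot w.ne_bot
    have : (RingOfIntegers.mapRingHom (σ.symm : M →+* M)) x ∈
        w.asIdeal.comap (RingOfIntegers.mapRingHom (σ : M →+* M)) := by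
      rw [Ideal.mem_comap]
      convert hx
      ext
      simp
    rw [h, Ideal.mem_bot] at this
    apply h0
    have h2 := congrArg (fun z : 𝓞 M => (z : M)) this
    simp at h2
    exact_mod_cast h2

theorem sw_le (σ : M ≃ₐ[K] M) (w : HeightOneSpectrum (𝓞 M)) {x : M}
    (h : (sw σ w).valuation M x ≤ 1) : w.valuation M (σ x) ≤ 1 ∧
      ((sw σ w).valuation M x < 1 → w.valuation M (σ x) < 1) := by
  obtain ⟨n, ⟨d, hd⟩, e⟩ := HeightOneSpectrum.exists_primeCompl_mul_eq_of_integer _ x h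
  have hd' : w.valuation M (σ (algebraMap (𝓞 M) M d)) = 1 := by
    change w.valuation M (algebraMap (𝓞 M) M (RingOfIntegers.mapRingHom (σ : M →+* M) d)) = 1
    rw [HeightOneSpectrum.valuation_eq_one_iff_notMem]
    exact hd
  have hd2 : (sw σ w).valuation M (algebraMap (𝓞 M) M d) = 1 := by
    rw [HeightOneSpectrum.valuation_eq_one_iff_notMem]
    exact hd
  have e2 : w.valuation M (σ x) =
      w.valuation M (algebraMap (𝓞 M) M (RingOfIntegers.mapRingHom (σ : M →+* M) n)) := by
    change _ = w.valuation M (σ (algebraMap (𝓞 M) M n))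
    rw [← e]
    simp only [map_mul]
    rw [hd', mul_one]
  refine ⟨by rw [e2]; exact HeightOneSpectrum.valuation_le_one _ _, fun h1 => ?_⟩
  rw [e2, HeightOneSpectrum.valuation_lt_one_iff_mem]
  have : (sw σ w).valuation M (algebraMap (𝓞 M) M n) < 1 := by
    rw [← e, map_mul, hd2, mul_one]; exact h1
  rw [HeightOneSpectrum.valuation_lt_one_iff_mem] at this
  exact this

theorem sw_one (σ : M ≃ₐ[K] M) (w : HeightOneSpectrum (𝓞 M)) {x : M}
    (h : (sw σ w).valuation M x = 1) : w.valuation M (σ x) = 1 := by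
  have h1 := (sw_le σ w h.le).1
  have h2 := (sw_le σ w (x := x⁻¹) (by rw [map_inv₀, h, inv_one])).1
  have h0 : w.valuation M (σ x) ≠ 0 := by
    rw [Valuation.ne_zero_iff]
    simp only [ne_eq, EmbeddingLike.map_eq_zero_iff]
    rintro rfl
    simp at h
  rw [map_inv₀, map_inv₀] at h2
  refine le_antisymm h1 ?_
  exact (inv_le_one₀ (zero_lt_iff.2 h0)).1 h2

theorem bel_sw (σ : M ≃ₐ[K] M) (w : HeightOneSpectrum (𝓞 M)) : bel K (sw σ w) = bel K w := by
  apply HeightOneSpectrum.ext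
  ext x
  change RingOfIntegers.mapRingHom (σ : M →+* M) (algebraMap (𝓞 K) (𝓞 M) x) ∈ w.asIdeal ↔
    (algebraMap (𝓞 K) (𝓞 M) x) ∈ w.asIdeal
  have : RingOfIntegers.mapRingHom (σ : M →+* M) (algebraMap (𝓞 K) (𝓞 M) x) =
      algebraMap (𝓞 K) (𝓞 M) x := by
    ext
    change σ (algebraMap K M x) = algebraMap K M x
    simp
  rw [this]

theorem US_sw (σ : M ≃ₐ[K] M) {S : Finset (HeightOneSpectrum (𝓞 K))} {x : Mˣ} (hx : x ∈ US (ab M S)) :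
    Units.map (σ : M →* M) x ∈ US (ab M S) := by
  intro w hw
  rw [lg_zero_iff]
  apply sw_one
  rw [← lg_zero_iff]
  apply hx
  rw [mem_ab, bel_sw, ← mem_ab (M := M)]
  exact hw

theorem US_map {S : Finset (HeightOneSpectrum (𝓞 K))} {x : Kˣ} :
    Units.map (algebraMap K M : K →* M) x ∈ US (ab M S) ↔ x ∈ US S := by
  constructor
  · intro h v hv
    obtain ⟨w, rfl⟩ := bel_surj (M := M) v
    have := h w (by rwa [mem_ab])
    rw [lg_zero_iff] at this ⊢
    exact (val_bel_one w _).1 this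
  · intro h w hw
    rw [mem_ab] at hw
    have := h _ hw
    rw [lg_zero_iff] at this ⊢
    exact (val_bel_one w _).2 this

end Primes
end QH

namespace QH
set_option linter.unusedSectionVars false
set_option linter.unusedSimpArgs false
open scoped WithZero
open WithZero IsDedekindDomain NumberField Module

section GoodSec
variable {K : Type*} [Field K] [NumberField K]

/-- good finite sets of primes. -/
structure Good (S : Finset (HeightOneSpectrum (𝓞 K))) : Prop where
  two : ∀ v ∉ S, v.valuation K 2 = 1
  pi : ∀ v ∉ S, ∃ p : Kˣ, lg v p = -1 ∧ ∀ u ∉ S, u ≠ v → lg u p = 0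

theorem Good.mono {S S' : Finset (HeightOneSpectrum (𝓞 K))} (h : Good S) (hS : S ⊆ S') : Good S' :=
  ⟨fun v hv => h.two v (fun h' => hv (hS h')), fun v hv => by
    obtain ⟨p, h1, h2⟩ := h.pi v (fun h' => hv (hS h'))
    exact ⟨p, h1, fun u hu huv => h2 u (fun h' => hu (hS h')) huv⟩⟩

/-- unit of an integer. -/
noncomputable def iu (x : 𝓞 K) (hx : x ≠ 0) : Kˣ := Units.mk0 (algebraMap (𝓞 K) K x) (by simpa using hx)

theorem lg_iu (v : HeightOneSpectrum (𝓞 K)) (x : 𝓞 K) (hx : x ≠ 0) :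
    lg v (iu x hx) = -(multiplicity v.asIdeal (Ideal.span {x}) : ℤ) := by
  rw [lg_eq_iff]
  change v.valuation K (algebraMap (𝓞 K) K x) = _
  rw [HeightOneSpectrum.valuation_of_algebraMap, HeightOneSpectrum.intValuation_eq_exp_neg_multiplicity _ hx]

theorem mult_prime_ne {u v : HeightOneSpectrum (𝓞 K)} (h : u ≠ v) :
    multiplicity u.asIdeal v.asIdeal = 0 := by
  apply multiplicity_eq_zero.2
  intro hd
  have := (v.isMaximal.eq_of_le u.isPrime.ne_top (Ideal.dvd_iff_le.1 hd))
  exact h (HeightOneSpectrum.ext this.symm)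

theorem mult_prime_self (v : HeightOneSpectrum (𝓞 K)) : multiplicity v.asIdeal v.asIdeal = 1 := 
  multiplicity_self

theorem mult_mul (u : HeightOneSpectrum (𝓞 K)) {I J : Ideal (𝓞 K)} (hI : I ≠ 0) (hJ : J ≠ 0) :
    multiplicity u.asIdeal (I * J) = multiplicity u.asIdeal I + multiplicity u.asIdeal J :=
  multiplicity_mul u.prime (FiniteMultiplicity.of_prime_left u.prime (mul_ne_zero hI hJ))

theorem exists_good (S0 : Finset (HeightOneSpectrum (𝓞 K))) : ∃ S, S0 ⊆ S ∧ Good S := by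
  classical
  let cl : HeightOneSpectrum (𝓞 K) → ClassGroup (𝓞 K) := fun v =>
    ClassGroup.mk0 ⟨v.asIdeal, mem_nonZeroDivisors_of_ne_zero v.ne_bot⟩
  obtain ⟨s, -, hs⟩ := Set.exists_subset_bijOn Set.univ cl
  have hfin : s.Finite := hs.finite_iff_finite.2 (Set.toFinite _)
  have hd := finite_supp (Units.mk0 (2 : K) two_ne_zero)
  refine ⟨S0 ∪ (hfin.toFinset ∪ hd.toFinset), Finset.subset_union_left, ⟨?_, ?_⟩⟩
  · intro v hv
    simp only [Finset.mem_union, not_or, Set.Finite.mem_toFinset, Set.mem_ofPred_eq, not_not,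
      lg_zero_iff, Units.val_mk0] at hv
    exact hv.2.2
  · intro v hv
    simp only [Finset.mem_union, not_or, Set.Finite.mem_toFinset] at hv
    obtain ⟨c, hc, hcv⟩ := hs.surjOn ⟨v, trivial, rfl⟩
    obtain ⟨x, y, hx, hy, hxy⟩ := ClassGroup.mk0_eq_mk0_iff.1 hcv
    have key : ∀ u : HeightOneSpectrum (𝓞 K), multiplicity u.asIdeal (Ideal.span {x}) +
        multiplicity u.asIdeal c.asIdeal = multiplicity u.asIdeal (Ideal.span {y}) +
        multiplicity u.asIdeal v.asIdeal := by
      intro u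
      rw [← mult_mul u (by simpa using hx) c.ne_bot, ← mult_mul u (by simpa using hy) v.ne_bot]
      exact congrArg _ hxy
    have hcv' : c ≠ v := by rintro rfl; exact hv.2.1 hc
    refine ⟨iu x hx * (iu y hy)⁻¹, ?_, ?_⟩
    · rw [lg_mul, lg_inv, lg_iu, lg_iu]
      have := key v
      rw [mult_prime_ne hcv'.symm, mult_prime_self] at this
      omega
    · intro u hu huv
      simp only [Finset.mem_union, not_or, Set.Finite.mem_toFinset] at hu
      have huc : u ≠ c := by rintro rfl; exact hu.2.1 hc
      rw [lg_mul, lg_inv, lg_iu, lg_iu]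
      have := key u
      rw [mult_prime_ne huv, mult_prime_ne huc] at this
      omega

theorem Good.exists_of_fin {S : Finset (HeightOneSpectrum (𝓞 K))} (h : Good S)
    (k : HeightOneSpectrum (𝓞 K) → ℤ) (T : Finset (HeightOneSpectrum (𝓞 K)))
    (hk : ∀ v ∉ T, v ∉ S → k v = 0) :
    ∃ x : Kˣ, ∀ v ∉ S, lg v x = k v := by
  classical
  have : ∀ v, ∃ p : Kˣ, v ∉ S → lg v p = -1 ∧ ∀ u ∉ S, u ≠ v → lg u p = 0 := by
    intro v
    by_cases hv : v ∈ S
    · exact ⟨1, fun h => absurd hv h⟩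
    · obtain ⟨p, hp⟩ := h.pi v hv
      exact ⟨p, fun _ => hp⟩
  choose p hp using this
  refine ⟨∏ v ∈ T.filter (· ∉ S), p v ^ (- k v), fun u hu => ?_⟩
  rw [lg_prod]
  by_cases huT : u ∈ T
  · rw [Finset.sum_eq_single_of_mem u (by simp [huT, hu])]
    · rw [lg_zpow, (hp u hu).1]; ring
    · intro v hv hvu
      rw [lg_zpow, (hp v (Finset.mem_filter.1 hv).2).2 u hu hvu.symm, mul_zero]
  · rw [hk u huT hu]
    apply Finset.sum_eq_zero
    intro v hv
    have : u ≠ v := by rintro rfl; exact huT (Finset.mem_filter.1 hv).1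
    rw [lg_zpow, (hp v (Finset.mem_filter.1 hv).2).2 u hu this, mul_zero]

end GoodSec
end QH

namespace QH
set_option linter.unusedSectionVars false
set_option linter.unusedSimpArgs false
open scoped WithZero
open WithZero IsDedekindDomain NumberField Module

section Scale
variable {K : Type*} [Field K] [NumberField K]

theorem norm_scale {S : Finset (HeightOneSpectrum (𝓞 K))} (hS : Good S) (p q : K)
    (hpq : p ≠ 0 ∨ q ≠ 0) :
    ∃ c : Kˣ, ∀ v ∉ S, max (v.valuation K (c * p)) (v.valuation K (c * q)) = 1 := by
  classical
  have hfin : ∃ T : Finset (HeightOneSpectrum (𝓞 K)), ∀ v ∉ T,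
      max (v.valuation K p) (v.valuation K q) = 1 := by
    by_cases hp : p = 0
    · have hq := hpq.resolve_left (not_not.2 hp)
      refine ⟨(finite_supp (Units.mk0 q hq)).toFinset, fun v hv => ?_⟩
      simp only [Set.Finite.mem_toFinset, Set.mem_ofPred_eq, not_not, lg_zero_iff, Units.val_mk0] at hv
      simp [hp, hv]
    by_cases hq : q = 0
    · refine ⟨(finite_supp (Units.mk0 p hp)).toFinset, fun v hv => ?_⟩
      simp only [Set.Finite.mem_toFinset, Set.mem_ofPred_eq, not_not, lg_zero_iff, Units.val_mk0] at hv
      simp [hq, hv]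
    refine ⟨(finite_supp (Units.mk0 p hp)).toFinset ∪ (finite_supp (Units.mk0 q hq)).toFinset,
      fun v hv => ?_⟩
    simp only [Finset.mem_union, not_or, Set.Finite.mem_toFinset, Set.mem_ofPred_eq, not_not,
      lg_zero_iff, Units.val_mk0] at hv
    simp [hv.1, hv.2]
  obtain ⟨T, hT⟩ := hfin
  obtain ⟨c, hc⟩ := hS.exists_of_fin (fun v => - log (max (v.valuation K p) (v.valuation K q))) T
    (fun v hv _ => by simp [hT v hv])
  refine ⟨c, fun v hv => ?_⟩
  have h0 : max (v.valuation K p) (v.valuation K q) ≠ 0 := by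
    rcases hpq with h | h
    · have : v.valuation K p ≠ 0 := (Valuation.ne_zero_iff _).2 h
      exact ((zero_lt_iff.2 this).trans_le (le_max_left _ _)).ne'
    · have : v.valuation K q ≠ 0 := (Valuation.ne_zero_iff _).2 h
      exact ((zero_lt_iff.2 this).trans_le (le_max_right _ _)).ne'
  have h1 := lg_eq_iff.1 (hc v hv)
  have hm : Monotone (fun t => v.valuation K (c : K) * t) := fun _ _ h => mul_le_mul' le_rfl h
  have h2 := hm.map_max (a := v.valuation K p) (b := v.valuation K q)
  rw [map_mul, map_mul, ← h2, h1, exp_neg, exp_log h0, inv_mul_cancel₀ h0]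

end Scale

section QE
variable {K : Type*} [Field K] [NumberField K] {M : Type*} [Field M] [NumberField M] [Algebra K M]

/-- `M = K(β)`, `β² = b`, quadratic. -/
structure QExt (b : K) (β : M) (σ : M ≃ₐ[K] M) : Prop where
  sq : β ^ 2 = algebraMap K M b
  gen : ∀ z : M, ∃ p q : K, z = algebraMap K M p + algebraMap K M q * β
  sig : σ β = - β
  nonsq : ∀ x : K, x ^ 2 ≠ b

variable {b : K} {β : M} {σ : M ≃ₐ[K] M}

theorem QExt.b_ne (h : QExt b β σ) : b ≠ 0 := fun h0 => h.nonsq 0 (by simp [h0])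

theorem QExt.ne (h : QExt b β σ) : β ≠ 0 := by
  intro h0
  have := h.sq
  rw [h0] at this
  simp only [ne_eq, OfNat.ofNat_ne_zero, not_false_eq_true, zero_pow] at this
  exact h.b_ne (by simpa using this.symm)

theorem QExt.unique (h : QExt b β σ) {p q : K} (e : algebraMap K M p + algebraMap K M q * β = 0) :
    p = 0 ∧ q = 0 := by
  have hq : q = 0 := by
    by_contra hq
    have h1 : (algebraMap K M q * β) ^ 2 = (algebraMap K M p) ^ 2 := by
      rw [← neg_eq_of_add_eq_zero_right e]; ring
    rw [mul_pow, h.sq, ← map_pow, ← map_pow, ← map_mul] at h1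
    have h2 := (algebraMap K M).injective h1
    apply h.nonsq (p / q)
    rw [div_pow, ← h2]
    field_simp
  refine ⟨?_, hq⟩
  rw [hq] at e
  simpa using e

theorem QExt.sig_add (h : QExt b β σ) (p q : K) :
    σ (algebraMap K M p + algebraMap K M q * β) = algebraMap K M p - algebraMap K M q * β := by
  simp [h.sig]; ring

theorem QExt.mul_sig (h : QExt b β σ) (p q : K) :
    (algebraMap K M p + algebraMap K M q * β) * σ (algebraMap K M p + algebraMap K M q * β)
      = algebraMap K M (p ^ 2 - b * q ^ 2) := by
  rw [h.sig_add, map_sub, map_mul, map_pow, map_pow, ← h.sq]; ring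

theorem QExt.sig_sig (h : QExt b β σ) (z : M) : σ (σ z) = z := by
  obtain ⟨p, q, rfl⟩ := h.gen z
  rw [h.sig_add]; simp [h.sig]

theorem QExt.fixed (h : QExt b β σ) {z : M} (hz : σ z = z) : ∃ p : K, algebraMap K M p = z := by
  obtain ⟨p, q, rfl⟩ := h.gen z
  rw [h.sig_add] at hz
  have : algebraMap K M 0 + algebraMap K M (2 * q) * β = 0 := by
    rw [map_zero, map_mul, map_ofNat]; linear_combination - hz
  have := (h.unique this).2
  have hq : q = 0 := by simpa using this
  exact ⟨p, by simp [hq]⟩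

theorem QExt.exists_nm (h : QExt b β σ) (z : Mˣ) :
    ∃ x : Kˣ, algebraMap K M x = z * σ z ∧ x ∈ Nm b := by
  obtain ⟨p, q, e⟩ := h.gen z
  have h1 := h.mul_sig p q
  rw [← e] at h1
  have h0 : p ^ 2 - b * q ^ 2 ≠ 0 := by
    intro h0
    rw [h0, map_zero] at h1
    simp at h1
  refine ⟨Units.mk0 _ h0, h1.symm, ?_⟩
  rw [mem_Nm]
  exact ⟨p, q, rfl⟩

/-- the norm. -/
noncomputable def QExt.nm (h : QExt b β σ) : Mˣ →* Kˣ :=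
  MonoidHom.mk' (fun z => Classical.choose (h.exists_nm z)) (by
    intro x y
    have h1 := (Classical.choose_spec (h.exists_nm x)).1
    have h2 := (Classical.choose_spec (h.exists_nm y)).1
    have h3 := (Classical.choose_spec (h.exists_nm (x * y))).1
    ext
    apply (algebraMap K M).injective
    rw [h3, Units.val_mul, Units.val_mul, map_mul, map_mul, h1, h2]
    ring)

theorem QExt.nm_spec (h : QExt b β σ) (z : Mˣ) : algebraMap K M (h.nm z) = z * σ z :=
  (Classical.choose_spec (h.exists_nm z)).1

theorem QExt.nm_mem (h : QExt b β σ) (z : Mˣ) : h.nm z ∈ Nm b :=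
  (Classical.choose_spec (h.exists_nm z)).2

/-- norm on S-units. -/
noncomputable def QExt.f (h : QExt b β σ) (S : Finset (HeightOneSpectrum (𝓞 K))) :
    US (ab M S) →* US S :=
  (h.nm.comp (US (ab M S)).subtype).codRestrict _ (by
    intro z
    rw [← US_map (M := M)]
    have : Units.map (algebraMap K M : K →* M) (h.nm z) = z * Units.map (σ : M →* M) z := by
      ext
      exact h.nm_spec z
    change Units.map (algebraMap K M : K →* M) (h.nm z) ∈ _
    rw [this]
    exact mul_mem z.2 (US_sw σ z.2))

theorem QExt.f_spec (h : QExt b β σ) (S : Finset (HeightOneSpectrum (𝓞 K))) (z : US (ab M S)) :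
    algebraMap K M ((h.f S z : Kˣ) : K) = (z : Mˣ) * σ (z : Mˣ) := h.nm_spec z

theorem QExt.f_mem (h : QExt b β σ) (S : Finset (HeightOneSpectrum (𝓞 K))) (z : US (ab M S)) :
    (h.f S z : Kˣ) ∈ Nm b := h.nm_mem z

/-- inclusion of S-units. -/
noncomputable def incl (M : Type*) [Field M] [NumberField M] [Algebra K M]
    (S : Finset (HeightOneSpectrum (𝓞 K))) : US S →* US (ab M S) :=
  ((Units.map (algebraMap K M : K →* M)).comp (US S).subtype).codRestrict _ 
    (fun z => US_map.2 z.2)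

/-- conjugation on S-units. -/
noncomputable def conjU (σ : M ≃ₐ[K] M)
    (S : Finset (HeightOneSpectrum (𝓞 K))) : US (ab M S) →* US (ab M S) :=
  ((Units.map (σ : M →* M)).comp (US (ab M S)).subtype).codRestrict _ 
    (fun z => US_sw σ z.2)

/-- the map a ↦ a / σ a. -/
noncomputable def dmap (σ : M ≃ₐ[K] M)
    (S : Finset (HeightOneSpectrum (𝓞 K))) : US (ab M S) →* US (ab M S) :=
  MonoidHom.id _ / conjU σ S

theorem dmap_spec (S : Finset (HeightOneSpectrum (𝓞 K))) (z : US (ab M S)) :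
    (((dmap σ S z : Mˣ)) : M) = (z : Mˣ) / σ (z : Mˣ) := by
  change (((z : Mˣ) / (conjU σ S z : Mˣ) : Mˣ) : M) = _
  rw [Units.val_div_eq_div_val]
  rfl

theorem QExt.mem_ker_f (h : QExt b β σ) (S : Finset (HeightOneSpectrum (𝓞 K))) (z : US (ab M S)) :
    z ∈ (h.f S).ker ↔ ((z : Mˣ) : M) * σ (z : Mˣ) = 1 := by
  rw [MonoidHom.mem_ker, ← h.f_spec]
  constructor
  · intro e; rw [e]; simp
  · intro e
    have : ((h.f S z : Kˣ) : K) = 1 := (algebraMap K M).injective (by rw [e, map_one])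
    ext
    exact this

theorem QExt.hfi (h : QExt b β σ) (S : Finset (HeightOneSpectrum (𝓞 K))) (u : US S) :
    h.f S (incl M S u) = u ^ 2 := by
  ext
  apply (algebraMap K M).injective
  rw [h.f_spec]
  change algebraMap K M (u : Kˣ) * σ (algebraMap K M (u : Kˣ)) = _
  simp [pow_two]

theorem QExt.hk (h : QExt b β σ) (S : Finset (HeightOneSpectrum (𝓞 K))) :
    (dmap σ S).ker = (incl M S).range := by
  ext z
  constructor
  · intro hz
    have h1 := dmap_spec (σ := σ) S z
    rw [(MonoidHom.mem_ker).1 hz] at h1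
    have h2 : σ ((z : Mˣ) : M) = (z : Mˣ) := by
      have : σ ((z : Mˣ) : M) ≠ 0 := by simp
      rw [eq_div_iff this] at h1
      simpa using h1
    obtain ⟨p, hp⟩ := h.fixed h2
    have p0 : p ≠ 0 := by rintro rfl; simp at hp; exact (z : Mˣ).ne_zero hp.symm
    have hpz : Units.map (algebraMap K M : K →* M) (Units.mk0 p p0) = z := by ext; exact hp
    refine ⟨⟨Units.mk0 p p0, ?_⟩, ?_⟩
    · rw [← US_map (M := M), hpz]; exact z.2
    · apply Subtype.ext
      exact hpz
  · rintro ⟨u, rfl⟩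
    rw [MonoidHom.mem_ker]
    ext
    rw [dmap_spec]
    change algebraMap K M (u : Kˣ) / σ (algebraMap K M (u : Kˣ)) = _
    simp

theorem QExt.hd (h : QExt b β σ) (S : Finset (HeightOneSpectrum (𝓞 K))) (z : US (ab M S))
    (hz : z ∈ (h.f S).ker) : dmap σ S z = z ^ 2 := by
  rw [h.mem_ker_f] at hz
  ext
  rw [dmap_spec]
  have : σ ((z : Mˣ) : M) ≠ 0 := by simp
  rw [div_eq_iff this]
  push_cast
  linear_combination - ((z : Mˣ) : M) * hz

end QE
end QH

namespace QH
set_option linter.unusedSectionVars false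
set_option linter.unusedSimpArgs false
open scoped WithZero
open WithZero IsDedekindDomain NumberField Module

section QE
variable {K : Type*} [Field K] [NumberField K] {M : Type*} [Field M] [NumberField M] [Algebra K M]
variable {b : Kˣ} {β : M} {σ : M ≃ₐ[K] M}

theorem QExt.val_beta (h : QExt (b : K) β σ) {S : Finset (HeightOneSpectrum (𝓞 K))} (hb : b ∈ US S)
    {w : HeightOneSpectrum (𝓞 M)} (hw : bel K w ∉ S) : w.valuation M β = 1 := by
  have h1 := hb _ hw
  rw [lg_zero_iff, ← val_bel_one, ← h.sq, map_pow, pow_eq_one_iff] at h1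
  simpa using h1

theorem QExt.unit_of_ratio (h : QExt (b : K) β σ) {S : Finset (HeightOneSpectrum (𝓞 K))} (hS : Good S)
    (hb : b ∈ US S) {p q : K} {w : HeightOneSpectrum (𝓞 M)} (hw : bel K w ∉ S)
    (hpq : max ((bel K w).valuation K p) ((bel K w).valuation K q) = 1)
    (hr : w.valuation M (σ (algebraMap K M p + algebraMap K M q * β)) =
      w.valuation M (algebraMap K M p + algebraMap K M q * β)) :
    w.valuation M (algebraMap K M p + algebraMap K M q * β) = 1 := by
  have hβ := h.val_beta hb hw
  have hp : w.valuation M (algebraMap K M p) ≤ 1 := by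
    rw [val_bel_le, ← hpq]; exact le_max_left _ _
  have hq : w.valuation M (algebraMap K M q) ≤ 1 := by
    rw [val_bel_le, ← hpq]; exact le_max_right _ _
  have h2 : w.valuation M (2 : M) = 1 := by
    have := (val_bel_one w (2 : K)).2 (hS.two _ hw)
    rwa [map_ofNat] at this
  by_contra hne
  have hle : w.valuation M (algebraMap K M p + algebraMap K M q * β) ≤ 1 := by
    refine (Valuation.map_add _ _ _).trans (max_le hp ?_)
    rw [map_mul, hβ, mul_one]; exact hq
  have hlt := lt_of_le_of_ne hle hne
  have hlt' := hlt
  rw [← hr, h.sig_add] at hlt'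
  have h3 : w.valuation M (algebraMap K M p) < 1 := by
    have e : (2 : M) * algebraMap K M p = (algebraMap K M p + algebraMap K M q * β) +
      (algebraMap K M p - algebraMap K M q * β) := by ring
    have := Valuation.map_add_lt _ hlt hlt'
    rwa [← e, map_mul, h2, one_mul] at this
  have h4 : w.valuation M (algebraMap K M q) < 1 := by
    have e : (2 : M) * (algebraMap K M q * β) = (algebraMap K M p + algebraMap K M q * β) -
      (algebraMap K M p - algebraMap K M q * β) := by ring
    have := Valuation.map_sub_lt _ hlt hlt'
    rwa [← e, map_mul, h2, one_mul, map_mul, hβ, mul_one] at this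
  rw [val_bel_lt] at h3 h4
  exact absurd hpq (max_lt h3 h4).ne

theorem QExt.hr (h : QExt (b : K) β σ) {S : Finset (HeightOneSpectrum (𝓞 K))} (hS : Good S)
    (hb : b ∈ US S) : (dmap σ S).range = (h.f S).ker := by
  ext x
  constructor
  · rintro ⟨z, rfl⟩
    rw [h.mem_ker_f, dmap_spec, map_div₀, h.sig_sig]
    have : σ ((z : Mˣ) : M) ≠ 0 := by simp
    field_simp
  · intro hx
    have hx0 := hx
    rw [h.mem_ker_f] at hx
    have hy : ∃ y : M, y ≠ 0 ∧ y = (x : Mˣ) * σ y := by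
      by_cases h1 : ((x : Mˣ) : M) = -1
      · exact ⟨β, h.ne, by rw [h1, h.sig]; ring⟩
      · refine ⟨1 + (x : Mˣ), fun h2 => h1 (by linear_combination h2), ?_⟩
        rw [map_add, map_one, mul_add, hx]; ring
    obtain ⟨y, hy0, hy⟩ := hy
    obtain ⟨p, q, rfl⟩ := h.gen y
    have hpq : p ≠ 0 ∨ q ≠ 0 := by
      by_contra hc
      push Not at hc
      apply hy0
      simp [hc.1, hc.2]
    obtain ⟨c, hc⟩ := norm_scale hS p q hpq
    have ec : algebraMap K M (c * p) + algebraMap K M (c * q) * β =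
      algebraMap K M c * (algebraMap K M p + algebraMap K M q * β) := by
        rw [map_mul, map_mul]; ring
    have hz0 : algebraMap K M (c * p) + algebraMap K M (c * q) * β ≠ 0 := by
      rw [ec]; exact mul_ne_zero (by simp) hy0
    have hzx : algebraMap K M (c * p) + algebraMap K M (c * q) * β =
        (x : Mˣ) * σ (algebraMap K M (c * p) + algebraMap K M (c * q) * β) := by
      rw [ec, map_mul, AlgEquiv.commutes]; linear_combination algebraMap K M c * hy
    generalize (c : K) * p = p' at *
    generalize (c : K) * q = q' at *
    have hU : Units.mk0 _ hz0 ∈ US (ab M S) := by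
      intro w hw
      rw [lg_zero_iff, Units.val_mk0]
      have hw' : bel K w ∉ S := by rwa [← mem_ab (M := M)]
      apply h.unit_of_ratio hS hb hw' (hc _ hw')
      have := x.2 w hw
      rw [lg_zero_iff] at this
      conv_rhs => rw [hzx, map_mul, this, one_mul]
    refine ⟨⟨_, hU⟩, ?_⟩
    ext
    rw [dmap_spec]
    simp only [Units.val_mk0]
    rw [div_eq_iff]
    · exact hzx
    · exact (map_ne_zero σ).2 hz0

theorem QExt.index_eq (h : QExt (b : K) β σ) {S : Finset (HeightOneSpectrum (𝓞 K))} (hS : Good S)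
    (hb : b ∈ US S) :
    2 ^ (S.card + Fintype.card (InfinitePlace K)) = (h.f S).range.index *
      (powMonoidHom 2 : (h.f S).ker →* (h.f S).ker).range.index := by
  rw [← index_sq_US]
  exact abstract_index (h.f S) (incl M S) (dmap σ S) (h.hfi S) (h.hk S) (h.hr hS hb) (h.hd S)

end QE

theorem rank_add {A : Type*} [CommGroup A] [Module.Finite ℤ (Additive A)] (d : A →* A) :
    finrank ℤ (Additive d.range) + finrank ℤ (Additive d.ker) = finrank ℤ (Additive A) := by
  let D : Additive A →ₗ[ℤ] Additive A := (MonoidHom.toAdditive d).toIntLinearMap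
  have h := Submodule.finrank_quotient_add_finrank (LinearMap.ker D)
  rw [← h, LinearEquiv.finrank_eq D.quotKerEquivRange]
  rfl

theorem rank_eq {A B : Type*} [CommGroup A] [CommGroup B] (e : A ≃* B) :
    finrank ℤ (Additive A) = finrank ℤ (Additive B) :=
  LinearEquiv.finrank_eq (MulEquiv.toAdditive e).toIntLinearEquiv

end QH

namespace QH
set_option linter.unusedSectionVars false
set_option linter.unusedSimpArgs false
open scoped WithZero
open WithZero IsDedekindDomain NumberField Module

/-- local squares at an infinite place. -/
noncomputable def SqI {K : Type*} [Field K] (v : InfinitePlace K) : Subgroup Kˣ where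
  carrier := {x | ∀ h : v.IsReal, 0 < InfinitePlace.embedding_of_isReal h (x : K)}
  one_mem' := fun h => by simp
  mul_mem' := fun {x y} hx hy h => by
    push_cast
    rw [map_mul]; exact mul_pos (hx h) (hy h)
  inv_mem' := fun {x} hx h => by
    rw [Units.val_inv_eq_inv_val, map_inv₀]
    exact inv_pos.2 (hx h)

theorem mem_SqI {K : Type*} [Field K] {v : InfinitePlace K} {x : Kˣ} :
    x ∈ SqI v ↔ ∀ h : v.IsReal, 0 < InfinitePlace.embedding_of_isReal h (x : K) := Iff.rfl

section QE
variable {K : Type*} [Field K] [NumberField K] {M : Type*} [Field M] [NumberField M] [Algebra K M]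
variable {b : Kˣ} {β : M} {σ : M ≃ₐ[K] M}

theorem QExt.two_above (h : QExt (b : K) β σ) {v : HeightOneSpectrum (𝓞 K)}
    (hb : b ∈ Sq (v.valuation K)) (w : HeightOneSpectrum (𝓞 M)) (hw : bel K w = v) :
    sw σ w ≠ w := by
  subst hw
  intro hs
  obtain ⟨y, hy0, hy⟩ := mem_Sq.1 hb
  obtain ⟨θ, hθ⟩ : ∃ θ : M, θ = (1 + β * algebraMap K M y) / 2 := ⟨_, rfl⟩
  have e1 : θ + σ θ = 1 := by
    rw [hθ, map_div₀, map_add, map_mul, h.sig, AlgEquiv.commutes, map_one, map_ofNat]; ring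
  have e2 : θ * σ θ * algebraMap K M 4 = algebraMap K M (1 - b * y ^ 2) := by
    have : σ θ = 1 - θ := by linear_combination e1
    rw [this, hθ, map_sub, map_mul, ← h.sq, map_pow, map_one, map_ofNat]; ring
  have e3 : w.valuation M (θ * σ θ) < 1 := by
    have hy' : (bel K w).valuation K (1 - b * y ^ 2) < (bel K w).valuation K 4 := by
      rwa [Valuation.map_sub_swap]
    have h1 := val_bel_mono w hy'
    rw [← e2, map_mul] at h1
    by_contra hc
    push Not at hc
    exact absurd h1 (not_lt.2 (le_mul_of_one_le_left zero_le hc))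
  have key : ∀ t : M, t + σ t = 1 → ¬ w.valuation M t < 1 := by
    intro t ht hlt
    have h1 : w.valuation M (σ t) < 1 := by
      refine (sw_le σ w ?_).2 ?_ <;> rw [hs]
      exacts [hlt.le, hlt]
    have := Valuation.map_add_lt _ hlt h1
    rw [ht, map_one] at this
    exact lt_irrefl _ this
  by_cases h1 : w.valuation M θ < 1
  · exact key θ e1 h1
  · refine key (σ θ) (by rw [h.sig_sig, add_comm]; exact e1) ?_
    rw [map_mul] at e3
    by_contra h2
    push Not at h1 h2
    exact absurd e3 (not_lt.2 (one_le_mul h1 h2))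

open Classical in
theorem QExt.card_ab (h : QExt (b : K) β σ) (S : Finset (HeightOneSpectrum (𝓞 K))) :
    S.card + (S.filter (fun v => b ∈ Sq (v.valuation K))).card ≤ (ab M S).card := by
  have h1 : (ab M S).card = ∑ v ∈ S, ((ab M S).filter (fun w => bel K w = v)).card :=
    Finset.card_eq_sum_card_fiberwise (fun w hw => mem_ab.1 hw)
  rw [h1, Finset.card_filter, Finset.card_eq_sum_ones, ← Finset.sum_add_distrib]
  apply Finset.sum_le_sum
  intro v hv
  obtain ⟨w, rfl⟩ := bel_surj (M := M) v
  split_ifs with hb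
  · have hne := h.two_above hb w rfl
    have : ({sw σ w, w} : Finset _) ⊆ (ab M S).filter (fun w' => bel K w' = bel K w) := by
      intro u hu
      simp only [Finset.mem_insert, Finset.mem_singleton] at hu
      rcases hu with rfl | rfl
      · simp [mem_ab, bel_sw, hv]
      · simp [mem_ab, hv]
    have h2 := Finset.card_le_card this
    rwa [Finset.card_pair hne] at h2
  · have : ({w} : Finset _) ⊆ (ab M S).filter (fun w' => bel K w' = bel K w) := by
      intro u hu
      simp only [Finset.mem_singleton] at hu
      subst hu
      simp [mem_ab, hv]
    simpa using Finset.card_le_card this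

theorem QExt.two_above_inf (h : QExt (b : K) β σ) {v : InfinitePlace K}
    (hb : b ∈ SqI v) : ∃ w w' : InfinitePlace M, w ≠ w' ∧ w.comap (algebraMap K M) = v ∧
      w'.comap (algebraMap K M) = v := by
  obtain ⟨w, rfl⟩ := InfinitePlace.comap_surjective (k := K) (K := M) v
  obtain ⟨ψ, rfl⟩ : ∃ ψ, InfinitePlace.mk ψ = w := ⟨_, w.mk_embedding⟩
  refine ⟨InfinitePlace.mk ψ, InfinitePlace.mk (ψ.comp (σ : M →+* M)), ?_, rfl, ?_⟩
  · intro e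
    rw [InfinitePlace.mk_eq_iff] at e
    rcases e with e | e
    · have := congrArg (fun g => g β) e
      simp only [RingHom.comp_apply, RingHom.coe_coe, h.sig, map_neg] at this
      have h2 : ψ β = 0 := by linear_combination this / 2
      exact h.ne (by simpa using h2)
    · have e1 : ∀ x : M, (starRingEnd ℂ) (ψ x) = ψ (σ x) := fun x => congrArg (fun g => g x) e
      have hr : ComplexEmbedding.IsReal (ψ.comp (algebraMap K M)) := by
        ext x
        change (starRingEnd ℂ) (ψ (algebraMap K M x)) = ψ (algebraMap K M x)
        rw [e1, AlgEquiv.commutes]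
      have hr' : (InfinitePlace.mk (ψ.comp (algebraMap K M))).IsReal := ⟨_, hr, rfl⟩
      have hb' : 0 < InfinitePlace.embedding_of_isReal hr' (b : K) := hb hr'
      have h3 : ((InfinitePlace.embedding_of_isReal hr' (b : K) : ℝ) : ℂ) = (ψ β) ^ 2 := by
        rw [InfinitePlace.embedding_of_isReal_apply, InfinitePlace.embedding_mk_eq_of_isReal hr,
          RingHom.comp_apply, ← h.sq, map_pow]
      have h4 := e1 β
      rw [h.sig, map_neg] at h4
      have h5 : (ψ β).re = 0 := by
        have := congrArg Complex.re h4
        simp at this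
        linarith
      have h6 := congrArg Complex.re h3
      rw [pow_two, Complex.mul_re, Complex.ofReal_re, h5] at h6
      have h7 := mul_self_nonneg (ψ β).im
      linarith
  · change _ = (InfinitePlace.mk ψ).comap (algebraMap K M)
    rw [InfinitePlace.comap_mk, InfinitePlace.comap_mk]
    congr 1
    ext x
    simp

open Classical in
theorem QExt.card_inf (h : QExt (b : K) β σ) :
    Fintype.card (InfinitePlace K) + (Finset.univ.filter (fun v : InfinitePlace K => b ∈ SqI v)).card
      ≤ Fintype.card (InfinitePlace M) := by
  have h1 : (Finset.univ : Finset (InfinitePlace M)).card = ∑ v ∈ (Finset.univ : Finset (InfinitePlace K)),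
      ((Finset.univ).filter (fun w : InfinitePlace M => w.comap (algebraMap K M) = v)).card :=
    Finset.card_eq_sum_card_fiberwise (fun w hw => Finset.mem_coe.2 (Finset.mem_univ _))
  rw [← Finset.card_univ, ← Finset.card_univ, h1, Finset.card_filter, Finset.card_eq_sum_ones,
    ← Finset.sum_add_distrib]
  apply Finset.sum_le_sum
  intro v _
  split_ifs with hb
  · obtain ⟨w, w', hne, e1, e2⟩ := h.two_above_inf hb
    have : ({w, w'} : Finset _) ⊆
        (Finset.univ).filter (fun w : InfinitePlace M => w.comap (algebraMap K M) = v) := by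
      intro u hu
      simp only [Finset.mem_insert, Finset.mem_singleton] at hu
      rcases hu with rfl | rfl <;> simp [e1, e2]
    have h2 := Finset.card_le_card this
    rwa [Finset.card_pair hne] at h2
  · obtain ⟨w, rfl⟩ := InfinitePlace.comap_surjective (k := K) (K := M) v
    have : ({w} : Finset _) ⊆ (Finset.univ).filter
        (fun w' : InfinitePlace M => w'.comap (algebraMap K M) = w.comap (algebraMap K M)) := by
      intro u hu
      simp only [Finset.mem_singleton] at hu
      subst hu
      simp
    simpa using Finset.card_le_card this

theorem card_ker_equiv {A B : Type*} [CommGroup A] [CommGroup B] (e : A ≃* B) :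
    Nat.card (powMonoidHom 2 : A →* A).ker = Nat.card (powMonoidHom 2 : B →* B).ker := by
  refine Nat.card_congr (Equiv.subtypeEquiv e.toEquiv ?_)
  intro a
  simp only [MonoidHom.mem_ker, powMonoidHom_apply]
  change a ^ 2 = 1 ↔ (e a) ^ 2 = 1
  constructor
  · intro h; rw [← map_pow, h, map_one]
  · intro h; rw [← map_pow] at h; exact e.injective (by rw [h, map_one])

theorem incl_inj (S : Finset (HeightOneSpectrum (𝓞 K))) : Function.Injective (incl M S) := by
  intro x y hxy
  ext
  apply (algebraMap K M).injective
  exact congrArg (fun z : US (ab M S) => ((z : Mˣ) : M)) hxy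

theorem QExt.ker_index (h : QExt (b : K) β σ) {S : Finset (HeightOneSpectrum (𝓞 K))} (hS : Good S)
    (hb : b ∈ US S) :
    (powMonoidHom 2 : (h.f S).ker →* (h.f S).ker).range.index * 
      2 ^ (S.card + Fintype.card (InfinitePlace K)) =
      2 ^ ((ab M S).card + Fintype.card (InfinitePlace M) + 1) := by
  have hfk : Module.Finite ℤ (Additive (h.f S).ker) := by
    have : Module.Finite ℤ (AddSubgroup.toIntSubmodule (Subgroup.toAddSubgroup (h.f S).ker)) := inferInstance
    exact this
  rw [index_fg]
  have h1 : Nat.card (powMonoidHom 2 : (h.f S).ker →* (h.f S).ker).ker = 2 := by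
    rw [card_ker_equiv ((h.f S).ker.equivMapOfInjective (US (ab M S)).subtype
      (Subgroup.subtype_injective _))]
    apply card_two_ker
    refine ⟨⟨-1, neg_one_mem_US _⟩, ?_, rfl⟩
    rw [SetLike.mem_coe, h.mem_ker_f]
    simp
  rw [h1]
  have h2 := rank_add (dmap σ S)
  rw [h.hr hS hb, h.hk, ← rank_eq (MonoidHom.ofInjective (incl_inj (M := M) S))] at h2
  have h3 := finrank_US S
  have h4 := finrank_US (ab M S)
  rw [← pow_succ, ← pow_add]
  congr 1
  omega

open Classical in
/-- the number of places at which `b` is a local square. -/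
noncomputable def nsp (b : Kˣ) (S : Finset (HeightOneSpectrum (𝓞 K))) : ℕ :=
  (S.filter (fun v => b ∈ Sq (v.valuation K))).card +
    (Finset.univ.filter (fun v : InfinitePlace K => b ∈ SqI v)).card

theorem QExt.H (h : QExt (b : K) β σ) {S : Finset (HeightOneSpectrum (𝓞 K))} (hS : Good S)
    (hb : b ∈ US S) :
    (Nm (b : K)).relIndex (US S) ≠ 0 ∧
      (Nm (b : K)).relIndex (US S) * 2 ^ (nsp b S + 1) ≤ 2 ^ (S.card + Fintype.card (InfinitePlace K)) := by
  have h1 := h.index_eq hS hb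
  have h2 := h.ker_index hS hb
  have h3 := h.card_ab S
  have h4 := h.card_inf
  have h5 : (h.f S).range ≤ (Nm (b : K)).subgroupOf (US S) := by
    rintro _ ⟨z, rfl⟩
    rw [Subgroup.mem_subgroupOf]
    exact h.f_mem S z
  have h6 : (h.f S).range.index ≠ 0 := by
    intro h0
    rw [h0, zero_mul] at h1
    exact absurd h1 (by positivity)
  have hfi : (h.f S).range.FiniteIndex := ⟨h6⟩
  have h7 : (Nm (b : K)).relIndex (US S) ≤ (h.f S).range.index := Subgroup.index_antitone h5
  refine ⟨(Subgroup.finiteIndex_of_le h5).index_ne_zero, ?_⟩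
  refine (Nat.mul_le_mul_right _ h7).trans ?_
  have h8 : (h.f S).range.index * 2 ^ ((ab M S).card + Fintype.card (InfinitePlace M) + 1) =
      2 ^ (S.card + Fintype.card (InfinitePlace K)) * 2 ^ (S.card + Fintype.card (InfinitePlace K)) := by
    rw [← h2, ← mul_assoc, ← h1]
  have h9 : S.card + Fintype.card (InfinitePlace K) + (nsp b S + 1) ≤
    (ab M S).card + Fintype.card (InfinitePlace M) + 1 := by
    unfold nsp; omega
  have h10 := Nat.mul_le_mul_left (h.f S).range.index (Nat.pow_le_pow_right (n := 2) two_pos h9)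
  rw [h8, pow_add] at h10
  have hpos : 0 < 2 ^ (S.card + Fintype.card (InfinitePlace K)) := by positivity
  refine Nat.le_of_mul_le_mul_left (le_of_eq_of_le ?_ h10) hpos
  ring

end QE
end QH

namespace QH
set_option linter.unusedSectionVars false
set_option linter.unusedSimpArgs false
open scoped WithZero
open WithZero IsDedekindDomain NumberField Module

universe uu

theorem exists_QExt {K : Type uu} [Field K] [NumberField K] (b : K) (hb : ∀ x : K, x ^ 2 ≠ b) :
    ∃ (M : Type uu) (_ : Field M) (_ : NumberField M) (_ : Algebra K M) (β : M) (σ : M ≃ₐ[K] M),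
      QExt b β σ := by
  have hf : Fact (∀ r : K, r ^ 2 ≠ b + 0 * r) := ⟨fun r => by simpa using hb r⟩
  have hc : CharZero (QuadraticAlgebra K b 0) :=
    charZero_of_injective_algebraMap (algebraMap K (QuadraticAlgebra K b 0)).injective
  have hfin : Module.Finite ℚ (QuadraticAlgebra K b 0) := Module.Finite.trans K _
  have hnf : NumberField (QuadraticAlgebra K b 0) :=
    { to_charZero := hc, to_finiteDimensional := hfin }
  obtain ⟨s, hs⟩ : ∃ s : QuadraticAlgebra K b 0 →ₐ[K] QuadraticAlgebra K b 0,
      s QuadraticAlgebra.omega = - QuadraticAlgebra.omega := by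
    have h1 : (-QuadraticAlgebra.omega : QuadraticAlgebra K b 0) * -QuadraticAlgebra.omega =
        b • 1 + (0 : K) • (-QuadraticAlgebra.omega) := by
      rw [neg_mul_neg, QuadraticAlgebra.omega_mul_omega_eq_add]; simp
    exact ⟨QuadraticAlgebra.lift ⟨_, h1⟩,
      congrArg Subtype.val (QuadraticAlgebra.lift.symm_apply_apply ⟨_, h1⟩)⟩
  have hss : s.comp s = AlgHom.id K _ := by
    apply QuadraticAlgebra.algHom_ext
    change s (s _) = QuadraticAlgebra.omega
    rw [hs, map_neg, hs, neg_neg]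
  refine ⟨QuadraticAlgebra K b 0, inferInstance, hnf, inferInstance, QuadraticAlgebra.omega,
    AlgEquiv.ofAlgHom s s hss hss, ?_, ?_, ?_, hb⟩
  · rw [pow_two, QuadraticAlgebra.omega_mul_omega_eq_mk]; rfl
  · intro z
    refine ⟨z.re, z.im, ?_⟩
    apply QuadraticAlgebra.ext <;> simp
  · exact hs

section
variable {K : Type uu} [Field K] [NumberField K]

theorem thmH {b : Kˣ} (hb : ∀ x : K, x ^ 2 ≠ b) {S : Finset (HeightOneSpectrum (𝓞 K))}
    (hS : Good S) (hbS : b ∈ US S) : (Nm (b : K)).relIndex (US S) ≠ 0 ∧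
      (Nm (b : K)).relIndex (US S) * 2 ^ (nsp b S + 1) ≤
        2 ^ (S.card + Fintype.card (InfinitePlace K)) := by
  obtain ⟨M, _, _, _, β, σ, h⟩ := exists_QExt (b : K) hb
  exact h.H hS hbS

theorem thmG {x : Kˣ} {S : Finset (HeightOneSpectrum (𝓞 K))} (hS : Good S) (hx : x ∈ US S)
    (h1 : ∀ v ∈ S, x ∈ Sq (v.valuation K)) (h2 : ∀ w : InfinitePlace K, x ∈ SqI w) :
    ∃ y : K, y ^ 2 = x := by
  by_contra hc
  push Not at hc
  obtain ⟨h3, h4⟩ := thmH hc hS hx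
  have : nsp x S = S.card + Fintype.card (InfinitePlace K) := by
    unfold nsp
    classical
    rw [Finset.filter_true_of_mem h1, Finset.filter_true_of_mem (fun w _ => h2 w), Finset.card_univ]
  rw [this, pow_succ] at h4
  have h5 : 0 < 2 ^ (S.card + Fintype.card (InfinitePlace K)) := by positivity
  nlinarith [Nat.pos_of_ne_zero h3]

theorem exists_US (S0 : Finset (HeightOneSpectrum (𝓞 K))) (xs : Finset Kˣ) :
    ∃ S, S0 ⊆ S ∧ Good S ∧ ∀ x ∈ xs, x ∈ US S := by
  classical
  obtain ⟨S, h1, h2⟩ := exists_good (S0 ∪ xs.biUnion (fun x => (finite_supp x).toFinset))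
  refine ⟨S, Finset.subset_union_left.trans h1, h2, fun x hx v hv => ?_⟩
  by_contra hc
  apply hv
  apply h1
  apply Finset.mem_union_right
  rw [Finset.mem_biUnion]
  exact ⟨x, hx, by simpa using hc⟩

/-- global square criterion. -/
theorem thmG' {x : Kˣ} (h1 : ∀ v : HeightOneSpectrum (𝓞 K), x ∈ Sq (v.valuation K))
    (h2 : ∀ w : InfinitePlace K, x ∈ SqI w) : ∃ y : K, y ^ 2 = x := by
  obtain ⟨S, -, h3, h4⟩ := exists_US ∅ {x}
  exact thmG h3 (h4 x (by simp)) (fun v _ => h1 v) h2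

theorem exists_prime_notMem (S : Finset (HeightOneSpectrum (𝓞 K))) :
    ∃ v : HeightOneSpectrum (𝓞 K), v ∉ S := by
  obtain ⟨N, hN⟩ : ∃ N : ℕ, N = ∏ v ∈ S, Ideal.absNorm v.asIdeal := ⟨_, rfl⟩
  have hN0 : N ≠ 0 := by
    rw [hN, Finset.prod_ne_zero_iff]
    intro v _
    rw [ne_eq, Ideal.absNorm_eq_zero_iff]
    exact v.ne_bot
  have hm : ∀ v ∈ S, (N : 𝓞 K) ∈ v.asIdeal := by
    intro v hv
    obtain ⟨k, hk⟩ := Finset.dvd_prod_of_mem (fun v : HeightOneSpectrum (𝓞 K) => Ideal.absNorm v.asIdeal) hv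
    rw [hN, hk]
    push_cast
    exact Ideal.mul_mem_right _ _ (Ideal.absNorm_mem _)
  have hnu : ¬ IsUnit ((N + 1 : ℕ) : 𝓞 K) := by
    intro hu
    have h2 := hu.map (Algebra.norm ℤ)
    have e : ((N + 1 : ℕ) : 𝓞 K) = algebraMap ℤ (𝓞 K) ((N + 1 : ℕ) : ℤ) := by simp
    rw [e, Algebra.norm_algebraMap, Int.isUnit_iff_natAbs_eq, Int.natAbs_pow, pow_eq_one_iff] at h2
    rcases h2 with h2 | h2
    · simp only [Int.natAbs_natCast] at h2; omega
    · exact absurd h2 (Module.finrank_pos).ne'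
  obtain ⟨I, hI, hI2⟩ := exists_max_ideal_of_mem_nonunits hnu
  have hI0 : I ≠ ⊥ := by
    rintro rfl
    rw [Ideal.mem_bot] at hI2
    have : (N + 1 : ℕ) = 0 := by exact_mod_cast hI2
    omega
  refine ⟨⟨I, hI.isPrime, hI0⟩, fun hv => ?_⟩
  have h1 := hm _ hv
  apply hI.ne_top
  rw [Ideal.eq_top_iff_one]
  have h2 : ((N + 1 : ℕ) : 𝓞 K) - (N : 𝓞 K) = 1 := by push_cast; ring
  rw [← h2]
  exact Ideal.sub_mem _ hI2 h1

end
end QH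

namespace QH
set_option linter.unusedSectionVars false
set_option linter.unusedSimpArgs false
open scoped WithZero
open WithZero IsDedekindDomain NumberField Module

universe uu
section
variable {K : Type uu} [Field K] [NumberField K]

theorem exists_pos_shift (c : 𝓞 K) : ∃ k : ℕ, ∀ (w : InfinitePlace K) (h : w.IsReal),
    0 < InfinitePlace.embedding_of_isReal h (algebraMap (𝓞 K) K c) + k := by
  have h1 : ∀ w : InfinitePlace K, ∃ k : ℕ, ∀ h : w.IsReal,
      0 < InfinitePlace.embedding_of_isReal h (algebraMap (𝓞 K) K c) + k := by
    intro w
    by_cases h : w.IsReal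
    · obtain ⟨k, hk⟩ := exists_nat_gt (-InfinitePlace.embedding_of_isReal h (algebraMap (𝓞 K) K c))
      exact ⟨k, fun _ => by linarith⟩
    · exact ⟨0, fun h' => absurd h' h⟩
  choose f hf using h1
  refine ⟨∑ w, f w, fun w h => ?_⟩
  have h2 := hf w h
  have h3 : f w ≤ ∑ w, f w := Finset.single_le_sum (fun _ _ => Nat.zero_le _) (Finset.mem_univ w)
  have h4 : (f w : ℝ) ≤ ((∑ w, f w : ℕ) : ℝ) := by exact_mod_cast h3
  linarith

theorem exists_mod (S : Finset (HeightOneSpectrum (𝓞 K))) : ∃ N : ℕ, N ≠ 0 ∧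
    ∀ v ∈ S, (N : 𝓞 K) ∈ v.asIdeal := by
  refine ⟨∏ v ∈ S, Ideal.absNorm v.asIdeal, ?_, ?_⟩
  · rw [Finset.prod_ne_zero_iff]
    intro v _
    rw [ne_eq, Ideal.absNorm_eq_zero_iff]
    exact v.ne_bot
  · intro v hv
    obtain ⟨k, hk⟩ := Finset.dvd_prod_of_mem (fun v : HeightOneSpectrum (𝓞 K) => Ideal.absNorm v.asIdeal) hv
    rw [hk]
    push_cast
    exact Ideal.mul_mem_right _ _ (Ideal.absNorm_mem _)

theorem exists_t (S : Finset (HeightOneSpectrum (𝓞 K))) : ∃ v0 ∉ S, ∃ t : Kˣ, lg v0 t = -1 ∧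
    (∀ v ∈ S, t ∈ Sq (v.valuation K)) ∧ ∀ w : InfinitePlace K, t ∈ SqI w := by
  classical
  obtain ⟨N, hN, hNS⟩ := exists_mod S
  have hm0 : ((4 * N : ℕ) : K) ≠ 0 := by exact_mod_cast (by omega : 4 * N ≠ 0)
  obtain ⟨v0, hv0⟩ := exists_prime_notMem (S ∪ (finite_supp (Units.mk0 _ hm0)).toFinset)
  rw [Finset.mem_union, not_or] at hv0
  obtain ⟨hv0S, hv0m⟩ := hv0
  have hvm : v0.valuation K ((4 * N : ℕ) : K) = 1 := by
    have : lg v0 (Units.mk0 _ hm0) = 0 := by simpa using hv0m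
    rw [lg_zero_iff] at this
    exact this
  obtain ⟨p, hp⟩ := v0.valuation_exists_uniformizer K
  have hp1 : v0.valuation K p < 1 := by rw [hp, ← exp_zero, exp_lt_exp]; omega
  have hx : v0.valuation K ((p - 1) / ((4 * N : ℕ) : K)) ≤ 1 := by
    rw [map_div₀, hvm, div_one]
    exact (Valuation.map_sub _ _ _).trans (max_le hp1.le (by simp))
  obtain ⟨c, hc⟩ := HeightOneSpectrum.exists_valuation_sub_lt_of_integer v0 hx
    (Units.mk0 (exp (-1 : ℤ)) exp_ne_zero)
  obtain ⟨k, hk⟩ := exists_pos_shift c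
  obtain ⟨q, hq⟩ : ∃ q : ℕ, q = Ideal.absNorm v0.asIdeal ^ 2 := ⟨_, rfl⟩
  have hq1 : 1 ≤ q := by
    rw [Nat.one_le_iff_ne_zero, hq]
    apply pow_ne_zero
    rw [ne_eq, Ideal.absNorm_eq_zero_iff]
    exact v0.ne_bot
  have hqv : v0.valuation K (q : K) ≤ exp (-(2 : ℕ) : ℤ) := by
    have := (val_int_le_pow v0 (a := (q : 𝓞 K)) (n := 2)).2 (by
      rw [hq]; push_cast; exact Ideal.pow_mem_pow (Ideal.absNorm_mem _) 2)
    simpa using this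
  obtain ⟨t, ht⟩ : ∃ t : K, t = 1 + ((4 * N : ℕ) : K) * (algebraMap (𝓞 K) K c + k * q) := ⟨_, rfl⟩
  have htv : v0.valuation K t = exp (-1 : ℤ) := by
    have e : t = p + ((4 * N : ℕ) : K) *
        ((algebraMap (𝓞 K) K c - (p - 1) / ((4 * N : ℕ) : K)) + k * q) := by
      rw [ht]; field_simp; ring
    rw [e, Valuation.map_add_eq_of_lt_left, hp]
    rw [map_mul, hvm, one_mul, hp]
    refine Valuation.map_add_lt _ hc ?_
    rw [map_mul]
    have h1 : v0.valuation K (k : K) ≤ 1 := by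
      have := val_int_le v0 (k : 𝓞 K)
      simpa using this
    calc _ ≤ 1 * exp (-(2 : ℕ) : ℤ) := mul_le_mul' h1 hqv
      _ < _ := by rw [one_mul, exp_lt_exp]; norm_num
  have ht0 : t ≠ 0 := by
    rintro rfl
    rw [map_zero] at htv
    exact exp_ne_zero htv.symm
  refine ⟨v0, hv0S, Units.mk0 t ht0, lg_eq_iff.2 htv, ?_, ?_⟩
  · intro v hv
    apply mem_Sq_of_near
    have h1 := (val_int_lt_iff v).2 (hNS v hv)
    have h2 := val_int_le v (c + k * q)
    have e : ((Units.mk0 t ht0 : Kˣ) : K) - 1 = 4 * (algebraMap (𝓞 K) K (N : 𝓞 K) * algebraMap (𝓞 K) K (c + k * q)) := by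
      rw [Units.val_mk0, ht]; simp; ring
    rw [e, map_mul, map_mul]
    have h3 : v.valuation K (algebraMap (𝓞 K) K (N : 𝓞 K)) *
        v.valuation K (algebraMap (𝓞 K) K (c + k * q)) < 1 :=
      lt_of_le_of_lt (mul_le_mul' le_rfl h2) (by rwa [mul_one])
    have h4 := V_four_pos (v.valuation K)
    exact mul_lt_of_lt_one_right h4 h3
  · intro w
    rw [mem_SqI]
    intro h
    have h1 := hk w h
    rw [Units.val_mk0, ht]
    simp only [map_add, map_mul, map_natCast, map_one]
    have hN' : (0 : ℝ) ≤ ((4 * N : ℕ) : ℝ) := by positivity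
    have hq' : (1 : ℝ) ≤ (q : ℝ) := by exact_mod_cast hq1
    have hk0 : (0 : ℝ) ≤ k := by positivity
    have h2 : 0 ≤ InfinitePlace.embedding_of_isReal h (algebraMap (𝓞 K) K c) + k * q := by nlinarith
    nlinarith [mul_nonneg hN' h2]

section
variable {M : Type uu} [Field M] [NumberField M] [Algebra K M]

theorem Sq_up (w : HeightOneSpectrum (𝓞 M)) {x : Kˣ} (hx : x ∈ Sq ((bel K w).valuation K)) :
    Units.map (algebraMap K M : K →* M) x ∈ Sq (w.valuation M) := by
  obtain ⟨y, hy, h⟩ := hx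
  refine ⟨algebraMap K M y, by simpa using hy, ?_⟩
  have := val_bel_mono w h
  have e4 : algebraMap K M 4 = 4 := map_ofNat _ 4
  rw [e4] at this
  simpa using this

theorem SqI_up (w : InfinitePlace M) {x : Kˣ} (hx : x ∈ SqI (w.comap (algebraMap K M))) :
    Units.map (algebraMap K M : K →* M) x ∈ SqI w := by
  rw [mem_SqI] at hx ⊢
  intro h
  have h1 := h.comap (algebraMap K M)
  have h2 := hx h1
  have e : InfinitePlace.embedding_of_isReal h (algebraMap K M x) =
      InfinitePlace.embedding_of_isReal h1 (x : K) := by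
    apply Complex.ofReal_injective
    rw [InfinitePlace.embedding_of_isReal_apply, InfinitePlace.embedding_of_isReal_apply,
      InfinitePlace.comap_embedding_of_isReal _ h1]
    rfl
  simp only [Units.coe_map, MonoidHom.coe_coe]
  rw [e]; exact h2

end

theorem sq_mem_SqI (w : InfinitePlace K) (x : Kˣ) : x ^ 2 ∈ SqI w := by
  rw [mem_SqI]
  intro h
  rw [Units.val_pow_eq_pow_val, map_pow]
  have : InfinitePlace.embedding_of_isReal h (x : K) ≠ 0 := by simp
  positivity

/-- Lemma C. -/
theorem lemC {x : Kˣ} (hx : ∀ y : K, y ^ 2 ≠ x) (S : Finset (HeightOneSpectrum (𝓞 K))) :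
    ∃ v ∉ S, x ∉ Sq (v.valuation K) := by
  classical
  by_contra hcon
  push Not at hcon
  obtain ⟨v0, hv0, t, hlt, htS, htI⟩ := exists_t (S ∪ (finite_supp x).toFinset)
  rw [Finset.mem_union, not_or] at hv0
  have hvx : lg v0 x = 0 := by simpa using hv0.2
  have hns : ∀ (y z : K), z ≠ 0 → y ^ 2 = x * t * z ^ 2 → False := by
    intro y z hz e
    have hy : y ≠ 0 := by
      rintro rfl
      have : (x : K) * t * z ^ 2 ≠ 0 := by simp [hz]
      exact this (by rw [← e]; simp)
    have e' : (Units.mk0 y hy) ^ 2 = x * t * (Units.mk0 z hz) ^ 2 := by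
      ext; simpa using e
    have := congrArg (lg v0) e'
    rw [lg_mul, lg_mul, lg_pow, lg_pow, hvx, hlt] at this
    push_cast at this
    omega
  obtain ⟨M, _, _, _, β, σ, h⟩ := exists_QExt ((x * t : Kˣ) : K)
    (fun y e => hns y 1 one_ne_zero (by simpa using e))
  have hβ := h.ne
  have hxt : Units.map (algebraMap K M : K →* M) x =
      (Units.mk0 β hβ) ^ 2 * (Units.map (algebraMap K M : K →* M) t)⁻¹ := by
    rw [eq_mul_inv_iff_mul_eq, ← map_mul]
    ext
    simpa using h.sq.symm
  obtain ⟨y, hy⟩ := thmG' (x := Units.map (algebraMap K M : K →* M) x) (by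
    intro w
    by_cases hw : bel K w ∈ S
    · rw [hxt]
      exact mul_mem (sq_mem_Sq _) (inv_mem (Sq_up w (htS _ (Finset.mem_union_left _ hw))))
    · exact Sq_up w (hcon _ hw)) (by
    intro w
    rw [hxt]
    exact mul_mem (sq_mem_SqI _ _) (inv_mem (SqI_up w (htI _))))
  obtain ⟨p, q, rfl⟩ := h.gen y
  have e : algebraMap K M (p ^ 2 + q ^ 2 * (x * t) - x) + algebraMap K M (2 * p * q) * β = 0 := by
    have h1 := h.sq
    simp only [Units.coe_map, MonoidHom.coe_coe, Units.val_mul, map_mul] at hy h1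
    simp only [map_add, map_sub, map_mul, map_pow, map_ofNat]
    linear_combination hy - (algebraMap K M q) ^ 2 * h1
  obtain ⟨e1, e2⟩ := h.unique e
  have hpq : p = 0 ∨ q = 0 := by simpa using e2
  rcases hpq with rfl | rfl
  · have hq : q ≠ 0 := by
      rintro rfl
      have : (x : K) = 0 := by linear_combination -e1
      exact x.ne_zero this
    have e3 : (x : K) * (1 - q ^ 2 * t) = 0 := by linear_combination -e1
    rcases mul_eq_zero.1 e3 with e4 | e4
    · exact x.ne_zero e4
    · have e5 : (Units.mk0 q hq) ^ 2 * t = 1 := by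
        ext; simp; linear_combination -e4
      have := congrArg (lg v0) e5
      rw [lg_mul, lg_pow, lg_one, hlt] at this
      push_cast at this
      omega
  · exact hx p (by linear_combination e1)

end
end QH

namespace QH
set_option linter.unusedSectionVars false
set_option linter.unusedSimpArgs false
open scoped WithZero
open WithZero IsDedekindDomain NumberField Module

theorem index_le_two {G : Type*} [CommGroup G] (H : Subgroup G) (a : G)
    (h : ∀ x, x ∈ H ∨ a * x ∈ H) : H.index ≠ 0 ∧ H.index ≤ 2 := by
  have hs : Function.Surjective (fun b : Bool => (QuotientGroup.mk (if b then 1 else a⁻¹) : G ⧸ H)) := by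
    intro y
    obtain ⟨x, rfl⟩ := QuotientGroup.mk_surjective y
    rcases h x with h | h
    · refine ⟨true, ?_⟩
      rw [QuotientGroup.eq]; simpa using h
    · refine ⟨false, ?_⟩
      rw [QuotientGroup.eq]; simpa using h
  have hf : Finite (G ⧸ H) := Finite.of_surjective _ hs
  refine ⟨Subgroup.index_ne_zero_of_finite, ?_⟩
  have := Nat.card_le_card_of_surjective _ hs
  simpa [Subgroup.index] using this

theorem mul_mem_of_relIndex_le_two {G : Type*} [CommGroup G] {H E : Subgroup G}
    (h0 : H.relIndex E ≠ 0) (h2 : H.relIndex E ≤ 2) {x y : G} (hx : x ∈ E) (hy : y ∈ E)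
    (hxH : x ∉ H) (hyH : y ∉ H) : x * y ∈ H := by
  have h3 : H.relIndex E = 1 ∨ H.relIndex E = 2 := by omega
  rcases h3 with h3 | h3
  · exact absurd ((Subgroup.relIndex_eq_one.1 h3) hx) hxH
  · have h4 : (H.subgroupOf E).index = 2 := h3
    have := (Subgroup.mul_mem_iff_of_index_two h4 (a := ⟨x, hx⟩) (b := ⟨y, hy⟩)).2 (by
      simp [Subgroup.mem_subgroupOf, hxH, hyH])
    simpa [Subgroup.mem_subgroupOf] using this

theorem dual_index {G ι : Type*} [CommGroup G] [DecidableEq ι] (U J : Subgroup G)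
    (N : ι → Subgroup G) (g : ι → G) (X : Finset ι) (hJ : ∀ i ∈ X, J ≤ N i)
    (hU : ∀ i ∈ X, g i ∈ U) (hn : ∀ i ∈ X, g i ∉ N i)
    (hd : ∀ i ∈ X, ∀ j ∈ X, i ≠ j → g i ∈ N j) (h0 : J.relIndex U ≠ 0) :
    2 ^ X.card ≤ J.relIndex U := by
  have hP : ∀ T : {T // T ∈ X.powerset}, ∏ i ∈ T.1, g i ∈ U := fun T =>
    prod_mem (fun i hi => hU i (Finset.mem_powerset.1 T.2 hi))
  have key : ∀ T T' : Finset ι, T ⊆ X → T' ⊆ X → (∏ i ∈ T, g i)⁻¹ * ∏ i ∈ T', g i ∈ J →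
      T ⊆ T' := by
    intro T T' hT hT' h i hi
    by_contra hi'
    have h1 := hJ i (hT hi) h
    have h2 : ∏ j ∈ T', g j ∈ N i := prod_mem (fun j hj => hd j (hT' hj) i (hT hi) (by
      rintro rfl; exact hi' hj))
    have h3 : ∏ j ∈ T.erase i, g j ∈ N i := prod_mem (fun j hj =>
      hd j (hT (Finset.mem_of_mem_erase hj)) i (hT hi) (Finset.ne_of_mem_erase hj))
    rw [Subgroup.mul_mem_cancel_right _ h2, inv_mem_iff, ← Finset.mul_prod_erase T g hi,
      Subgroup.mul_mem_cancel_right _ h3] at h1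
    exact hn i (hT hi) h1
  have hf : Finite (U ⧸ J.subgroupOf U) := by
    have : (J.subgroupOf U).FiniteIndex := ⟨h0⟩
    exact Subgroup.finite_quotient_of_finiteIndex
  have hinj : Function.Injective (fun T : {T // T ∈ X.powerset} =>
      (QuotientGroup.mk ⟨_, hP T⟩ : U ⧸ J.subgroupOf U)) := by
    intro T T' e
    have h1 := QuotientGroup.eq.1 e
    have h2 := QuotientGroup.eq.1 e.symm
    rw [Subgroup.mem_subgroupOf] at h1 h2
    have hT := Finset.mem_powerset.1 T.2
    have hT' := Finset.mem_powerset.1 T'.2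
    exact Subtype.ext (Finset.Subset.antisymm (key _ _ hT hT' (by simpa using h1))
      (key _ _ hT' hT (by simpa using h2)))
  have := Nat.card_le_card_of_injective _ hinj
  rw [Nat.card_eq_fintype_card, Fintype.card_coe, Finset.card_powerset] at this
  exact this

universe uu
section
variable {K : Type uu} [Field K] [NumberField K]

theorem mem_Ev_of_lg {v : HeightOneSpectrum (𝓞 K)} {x : Kˣ} (h : lg v x = 0) :
    x ∈ Ev (v.valuation K) := ⟨1, by rw [lg_zero_iff] at h; simp [h]⟩

theorem US_le_Ev {S : Finset (HeightOneSpectrum (𝓞 K))} {v : HeightOneSpectrum (𝓞 K)} (hv : v ∉ S) :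
    US S ≤ Ev (v.valuation K) := fun _ hx => mem_Ev_of_lg (hx v hv)

theorem relIndex_le_two (v : HeightOneSpectrum (𝓞 K)) (h2 : v.valuation K 2 = 1) :
    (Sq (v.valuation K)).relIndex (Ev (v.valuation K)) ≤ 2 := by
  have := (relIndex_Sq_Ev v).2
  rwa [ev_eq_zero v h2, pow_zero, mul_one] at this

theorem sq_mul_mem {v : HeightOneSpectrum (𝓞 K)} (h2 : v.valuation K 2 = 1) {x y : Kˣ}
    (hx : x ∈ Ev (v.valuation K)) (hy : y ∈ Ev (v.valuation K)) (hxH : x ∉ Sq (v.valuation K))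
    (hyH : y ∉ Sq (v.valuation K)) : x * y ∈ Sq (v.valuation K) :=
  mul_mem_of_relIndex_le_two (relIndex_Sq_Ev v).1 (relIndex_le_two v h2) hx hy hxH hyH

theorem lemC' {a x : Kˣ} (ha : ∀ y : K, y ^ 2 ≠ a) (hx : ∀ y : K, y ^ 2 ≠ x)
    (hax : ∀ y : K, y ^ 2 ≠ a * x) (S0 : Finset (HeightOneSpectrum (𝓞 K))) :
    ∃ v ∉ S0, a ∈ Sq (v.valuation K) ∧ x ∉ Sq (v.valuation K) := by
  classical
  obtain ⟨S, hS0, hS, hm⟩ := exists_US S0 {a, x}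
  have haS := hm a (by simp)
  have hxS := hm x (by simp)
  obtain ⟨M, _, _, _, β, σ, h⟩ := exists_QExt (a : K) ha
  have hβ := h.ne
  obtain ⟨w, hw, hwx⟩ := lemC (x := Units.map (algebraMap K M : K →* M) x) (by
    intro y hy
    obtain ⟨p, q, rfl⟩ := h.gen y
    have e : algebraMap K M (p ^ 2 + q ^ 2 * a - x) + algebraMap K M (2 * p * q) * β = 0 := by
      have h1 := h.sq
      simp only [Units.coe_map, MonoidHom.coe_coe] at hy
      simp only [map_add, map_sub, map_mul, map_pow, map_ofNat]
      linear_combination hy - (algebraMap K M q) ^ 2 * h1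
    obtain ⟨e1, e2⟩ := h.unique e
    have hpq : p = 0 ∨ q = 0 := by simpa using e2
    rcases hpq with rfl | rfl
    · exact hax (a * q) (by linear_combination (a : K) * e1)
    · exact hx p (by linear_combination e1)) (ab M S)
  rw [mem_ab] at hw
  have hxv : x ∉ Sq ((bel K w).valuation K) := fun h' => hwx (Sq_up w h')
  refine ⟨bel K w, fun h' => hw (hS0 h'), ?_, hxv⟩
  by_contra hav
  have h1 := Sq_up w (sq_mul_mem (hS.two _ hw) (US_le_Ev hw haS) (US_le_Ev hw hxS) hav hxv)
  rw [map_mul] at h1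
  have h2 : Units.map (algebraMap K M : K →* M) a = (Units.mk0 β hβ) ^ 2 := by
    ext; simpa using h.sq.symm
  rw [h2, Subgroup.mul_mem_cancel_left _ (sq_mem_Sq _)] at h1
  exact hwx h1

structure DSys (S X : Finset (HeightOneSpectrum (𝓞 K))) (a : Kˣ)
    (u : HeightOneSpectrum (𝓞 K) → Kˣ) : Prop where
  disj : ∀ p ∈ X, p ∉ S
  sqa : ∀ p ∈ X, a ∈ Sq (p.valuation K)
  mem : ∀ p ∈ X, u p ∈ US S
  nsq : ∀ p ∈ X, u p ∉ Sq (p.valuation K)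
  sq : ∀ p ∈ X, ∀ q ∈ X, p ≠ q → u p ∈ Sq (q.valuation K)

theorem DSys.extend {S X : Finset (HeightOneSpectrum (𝓞 K))} {a : Kˣ}
    {u : HeightOneSpectrum (𝓞 K) → Kˣ} (h : DSys S X a u) (hS : Good S)
    (ha : ∀ y : K, y ^ 2 ≠ a) {x : Kˣ} (hxS : x ∈ US S) (hxX : ∀ p ∈ X, x ∈ Sq (p.valuation K))
    (hx : ∀ y : K, y ^ 2 ≠ x) (hax : ∀ y : K, y ^ 2 ≠ a * x) :
    ∃ X' u', DSys S X' a u' ∧ X'.card = X.card + 1 := by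
  classical
  obtain ⟨p0, hp0, hap, hxp⟩ := lemC' ha hx hax (S ∪ X)
  rw [Finset.mem_union, not_or] at hp0
  obtain ⟨hp0S, hp0X⟩ := hp0
  refine ⟨insert p0 X, fun p => if p = p0 then x else if u p ∈ Sq (p0.valuation K) then u p else u p * x,
    ⟨?_, ?_, ?_, ?_, ?_⟩, Finset.card_insert_of_notMem hp0X⟩
  · intro p hp
    rcases Finset.mem_insert.1 hp with rfl | hp
    · exact hp0S
    · exact h.disj p hp
  · intro p hp
    rcases Finset.mem_insert.1 hp with rfl | hp
    · exact hap
    · exact h.sqa p hp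
  · intro p hp
    rcases Finset.mem_insert.1 hp with rfl | hp
    · simpa using hxS
    · split_ifs
      · exact hxS
      · exact h.mem p hp
      · exact mul_mem (h.mem p hp) hxS
  · intro p hp
    rcases Finset.mem_insert.1 hp with rfl | hp
    · simpa using hxp
    · have hne : p ≠ p0 := fun e => hp0X (e ▸ hp)
      rw [if_neg hne]
      split_ifs
      · exact h.nsq p hp
      · rw [Subgroup.mul_mem_cancel_right _ (hxX p hp)]
        exact h.nsq p hp
  · intro p hp1 q hq1 hpq
    rcases Finset.mem_insert.1 hp1 with rfl | hp
    · rw [if_pos rfl]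
      rcases Finset.mem_insert.1 hq1 with rfl | hq
      · exact absurd rfl hpq
      · exact hxX q hq
    · have hne : p ≠ p0 := fun e => hp0X (e ▸ hp)
      rw [if_neg hne]
      rcases Finset.mem_insert.1 hq1 with rfl | hq
      · split_ifs with hu
        · exact hu
        · exact sq_mul_mem (hS.two _ hp0S) (US_le_Ev hp0S (h.mem p hp)) (US_le_Ev hp0S hxS) hu hxp
      · split_ifs with hu
        · exact h.sq p hp q hq hpq
        · exact mul_mem (h.sq p hp q hq hpq) (hxX q hq)

/-- squares of S-units. -/
def SqU (S : Finset (HeightOneSpectrum (𝓞 K))) : Subgroup Kˣ := (US S).map (powMonoidHom 2)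

theorem mem_SqU {S : Finset (HeightOneSpectrum (𝓞 K))} {x : Kˣ} (hx : x ∈ US S)
    {y : K} (hy : y ^ 2 = x) : x ∈ SqU S := by
  have hy0 : y ≠ 0 := by
    rintro rfl
    exact x.ne_zero (by rw [← hy]; simp)
  have e : (Units.mk0 y hy0) ^ 2 = x := by ext; simpa using hy
  refine ⟨Units.mk0 y hy0, fun v hv => ?_, e⟩
  have := hx v hv
  rw [← e, lg_pow] at this
  push_cast at this
  omega

theorem SqU_le_US (S : Finset (HeightOneSpectrum (𝓞 K))) : SqU S ≤ US S := by
  rintro _ ⟨y, hy, rfl⟩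
  exact pow_mem hy 2

theorem SqU_le_Sq (S : Finset (HeightOneSpectrum (𝓞 K))) (v : HeightOneSpectrum (𝓞 K)) :
    SqU S ≤ Sq (v.valuation K) := by
  rintro _ ⟨y, hy, rfl⟩
  exact sq_mem_Sq _

theorem relIndex_SqU (S : Finset (HeightOneSpectrum (𝓞 K))) :
    (SqU S).relIndex (US S) = 2 ^ (S.card + Fintype.card (InfinitePlace K)) := by
  rw [← index_sq_US, Subgroup.relIndex]
  congr 1
  ext x
  rw [Subgroup.mem_subgroupOf]
  constructor
  · rintro ⟨y, hy, e⟩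
    exact ⟨⟨y, hy⟩, Subtype.ext e⟩
  · rintro ⟨y, rfl⟩
    exact ⟨y, y.2, rfl⟩

theorem DSys.card_le {S X : Finset (HeightOneSpectrum (𝓞 K))} {a : Kˣ}
    {u : HeightOneSpectrum (𝓞 K) → Kˣ} (h : DSys S X a u) :
    X.card ≤ S.card + Fintype.card (InfinitePlace K) := by
  classical
  have h1 := dual_index (US S) (SqU S) (fun p => Sq (p.valuation K)) u X
    (fun p _ => SqU_le_Sq S p) h.mem h.nsq h.sq (by rw [relIndex_SqU]; positivity)
  rw [relIndex_SqU] at h1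
  exact (Nat.pow_le_pow_iff_right (by norm_num)).1 h1

theorem DSys.le_card {S X : Finset (HeightOneSpectrum (𝓞 K))} {a : Kˣ} (haS : a ∈ US S)
    {u : HeightOneSpectrum (𝓞 K) → Kˣ} (h : DSys S X a u) (hS : Good S)
    (hmax : ∀ x ∈ US S, (∀ p ∈ X, x ∈ Sq (p.valuation K)) →
      (∃ y : K, y ^ 2 = x) ∨ ∃ y : K, y ^ 2 = a * x) :
    S.card + Fintype.card (InfinitePlace K) ≤ X.card + 1 := by
  classical
  obtain ⟨J, hJ⟩ : ∃ J : Subgroup Kˣ, J = US S ⊓ ⨅ p : X, Sq (p.1.valuation K) := ⟨_, rfl⟩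
  have hJU : J ≤ US S := by rw [hJ]; exact inf_le_left
  have hSJ : SqU S ≤ J := by
    rw [hJ]
    exact le_inf (SqU_le_US S) (le_iInf fun p => SqU_le_Sq S p)
  have h1 : J.relIndex (US S) ≤ 2 ^ X.card := by
    rw [hJ, Subgroup.inf_relIndex_left]
    refine (Subgroup.relIndex_iInf_le _).trans ?_
    rw [show 2 ^ X.card = ∏ p : X, 2 by simp]
    apply Finset.prod_le_prod' 
    intro p _
    have hp := h.disj p p.2
    exact (Subgroup.relIndex_le_of_le_right (US_le_Ev hp) (relIndex_Sq_Ev p.1).1).trans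
      (relIndex_le_two _ (hS.two _ hp))
  have haJ : a ∈ J := by
    rw [hJ]
    exact ⟨haS, Subgroup.mem_iInf.2 fun p => h.sqa p p.2⟩
  have h2 : (SqU S).relIndex J ≤ 2 := by
    refine (index_le_two ((SqU S).subgroupOf J) ⟨a, haJ⟩ ?_).2
    rintro ⟨x, hx⟩
    have hx' := hx
    rw [hJ] at hx'
    have hxX : ∀ p ∈ X, x ∈ Sq (p.valuation K) := fun p hp =>
      (Subgroup.mem_iInf.1 hx'.2) ⟨p, hp⟩
    rcases hmax x hx'.1 hxX with ⟨y, hy⟩ | ⟨y, hy⟩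
    · left
      rw [Subgroup.mem_subgroupOf]
      exact mem_SqU hx'.1 hy
    · right
      rw [Subgroup.mem_subgroupOf]
      exact mem_SqU (x := a * x) (mul_mem haS hx'.1) (by simpa using hy)
  have h3 := Subgroup.relIndex_mul_relIndex _ _ _ hSJ hJU
  rw [relIndex_SqU] at h3
  rw [← Nat.pow_le_pow_iff_right (a := 2) (by norm_num), ← h3, pow_succ, mul_comm]
  exact Nat.mul_le_mul h1 h2

theorem exists_DSys {S : Finset (HeightOneSpectrum (𝓞 K))} (hS : Good S) {a : Kˣ} (haS : a ∈ US S)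
    (ha : ∀ y : K, y ^ 2 ≠ a) : ∃ X u, DSys S X a u ∧
    S.card + Fintype.card (InfinitePlace K) ≤ X.card + 1 := by
  classical
  have hex : ∃ n : ℕ, ∃ m : ℕ, m + n = S.card + Fintype.card (InfinitePlace K) ∧
      ∃ X u, DSys S X a u ∧ X.card = m := by
    refine ⟨S.card + Fintype.card (InfinitePlace K), 0, by simp, ∅, fun _ => 1,
      ⟨?_, ?_, ?_, ?_, ?_⟩, rfl⟩ <;> simp
  obtain ⟨m, hm, X, u, h, hX⟩ := Nat.find_spec hex
  refine ⟨X, u, h, h.le_card haS hS ?_⟩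
  intro x hxS hxX
  by_contra hc
  push Not at hc
  obtain ⟨X', u', h', hX'⟩ := h.extend hS ha hxS hxX hc.1 hc.2
  have hle := h'.card_le
  refine Nat.find_min hex (m := S.card + Fintype.card (InfinitePlace K) - X'.card) ?_
    ⟨X'.card, by omega, X', u', h', rfl⟩
  omega

end
end QH

namespace QH
set_option linter.unusedSectionVars false
set_option linter.unusedSimpArgs false
open scoped WithZero
open WithZero IsDedekindDomain NumberField Module

universe uu
section
variable {K : Type uu} [Field K] [NumberField K]
variable {S X : Finset (HeightOneSpectrum (𝓞 K))} {a : Kˣ} {u : HeightOneSpectrum (𝓞 K) → Kˣ}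

open Classical in
theorem DSys.exists_pi (h : DSys S X a u) (hS : Good S) {p : HeightOneSpectrum (𝓞 K)} (hp : p ∈ X) :
    ∃ π : Kˣ, π ∈ US (S ∪ X) ∧ lg p π = -1 ∧ ∀ q ∈ X, q ≠ p → π ∈ Sq (q.valuation K) := by
  obtain ⟨π, h1, h2⟩ := hS.pi p (h.disj p hp)
  obtain ⟨F, hF⟩ : ∃ F : Finset (HeightOneSpectrum (𝓞 K)),
    F = X.filter (fun q => q ≠ p ∧ π ∉ Sq (q.valuation K)) := ⟨_, rfl⟩
  have hFX : F ⊆ X := by rw [hF]; exact Finset.filter_subset _ _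
  have hpr : ∏ q ∈ F, u q ∈ US S := prod_mem fun q hq => h.mem q (hFX hq)
  refine ⟨π * ∏ q ∈ F, u q, mul_mem ?_ (US_mono Finset.subset_union_left hpr), ?_, ?_⟩
  · intro v hv
    rw [Finset.mem_union, not_or] at hv
    exact h2 v hv.1 (by rintro rfl; exact hv.2 hp)
  · rw [lg_mul, h1, hpr p (h.disj p hp), add_zero]
  · intro q hq hqp
    by_cases hc : π ∈ Sq (q.valuation K)
    · refine mul_mem hc (prod_mem fun r hr => h.sq r (hFX hr) q hq ?_)
      rintro rfl
      rw [hF, Finset.mem_filter] at hr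
      exact hr.2.2 hc
    · have hqF : q ∈ F := by rw [hF, Finset.mem_filter]; exact ⟨hq, hqp, hc⟩
      have hqS := h.disj q hq
      rw [← Finset.mul_prod_erase F u hqF, ← mul_assoc]
      refine mul_mem (sq_mul_mem (hS.two _ hqS) (mem_Ev_of_lg (h2 q hqS hqp))
        (US_le_Ev hqS (h.mem q hq)) hc (h.nsq q hq)) (prod_mem fun r hr => h.sq r
          (hFX (Finset.mem_of_mem_erase hr)) q hq (Finset.ne_of_mem_erase hr))

open Classical in
theorem DSys.rep (h : DSys S X a u) (hS : Good S) {p : HeightOneSpectrum (𝓞 K)} (hp : p ∈ X)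
    (x : Kˣ) : ∃ g ∈ US (S ∪ X), x * g ∈ Sq (p.valuation K) ∧
      ∀ q ∈ X, q ≠ p → g ∈ Sq (q.valuation K) := by
  obtain ⟨π, h1, h2, h3⟩ := h.exists_pi hS hp
  have hπ : π ∉ Ev (p.valuation K) := notMem_Ev (k := -1) (by rw [← exp_lg, h2]; norm_num)
  obtain ⟨g, hg1, hg2, hg3⟩ : ∃ g ∈ US (S ∪ X), x * g ∈ Ev (p.valuation K) ∧
      ∀ q ∈ X, q ≠ p → g ∈ Sq (q.valuation K) := by
    by_cases hx : x ∈ Ev (p.valuation K)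
    · exact ⟨1, one_mem _, by simpa using hx, fun q _ _ => one_mem _⟩
    · refine ⟨π, h1, ?_, h3⟩
      rw [Subgroup.mul_mem_iff_of_index_two (Ev_index p)]
      simp [hx, hπ]
  by_cases hx : x * g ∈ Sq (p.valuation K)
  · exact ⟨g, hg1, hx, hg3⟩
  · refine ⟨g * u p, mul_mem hg1 (US_mono Finset.subset_union_left (h.mem p hp)), ?_, ?_⟩
    · rw [← mul_assoc]
      have hpS := h.disj p hp
      exact sq_mul_mem (hS.two _ hpS) hg2 (US_le_Ev hpS (h.mem p hp)) hx (h.nsq p hp)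
    · intro q hq hqp
      exact mul_mem (hg3 q hq hqp) (h.sq p hp q hq hqp.symm)

theorem arith1 {A B r : ℕ} (hA : 0 < A) (hB : 0 < B) (h : B ≤ r) (h4 : r * (A * 2) ≤ B * A) : False := by
  have h1 : B * A ≤ r * A := Nat.mul_le_mul_right _ h
  have h2 : 0 < B * A := Nat.mul_pos hB hA
  have h3 : r * (A * 2) = r * A + r * A := by ring
  omega

open Classical in
theorem nsp_split {b : Kˣ} (hd : Disjoint S X) (h1 : ∀ v ∈ S, b ∈ Sq (v.valuation K))
    (h2 : ∀ w : InfinitePlace K, b ∈ SqI w) :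
    nsp b (S ∪ X) + (X.filter (fun q => b ∉ Sq (q.valuation K))).card =
      (S ∪ X).card + Fintype.card (InfinitePlace K) := by
  obtain ⟨A, hA⟩ : ∃ A, A = X.filter (fun v => b ∈ Sq (v.valuation K)) := ⟨_, rfl⟩
  have e1 : Finset.univ.filter (fun w : InfinitePlace K => b ∈ SqI w) = Finset.univ :=
    Finset.filter_true_of_mem (fun w _ => h2 w)
  have e2 : (S ∪ X).filter (fun v => b ∈ Sq (v.valuation K)) = S ∪ A := by
    rw [Finset.filter_union, Finset.filter_true_of_mem h1, hA]
  have e3 := Finset.card_filter_add_card_filter_not (s := X) (fun v => b ∈ Sq (v.valuation K))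
  rw [← hA] at e3
  have e4 : (S ∪ A).card = S.card + A.card :=
    Finset.card_union_of_disjoint (hd.mono_right (by rw [hA]; exact Finset.filter_subset _ _))
  have e6 : nsp b (S ∪ X) = (S ∪ A).card + Fintype.card (InfinitePlace K) := by
    unfold nsp
    rw [e1, ← e2, Finset.card_univ]
  rw [e6, e4, Finset.card_union_of_disjoint hd]
  omega

open Classical in
theorem DSys.lowerA (h : DSys S X a u) (hS : Good S) {b : Kˣ} {p : HeightOneSpectrum (𝓞 K)}
    (hp : p ∈ X) (hpb : b ∉ Sq (p.valuation K)) :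
    ∃ g : Kˣ, g ∈ US (S ∪ X) ∧
      g ∉ Sq (p.valuation K) ⊔ Nm (b : K) ∧ ∀ q ∈ X, q ≠ p → g ∈ Sq (q.valuation K) := by
  obtain ⟨x, hx⟩ := nondeg (loc_v p) hpb
  obtain ⟨g, hg1, hg2, hg3⟩ := h.rep hS hp x
  refine ⟨g, hg1, fun hgn => hx ?_, hg3⟩
  rw [← Subgroup.mul_mem_cancel_right _ hgn]
  exact Subgroup.mem_sup_left hg2

open Classical in
theorem DSys.lowerB (h : DSys S X a u) (hS : Good S) {b : Kˣ}
    (h3 : (Nm (b : K)).relIndex (US (S ∪ X)) ≠ 0) (R : Finset (HeightOneSpectrum (𝓞 K)))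
    (hR : R = X.filter (fun q => b ∉ Sq (q.valuation K))) :
    2 ^ R.card ≤ (Nm (b : K)).relIndex (US (S ∪ X)) := by
  have hg : ∀ p : HeightOneSpectrum (𝓞 K), ∃ g : Kˣ, p ∈ R → g ∈ US (S ∪ X) ∧
      g ∉ Sq (p.valuation K) ⊔ Nm (b : K) ∧ ∀ q ∈ X, q ≠ p → g ∈ Sq (q.valuation K) := by
    intro p
    by_cases hp : p ∈ R
    · rw [hR, Finset.mem_filter] at hp
      obtain ⟨g, hg⟩ := h.lowerA hS hp.1 hp.2
      exact ⟨g, fun _ => hg⟩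
    · exact ⟨1, fun h' => absurd h' hp⟩
  choose g hg using hg
  have hRX : R ⊆ X := by rw [hR]; exact Finset.filter_subset _ _
  obtain ⟨N, hN⟩ : ∃ N : HeightOneSpectrum (𝓞 K) → Subgroup Kˣ,
      ∀ p, N p = Sq (p.valuation K) ⊔ Nm (b : K) := ⟨_, fun _ => rfl⟩
  have a1 : ∀ p ∈ R, Nm (b : K) ≤ N p := fun p _ => by rw [hN]; exact le_sup_right
  have a2 : ∀ p ∈ R, g p ∈ US (S ∪ X) := fun p hp => (hg p hp).1
  have a3 : ∀ p ∈ R, g p ∉ N p := fun p hp => by rw [hN]; exact (hg p hp).2.1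
  have a4 : ∀ p ∈ R, ∀ q ∈ R, p ≠ q → g p ∈ N q := fun p hp q hq hpq => by
    rw [hN]; exact Subgroup.mem_sup_left ((hg p hp).2.2 q (hRX hq) hpq.symm)
  exact dual_index _ _ N g R a1 a2 a3 a4 h3

open Classical in
theorem DSys.inj (h : DSys S X a u) (hS : Good S) {b : Kˣ} (hb : b ∈ US (S ∪ X))
    (h1 : ∀ v ∈ S, b ∈ Sq (v.valuation K)) (h2 : ∀ w : InfinitePlace K, b ∈ SqI w) :
    ∃ y : K, y ^ 2 = b := by
  by_contra hc
  push Not at hc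
  obtain ⟨h3, h4⟩ := thmH hc (hS.mono Finset.subset_union_left) hb
  have hd : Disjoint S X := by
    rw [Finset.disjoint_right]; exact h.disj
  obtain ⟨R, hR⟩ : ∃ R : Finset (HeightOneSpectrum (𝓞 K)),
    R = X.filter (fun q => b ∉ Sq (q.valuation K)) := ⟨_, rfl⟩
  have hn := nsp_split hd h1 h2
  rw [← hR] at hn
  have h5 := h.lowerB hS (b := b) h3 R hR
  rw [← hn, pow_add, pow_add, pow_one, mul_comm _ (2 ^ R.card)] at h4
  exact arith1 (by positivity) (by positivity) h5 h4

end
end QH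

namespace QH
set_option linter.unusedSectionVars false
set_option linter.unusedSimpArgs false
open scoped WithZero
open WithZero IsDedekindDomain NumberField Module

section
variable {G ι : Type*} [CommGroup G] [Fintype ι]

theorem count_aux (Q : ι → Subgroup G) (R : ι → Subgroup G) (hQR : ∀ i, Q i ≤ R i)
    (U : Subgroup G) (T : Finset ι) {c : ℕ} (hQ : ∀ i, (Q i).index ≠ 0)
    (hprod : ∏ i, (Q i).index ≤ 2 * c) (hc : c ≤ (⨅ i, Q i).relIndex U) :
    ∏ i ∈ T, (R i).index ≤ 2 * (⨅ i : T, R i).relIndex U := by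
  classical
  have hfin : ∀ i, Finite (G ⧸ Q i) := fun i => by
    have : (Q i).FiniteIndex := ⟨hQ i⟩
    exact Subgroup.finite_quotient_of_finiteIndex
  obtain ⟨ψ, hψ⟩ : ∃ ψ : G →* (∀ i, G ⧸ Q i), ∀ x i, ψ x i = QuotientGroup.mk x :=
    ⟨MonoidHom.pi (fun i => QuotientGroup.mk' (Q i)), fun _ _ => rfl⟩
  obtain ⟨θ, hθ⟩ : ∃ θ : (∀ i, G ⧸ Q i) →* (∀ i : T, G ⧸ R i),
      ∀ y i, θ y i = QuotientGroup.map (Q i) (R i) (MonoidHom.id G) (hQR i) (y i) :=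
    ⟨MonoidHom.pi (fun i : T => (QuotientGroup.map (Q i) (R i) (MonoidHom.id G) (hQR i)).comp
      (Pi.evalMonoidHom _ (i : ι))), fun _ _ => rfl⟩
  have hθs : Function.Surjective θ := by
    intro z
    have h1 : ∀ i : ι, ∃ y : G, ∀ h : i ∈ T, QuotientGroup.mk y = z ⟨i, h⟩ := by
      intro i
      by_cases h : i ∈ T
      · obtain ⟨y, hy⟩ := QuotientGroup.mk_surjective (z ⟨i, h⟩)
        exact ⟨y, fun _ => hy⟩
      · exact ⟨1, fun h' => absurd h' h⟩
    choose y hy using h1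
    refine ⟨fun i => QuotientGroup.mk (y i), ?_⟩
    funext i
    rw [hθ]
    exact hy i i.2
  have hk1 : ψ.ker = ⨅ i, Q i := by
    ext x
    rw [MonoidHom.mem_ker, Subgroup.mem_iInf, funext_iff]
    refine forall_congr' fun i => ?_
    rw [hψ, Pi.one_apply, QuotientGroup.eq_one_iff]
  have hk2 : (θ.comp ψ).ker = ⨅ i : T, R i := by
    ext x
    rw [MonoidHom.mem_ker, Subgroup.mem_iInf, funext_iff]
    refine forall_congr' fun i => ?_
    rw [MonoidHom.comp_apply, hθ, hψ, Pi.one_apply]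
    exact QuotientGroup.eq_one_iff (N := R i) x
  have e1 : Nat.card (U.map ψ) = (⨅ i, Q i).relIndex U := by rw [← hk1, Subgroup.relIndex_ker]
  have e2 : Nat.card (U.map (θ.comp ψ)) = (⨅ i : T, R i).relIndex U := by
    rw [← hk2, Subgroup.relIndex_ker]
  have e3 : Nat.card (∀ i, G ⧸ Q i) = ∏ i, (Q i).index := Nat.card_pi
  have e4 : Nat.card (∀ i : T, G ⧸ R i) = ∏ i ∈ T, (R i).index := by
    rw [Nat.card_pi]; exact Finset.prod_coe_sort T (fun i => (R i).index)
  have f1 := Subgroup.card_mul_index (U.map ψ)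
  have f2 := Subgroup.card_mul_index (U.map (θ.comp ψ))
  have f3 : 0 < Nat.card (U.map ψ) := Nat.card_pos
  have f4 : (U.map ψ).index ≤ 2 := by
    by_contra hcon
    have : Nat.card (U.map ψ) * 3 ≤ Nat.card (U.map ψ) * (U.map ψ).index :=
      Nat.mul_le_mul_left _ (by omega)
    rw [f1, e3] at this
    omega
  have f5 : (U.map ψ).index ≠ 0 := Subgroup.index_ne_zero_of_finite
  have f6 : (U.map (θ.comp ψ)).index ∣ (U.map ψ).index := by
    rw [← Subgroup.map_map]
    exact Subgroup.index_map_dvd _ hθs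
  have f7 : (U.map (θ.comp ψ)).index ≤ 2 := (Nat.le_of_dvd (Nat.pos_of_ne_zero f5) f6).trans f4
  rw [e4, e2] at f2
  rw [← f2, mul_comm]
  exact Nat.mul_le_mul_right _ f7

theorem abstract_count (Q : ι → Subgroup G) (U A : Subgroup G) (T : Finset ι) {c : ℕ}
    (hQ : ∀ i, (Q i).index ≠ 0)
    (hprod : ∏ i, (Q i).index ≤ 2 * c) (hc : c ≤ (⨅ i, Q i).relIndex U)
    (hT : ∀ i ∈ T, ∃ x, x ∉ Q i ⊔ A) (hA : A.relIndex U ≠ 0)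
    (hAT : 2 * A.relIndex U ≤ 2 ^ T.card) :
    (∀ i ∈ T, (Q i ⊔ A).index = 2) ∧ ∀ x ∈ U, (∀ i ∈ T, x ∈ Q i ⊔ A) → x ∈ A := by
  have h1 := count_aux Q (fun i => Q i ⊔ A) (fun i => le_sup_left) U T hQ hprod hc
  obtain ⟨B, hB⟩ : ∃ B : Subgroup G, B = ⨅ i : T, (Q i ⊔ A) := ⟨_, rfl⟩
  rw [← hB] at h1
  have hAB : A ≤ B := by rw [hB]; exact le_iInf fun i => le_sup_right
  have h2 : B.relIndex U ≤ A.relIndex U := Subgroup.relIndex_le_of_le_left hAB hA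
  have hk : ∀ i ∈ T, 2 ≤ (Q i ⊔ A).index := by
    intro i hi
    have n0 : (Q i ⊔ A).index ≠ 0 := fun h0 => hQ i (by
      have := Subgroup.index_dvd_of_le (le_sup_left : Q i ≤ Q i ⊔ A)
      rw [h0] at this
      exact Nat.eq_zero_of_zero_dvd this)
    have n1 : (Q i ⊔ A).index ≠ 1 := fun h1 => by
      obtain ⟨x, hx⟩ := hT i hi
      rw [Subgroup.index_eq_one] at h1
      rw [h1] at hx
      exact hx (Subgroup.mem_top x)
    omega
  have h3 : 2 ^ T.card ≤ ∏ i ∈ T, (Q i ⊔ A).index := by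
    rw [← Finset.prod_const]
    exact Finset.prod_le_prod' hk
  constructor
  · intro i hi
    by_contra hne
    have : ∏ i ∈ T, 2 < ∏ i ∈ T, (Q i ⊔ A).index :=
      Finset.prod_lt_prod (fun _ _ => by norm_num) hk ⟨i, hi, lt_of_le_of_ne (hk i hi) (Ne.symm hne)⟩
    rw [Finset.prod_const] at this
    omega
  · intro x hx hxT
    have hxB : x ∈ B := by
      rw [hB, Subgroup.mem_iInf]
      exact fun i => hxT i i.2
    have h4 : B.relIndex U = A.relIndex U := by omega
    have h5 := Subgroup.relIndex_mul_relIndex (A ⊓ U) (B ⊓ U) U (inf_le_inf_right _ hAB) inf_le_right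
    rw [Subgroup.inf_relIndex_right, Subgroup.inf_relIndex_right, h4] at h5
    have h6 : (A ⊓ U).relIndex (B ⊓ U) = 1 := by
      have : (A ⊓ U).relIndex (B ⊓ U) * A.relIndex U = 1 * A.relIndex U := by rw [h5, one_mul]
      exact Nat.eq_of_mul_eq_mul_right (Nat.pos_of_ne_zero hA) this
    exact ((Subgroup.relIndex_eq_one.1 h6) ⟨hxB, hx⟩).1
end

end QH

namespace QH
set_option linter.unusedSectionVars false
set_option linter.unusedSimpArgs false
open scoped WithZero
open WithZero IsDedekindDomain NumberField Module

universe uu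
section
variable {K : Type uu} [Field K] [NumberField K]

theorem SqI_index (w : InfinitePlace K) : (SqI w).index ≠ 0 ∧ (SqI w).index ≤ 2 := by
  apply index_le_two _ (-1)
  intro x
  by_cases hw : w.IsReal
  · have h0 : InfinitePlace.embedding_of_isReal hw (x : K) ≠ 0 := by simp
    rcases lt_or_gt_of_ne h0 with h | h
    · right
      rw [mem_SqI]
      intro _
      simp only [Units.val_mul, Units.val_neg, Units.val_one, neg_mul, one_mul, map_neg]
      linarith
    · left
      rw [mem_SqI]
      exact fun _ => h
  · left
    rw [mem_SqI]
    exact fun h => absurd h hw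

theorem SqI_index_complex (w : InfinitePlace K) (hw : w.IsComplex) : (SqI w).index = 1 := by
  rw [Subgroup.index_eq_one, eq_top_iff]
  intro x _
  rw [mem_SqI]
  exact fun h => absurd hw (InfinitePlace.not_isComplex_iff_isReal.2 h)

theorem prod_SqI : ∏ w : InfinitePlace K, (SqI w).index ≤ 2 ^ InfinitePlace.nrRealPlaces K := by
  classical
  have h1 : ∀ w ∈ (Finset.univ : Finset (InfinitePlace K)),
      (SqI w).index ≤ if w.IsReal then 2 else 1 := by
    intro w _
    split_ifs with h
    · exact (SqI_index w).2
    · exact (SqI_index_complex w (InfinitePlace.not_isReal_iff_isComplex.1 h)).le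
  refine (Finset.prod_le_prod' h1).trans ?_
  rw [Finset.prod_ite, Finset.prod_const, Finset.prod_const, one_pow, mul_one,
    InfinitePlace.nrRealPlaces, Fintype.card_subtype]

/-- the local square classes. -/
noncomputable def SqP (S : Finset (HeightOneSpectrum (𝓞 K))) : S ⊕ InfinitePlace K → Subgroup Kˣ :=
  Sum.elim (fun v => Sq (v.1.valuation K)) SqI

theorem SqP_index (S : Finset (HeightOneSpectrum (𝓞 K))) (i : S ⊕ InfinitePlace K) :
    (SqP S i).index ≠ 0 := by
  rcases i with v | w
  · exact (index_Sq v.1).1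
  · exact (SqI_index w).1

theorem prod_SqP (S : Finset (HeightOneSpectrum (𝓞 K))) : ∏ i, (SqP S i).index ≤
    2 ^ (2 * (S.card + Fintype.card (InfinitePlace K))) := by
  rw [Fintype.prod_sum_type]
  have h1 : ∏ v : S, (SqP S (Sum.inl v)).index = ∏ v ∈ S, (Sq (v.valuation K)).index :=
    Finset.prod_coe_sort S (fun v => (Sq (v.valuation K)).index)
  have h2 : ∏ w, (SqP S (Sum.inr w)).index = ∏ w : InfinitePlace K, (SqI w).index := rfl
  rw [h1, h2]
  refine (Nat.mul_le_mul (prod_index_Sq S) prod_SqI).trans ?_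
  have h3 := InfinitePlace.card_add_two_mul_card_eq_rank K
  have h4 : Fintype.card (InfinitePlace K) = InfinitePlace.nrRealPlaces K +
    InfinitePlace.nrComplexPlaces K := InfinitePlace.card_eq_nrRealPlaces_add_nrComplexPlaces K
  rw [h4, ← h3, show (4 : ℕ) = 2 ^ 2 by norm_num, ← pow_mul, ← pow_add, ← pow_add]
  apply Nat.pow_le_pow_right (by norm_num)
  omega

theorem Nm_le_SqI {a : Kˣ} {w : InfinitePlace K} (h : a ∉ SqI w) :
    Nm (a : K) ≤ SqI w ∧ (-1 : Kˣ) ∉ SqI w := by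
  rw [mem_SqI] at h
  push Not at h
  obtain ⟨hw, ha⟩ := h
  have ha0 : InfinitePlace.embedding_of_isReal hw (a : K) ≠ 0 := by simp
  have ha1 := lt_of_le_of_ne ha ha0
  constructor
  · rintro x ⟨p, q, e⟩
    rw [mem_SqI]
    intro _
    have hx0 : InfinitePlace.embedding_of_isReal hw (x : K) ≠ 0 := by simp
    refine lt_of_le_of_ne ?_ hx0.symm
    rw [e, map_sub, map_mul, map_pow, map_pow]
    nlinarith [sq_nonneg (InfinitePlace.embedding_of_isReal hw p),
      mul_nonneg (neg_nonneg.2 ha) (sq_nonneg (InfinitePlace.embedding_of_isReal hw q))]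
  · intro h1
    have := h1 hw
    simp at this
    linarith

theorem SqP_nondeg (S : Finset (HeightOneSpectrum (𝓞 K))) {a : Kˣ} (i : S ⊕ InfinitePlace K)
    (h : a ∉ SqP S i) : ∃ x, x ∉ SqP S i ⊔ Nm (a : K) := by
  rcases i with v | w
  · exact nondeg (loc_v v.1) h
  · obtain ⟨h1, h2⟩ := Nm_le_SqI (w := w) h
    refine ⟨-1, ?_⟩
    change -1 ∉ SqI w ⊔ _
    rwa [sup_eq_left.2 h1]

open Classical in
theorem DSys.hc {S X : Finset (HeightOneSpectrum (𝓞 K))} {a : Kˣ}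
    {u : HeightOneSpectrum (𝓞 K) → Kˣ} (h : DSys S X a u) (hS : Good S) :
    2 ^ ((S ∪ X).card + Fintype.card (InfinitePlace K)) ≤ (⨅ i, SqP S i).relIndex (US (S ∪ X)) := by
  rw [← relIndex_SqU, ← Subgroup.inf_relIndex_right (⨅ i, SqP S i)]
  apply Subgroup.relIndex_le_of_le_left
  · rintro x ⟨h1, h2⟩
    have h1 := Subgroup.mem_iInf.1 h1
    obtain ⟨y, hy⟩ := h.inj hS h2 (fun v hv => h1 (Sum.inl ⟨v, hv⟩)) (fun w => h1 (Sum.inr w))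
    exact mem_SqU h2 hy
  · rw [Subgroup.inf_relIndex_right]
    apply Subgroup.relIndex_iInf_ne_zero
    intro i h0
    have := Subgroup.relIndex_dvd_index_of_normal (SqP S i) (US (S ∪ X))
    rw [h0] at this
    exact SqP_index S i (Nat.eq_zero_of_zero_dvd this)

open Classical in
theorem DSys.nsp_add {S X : Finset (HeightOneSpectrum (𝓞 K))} {a : Kˣ}
    {u : HeightOneSpectrum (𝓞 K) → Kˣ} (h : DSys S X a u) :
    nsp a (S ∪ X) + (Finset.univ.filter (fun i => a ∉ SqP S i)).card =
      (S ∪ X).card + Fintype.card (InfinitePlace K) := by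
  have hd : Disjoint S X := by
    rw [Finset.disjoint_right]; exact h.disj
  obtain ⟨A, hA⟩ : ∃ A, A = S.filter (fun v => a ∈ Sq (v.valuation K)) := ⟨_, rfl⟩
  have e2 : (S ∪ X).filter (fun v => a ∈ Sq (v.valuation K)) = A ∪ X := by
    rw [Finset.filter_union, Finset.filter_true_of_mem h.sqa, hA]
  have e3 := Finset.card_filter_add_card_filter_not (s := S) (fun v => a ∈ Sq (v.valuation K))
  rw [← hA] at e3
  have e4 : (A ∪ X).card = A.card + X.card :=
    Finset.card_union_of_disjoint (hd.mono_left (by rw [hA]; exact Finset.filter_subset _ _))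
  have e5 := Finset.card_filter_add_card_filter_not (s := Finset.univ)
    (fun w : InfinitePlace K => a ∈ SqI w)
  rw [Finset.card_univ] at e5
  have e6 : (Finset.univ.filter (fun i => a ∉ SqP S i)).card =
      (S.filter (fun v => a ∉ Sq (v.valuation K))).card +
      (Finset.univ.filter (fun w : InfinitePlace K => a ∉ SqI w)).card := by
    rw [Finset.card_filter, Finset.card_filter, Finset.card_filter, Fintype.sum_sum_type,
      ← Finset.sum_coe_sort S]
    rfl
  have e7 : nsp a (S ∪ X) = (A ∪ X).card +
      (Finset.univ.filter (fun w : InfinitePlace K => a ∈ SqI w)).card := by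
    unfold nsp
    rw [← e2]
  rw [e7, e6, e4, Finset.card_union_of_disjoint hd]
  omega

theorem main_count {S : Finset (HeightOneSpectrum (𝓞 K))} (hS : Good S) {a : Kˣ} (haS : a ∈ US S)
    (ha : ∀ y : K, y ^ 2 ≠ a) :
    (∀ i, a ∉ SqP S i → (SqP S i ⊔ Nm (a : K)).index = 2) ∧
    ∀ x ∈ US S, (∀ i, a ∉ SqP S i → x ∈ SqP S i ⊔ Nm (a : K)) → x ∈ Nm (a : K) := by
  classical
  obtain ⟨X, u, h, hcard⟩ := exists_DSys hS haS ha
  obtain ⟨h3, h4⟩ := thmH ha (hS.mono (Finset.subset_union_left (s₂ := X)))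
    (US_mono Finset.subset_union_left haS)
  have hd : Disjoint S X := by
    rw [Finset.disjoint_right]; exact h.disj
  obtain ⟨T, hT⟩ : ∃ T, T = Finset.univ.filter (fun i => a ∉ SqP S i) := ⟨_, rfl⟩
  have hn := h.nsp_add
  have hT' : T.card = (Finset.univ.filter (fun i => a ∉ SqP S i)).card := by rw [hT]
  have hn' : nsp a (S ∪ X) + T.card = (S ∪ X).card + Fintype.card (InfinitePlace K) := by
    rw [hT']; exact hn
  rw [← hn', pow_add, pow_add, pow_one] at h4
  have hAT : 2 * (Nm (a : K)).relIndex (US (S ∪ X)) ≤ 2 ^ T.card := by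
    have h6 : 0 < 2 ^ nsp a (S ∪ X) := by positivity
    refine Nat.le_of_mul_le_mul_left ?_ h6
    calc _ = (Nm (a : K)).relIndex (US (S ∪ X)) * (2 ^ nsp a (S ∪ X) * 2) := by ring
      _ ≤ _ := h4
  have hprod : ∏ i, (SqP S i).index ≤ 2 * 2 ^ ((S ∪ X).card + Fintype.card (InfinitePlace K)) := by
    refine (prod_SqP S).trans ?_
    rw [← pow_succ']
    apply Nat.pow_le_pow_right (by norm_num)
    rw [Finset.card_union_of_disjoint hd]
    omega
  have hTn : ∀ i ∈ T, ∃ x, x ∉ SqP S i ⊔ Nm (a : K) := by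
    intro i hi
    rw [hT, Finset.mem_filter] at hi
    exact SqP_nondeg S i hi.2
  obtain ⟨r1, r2⟩ := abstract_count (SqP S) (US (S ∪ X)) (Nm (a : K)) T (SqP_index S) hprod
    (h.hc hS) hTn h3 hAT
  constructor
  · intro i hi
    exact r1 i (by rw [hT, Finset.mem_filter]; exact ⟨Finset.mem_univ _, hi⟩)
  · intro x hx hxi
    refine r2 x (US_mono Finset.subset_union_left hx) (fun i hi => hxi i ?_)
    rw [hT, Finset.mem_filter] at hi
    exact hi.2

end
end QH

namespace QH
set_option linter.unusedSectionVars false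
set_option linter.unusedSimpArgs false
open scoped WithZero
open WithZero IsDedekindDomain NumberField Module

section
variable {K : Type*} [Field K] [CharZero K] {D : Type*} [DivisionRing D] [Algebra K D]

theorem cs (k : K) (x : D) : algebraMap K D k * x = x * algebraMap K D k := Algebra.commutes k x

theorem sq_eq_sq_D {x : D} {y : K} (h : x * x = algebraMap K D (y ^ 2)) :
    x = algebraMap K D y ∨ x = algebraMap K D (-y) := by
  have : (x - algebraMap K D y) * (x + algebraMap K D y) = 0 := by
    rw [sub_mul, mul_add, mul_add, h, cs y x, map_pow]
    noncomm_ring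
  rcases mul_eq_zero.1 this with h | h
  · left; exact sub_eq_zero.1 h
  · right; rw [map_neg]; exact eq_neg_of_add_eq_zero_left h

theorem quad_ne {a : K} (ha : ∀ y : K, y ^ 2 ≠ a) {p q : K} (h : p ^ 2 - a * q ^ 2 = 0) :
    p = 0 ∧ q = 0 := by
  by_cases hq : q = 0
  · subst hq
    simpa using h
  · exact absurd (by field_simp; linear_combination h) (ha (p / q))

theorem sq_qi {a q : K} {i : D} (hi : i * i = algebraMap K D a) :
    algebraMap K D q * i * (algebraMap K D q * i) = algebraMap K D (a * q ^ 2) := by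
  calc _ = algebraMap K D q * (i * algebraMap K D q) * i := by simp only [mul_assoc]
    _ = algebraMap K D q * algebraMap K D q * (i * i) := by rw [← cs q i]; simp only [mul_assoc]
    _ = _ := by
      rw [hi, ← map_mul, ← map_mul]
      congr 1; ring

theorem two_ne_D (K : Type*) [Field K] [CharZero K] {D : Type*} [DivisionRing D] [Algebra K D] :
    (2 : D) ≠ 0 := by
  have : algebraMap K D 2 ≠ 0 := by simp
  rwa [map_ofNat] at this

theorem indep1 {a : K} (ha : ∀ y : K, y ^ 2 ≠ a) {i : D} (hi : i * i = algebraMap K D a)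
    {p q : K} (h : algebraMap K D p + algebraMap K D q * i = 0) : p = 0 ∧ q = 0 := by
  apply quad_ne ha
  apply (algebraMap K D).injective
  have e : (algebraMap K D p + algebraMap K D q * i) * (algebraMap K D p - algebraMap K D q * i) = 
      algebraMap K D (p ^ 2 - a * q ^ 2) := by
    have h1 : algebraMap K D q * i * (algebraMap K D q * i) = algebraMap K D (a * q ^ 2) :=
      sq_qi hi
    have h2 : algebraMap K D p * (algebraMap K D q * i) = algebraMap K D q * i * algebraMap K D p :=
      cs _ _
    rw [map_sub, ← h1, map_pow, add_mul, mul_sub, mul_sub, h2]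
    noncomm_ring
  rw [← e, h, zero_mul, map_zero]

theorem indep {a : K} (ha : ∀ y : K, y ^ 2 ≠ a) {i j : D} (hi : i * i = algebraMap K D a)
    (hj : j ≠ 0) (hij : j * i = -(i * j)) {p q r s : K}
    (h : algebraMap K D p + algebraMap K D q * i + algebraMap K D r * j + algebraMap K D s * (i * j) = 0) :
    p = 0 ∧ q = 0 ∧ r = 0 ∧ s = 0 := by
  have hi0 : i ≠ 0 := by
    rintro rfl
    rw [mul_zero] at hi
    have : a = 0 := (algebraMap K D).injective (by rw [← hi, map_zero])
    exact ha 0 (by rw [this]; simp)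
  have e1 : (algebraMap K D p + algebraMap K D q * i + algebraMap K D r * j +
      algebraMap K D s * (i * j)) * i = i * (algebraMap K D p + algebraMap K D q * i - 
      (algebraMap K D r * j + algebraMap K D s * (i * j))) := by
    simp only [add_mul, mul_add, mul_sub, mul_assoc, hij]
    rw [cs p i]
    simp only [← mul_assoc, ← cs _ i]
    simp only [mul_assoc, hij, mul_neg]
    abel
  rw [h, zero_mul] at e1
  have e2 := (mul_eq_zero.1 e1.symm).resolve_left hi0
  have e3 : algebraMap K D p + algebraMap K D q * i = 0 := by
    have : (2 : D) * (algebraMap K D p + algebraMap K D q * i) = 0 := by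
      rw [two_mul]
      calc _ = (algebraMap K D p + algebraMap K D q * i + algebraMap K D r * j +
          algebraMap K D s * (i * j)) + (algebraMap K D p + algebraMap K D q * i - 
          (algebraMap K D r * j + algebraMap K D s * (i * j))) := by abel
        _ = 0 := by rw [h, e2, add_zero]
    exact (mul_eq_zero.1 this).resolve_left (two_ne_D K)
  have e4 : (algebraMap K D r + algebraMap K D s * i) * j = 0 := by
    rw [e3, zero_sub, neg_eq_zero] at e2
    rw [add_mul, mul_assoc]; exact e2
  obtain ⟨hp, hq⟩ := indep1 ha hi e3
  obtain ⟨hr, hs⟩ := indep1 ha hi ((mul_eq_zero.1 e4).resolve_right hj)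
  exact ⟨hp, hq, hr, hs⟩

variable [FiniteDimensional K D]

theorem spanD (h4 : finrank K D = 4) {a : K} (ha : ∀ y : K, y ^ 2 ≠ a) {i j : D}
    (hi : i * i = algebraMap K D a) (hj : j ≠ 0) (hij : j * i = -(i * j)) (x : D) :
    ∃ p q r s : K, x = algebraMap K D p + algebraMap K D q * i + algebraMap K D r * j +
      algebraMap K D s * (i * j) := by
  obtain ⟨f, hf⟩ : ∃ f : (Fin 4 → K) →ₗ[K] D, ∀ v, f v = algebraMap K D (v 0) +
      algebraMap K D (v 1) * i + algebraMap K D (v 2) * j + algebraMap K D (v 3) * (i * j) := by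
    refine ⟨Fintype.linearCombination K ![1, i, j, i * j], fun v => ?_⟩
    rw [Fintype.linearCombination_apply, Fin.sum_univ_four]
    simp [Algebra.smul_def]
  have hinj : Function.Injective f := by
    rw [← LinearMap.ker_eq_bot, LinearMap.ker_eq_bot']
    intro v hv
    rw [hf] at hv
    obtain ⟨h0, h1, h2, h3⟩ := indep ha hi hj hij hv
    funext k
    fin_cases k <;> simp [h0, h1, h2, h3]
  have hs := (LinearMap.injective_iff_surjective_of_finrank_eq_finrank (f := f)
    (by rw [h4]; simp)).1 hinj
  obtain ⟨v, hv⟩ := hs x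
  exact ⟨v 0, v 1, v 2, v 3, by rw [← hv, hf]⟩

theorem exists_j (h4 : finrank K D = 4) (hc : Subalgebra.center K D = ⊥) {a : K}
    (ha : ∀ y : K, y ^ 2 ≠ a) {i : D} (hi : i * i = algebraMap K D a) :
    ∃ (j : D) (b : K), j ≠ 0 ∧ j * i = -(i * j) ∧ j * j = algebraMap K D b := by
  have hiK : ∀ k : K, i ≠ algebraMap K D k := by
    rintro k rfl
    rw [← map_mul] at hi
    exact ha k (by rw [pow_two]; exact (algebraMap K D).injective hi)
  obtain ⟨y, hy⟩ : ∃ y : D, y * i ≠ i * y := by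
    by_contra hcon
    push Not at hcon
    have : i ∈ Subalgebra.center K D := Subalgebra.mem_center_iff.2 hcon
    rw [hc, Algebra.mem_bot] at this
    obtain ⟨k, hk⟩ := this
    exact hiK k hk.symm
  obtain ⟨j, hjd⟩ : ∃ j, j = y * i - i * y := ⟨_, rfl⟩
  have hj : j ≠ 0 := by rw [hjd]; exact sub_ne_zero.2 hy
  have hij : j * i = -(i * j) := by
    rw [hjd, sub_mul, mul_sub, mul_assoc, hi, ← mul_assoc i i y, hi, cs, mul_assoc]; abel
  have hji : j * j * i = i * (j * j) := by
    rw [mul_assoc, hij, mul_neg, ← mul_assoc, hij, neg_mul, neg_neg, mul_assoc]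
  have : j * j ∈ Subalgebra.center K D := by
    rw [Subalgebra.mem_center_iff]
    intro x
    obtain ⟨p, q, r, s, rfl⟩ := spanD h4 ha hi hj hij x
    have c1 : Commute (i : D) (j * j) := hji.symm
    have c2 : Commute (j : D) (j * j) := by unfold Commute SemiconjBy; rw [mul_assoc]
    have c0 : ∀ k : K, Commute (algebraMap K D k) (j * j) := fun k => cs k _
    exact ((((c0 p).add_left ((c0 q).mul_left c1)).add_left ((c0 r).mul_left c2)).add_left
      ((c0 s).mul_left (c1.mul_left c2)))
  rw [hc, Algebra.mem_bot] at this
  obtain ⟨b, hb⟩ := this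
  exact ⟨j, b, hj, hij, hb.symm⟩

theorem isoD (h4 : finrank K D = 4) {a b : K}
    (ha : ∀ y : K, y ^ 2 ≠ a) {i j : D} (hi : i * i = algebraMap K D a) (hj : j ≠ 0)
    (hij : j * i = -(i * j)) (hb : j * j = algebraMap K D b) :
    Nonempty (QuaternionAlgebra K a 0 b ≃ₐ[K] D) := by
  let B : QuaternionAlgebra.Basis D a 0 b :=
    { i := i, j := j, k := i * j
      i_mul_i := by rw [hi, Algebra.algebraMap_eq_smul_one]; simp
      j_mul_j := by rw [hb, Algebra.algebraMap_eq_smul_one]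
      i_mul_j := rfl
      j_mul_i := by rw [hij]; simp }
  have hl : ∀ q : QuaternionAlgebra K a 0 b, B.liftHom q = algebraMap K D q.re +
      algebraMap K D q.imI * i + algebraMap K D q.imJ * j + algebraMap K D q.imK * (i * j) := by
    intro q
    change B.lift q = _
    rw [QuaternionAlgebra.Basis.lift]
    simp only [Algebra.smul_def]
    rfl
  refine ⟨AlgEquiv.ofBijective B.liftHom ⟨?_, ?_⟩⟩
  · rw [injective_iff_map_eq_zero]
    intro q hq
    rw [hl] at hq
    obtain ⟨h0, h1, h2, h3⟩ := indep ha hi hj hij hq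
    ext <;> simpa
  · intro x
    obtain ⟨p, q, r, s, rfl⟩ := spanD h4 ha hi hj hij x
    exact ⟨⟨p, q, r, s⟩, by rw [hl]⟩

theorem twist {a b n p q : K} {i j : D} (hi : i * i = algebraMap K D a)
    (hij : j * i = -(i * j)) (hb : j * j = algebraMap K D b) (hn : n = p ^ 2 - a * q ^ 2) :
    ((algebraMap K D p + algebraMap K D q * i) * j) * i =
      -(i * ((algebraMap K D p + algebraMap K D q * i) * j)) ∧
    ((algebraMap K D p + algebraMap K D q * i) * j) * ((algebraMap K D p + algebraMap K D q * i) * j)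
      = algebraMap K D (n * b) := by
  have c0 : ∀ k : K, ∀ x : D, x * algebraMap K D k = algebraMap K D k * x := fun k x => (cs k x).symm
  have hc : i * (algebraMap K D p + algebraMap K D q * i) =
      (algebraMap K D p + algebraMap K D q * i) * i := by
    rw [mul_add, add_mul, c0 p i, ← mul_assoc, c0 q i]
  have hs : j * (algebraMap K D p + algebraMap K D q * i) =
      (algebraMap K D p - algebraMap K D q * i) * j := by
    rw [mul_add, sub_mul, c0 p j, ← mul_assoc, c0 q j, mul_assoc, hij, mul_neg, ← mul_assoc]
    abel
  constructor
  · rw [← mul_assoc i, hc, mul_assoc, hij, mul_neg, mul_assoc]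
  · have e : (algebraMap K D p + algebraMap K D q * i) * (algebraMap K D p - algebraMap K D q * i) = 
        algebraMap K D n := by
      have h1 : algebraMap K D q * i * (algebraMap K D q * i) = algebraMap K D (a * q ^ 2) :=
        sq_qi hi
      have h2 : algebraMap K D p * (algebraMap K D q * i) = algebraMap K D q * i * algebraMap K D p :=
        cs _ _
      rw [hn, map_sub, ← h1, map_pow, add_mul, mul_sub, mul_sub, h2]
      noncomm_ring
    calc _ = (algebraMap K D p + algebraMap K D q * i) * (j * (algebraMap K D p + algebraMap K D q * i)) * j := by
          simp only [mul_assoc]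
      _ = ((algebraMap K D p + algebraMap K D q * i) * (algebraMap K D p - algebraMap K D q * i)) * (j * j) := by
          rw [hs]; simp only [mul_assoc]
      _ = _ := by rw [e, hb, map_mul]

theorem exists_i (h4 : finrank K D = 4) (hc : Subalgebra.center K D = ⊥) :
    ∃ (i : D) (a : K), (∀ y : K, y ^ 2 ≠ a) ∧ i * i = algebraMap K D a := by
  have hbot : ∃ x : D, x ∉ (⊥ : Subalgebra K D) := by
    by_contra hcon
    push Not at hcon
    have : (⊥ : Subalgebra K D) = ⊤ := by rw [eq_top_iff]; exact fun x _ => hcon x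
    have h1 : finrank K (⊤ : Subalgebra K D) = 1 := by rw [← this]; exact Subalgebra.finrank_bot
    rw [subalgebra_top_finrank_eq_submodule_top_finrank, finrank_top, h4] at h1
    omega
  obtain ⟨x, hx⟩ := hbot
  have hxi : IsIntegral K x := Algebra.IsIntegral.isIntegral x
  have hirr := minpoly.irreducible hxi
  have : Fact (Irreducible (minpoly K x)) := ⟨hirr⟩
  let g : AdjoinRoot (minpoly K x) →+* D :=
    Ideal.Quotient.lift _ (Polynomial.aeval (R := K) x).toRingHom (by
      intro p hp
      obtain ⟨r, rfl⟩ := Ideal.mem_span_singleton.1 hp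
      change Polynomial.aeval x _ = 0
      rw [map_mul, minpoly.aeval, zero_mul])
  have hg : ∀ p, g (AdjoinRoot.mk _ p) = Polynomial.aeval x p := fun p => rfl
  let _ : Module (AdjoinRoot (minpoly K x)) D := Module.compHom D g
  have hsm : ∀ (c : AdjoinRoot (minpoly K x)) (d : D), c • d = g c * d := fun c d => rfl
  have hgk : ∀ k : K, g (algebraMap K _ k) = algebraMap K D k := by
    intro k
    rw [AdjoinRoot.algebraMap_eq, ← AdjoinRoot.mk_C, hg, Polynomial.aeval_C]
  have : IsScalarTower K (AdjoinRoot (minpoly K x)) D := by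
    refine ⟨fun k c d => ?_⟩
    rw [hsm, hsm, Algebra.smul_def k c, map_mul, hgk, Algebra.smul_def, mul_assoc]
  have hmul := Module.finrank_mul_finrank K (AdjoinRoot (minpoly K x)) D
  have hdeg : finrank K (AdjoinRoot (minpoly K x)) = (minpoly K x).natDegree := by
    rw [(AdjoinRoot.powerBasis hirr.ne_zero).finrank, AdjoinRoot.powerBasis_dim]
  rw [hdeg, h4] at hmul
  have hn1 : (minpoly K x).natDegree ≠ 1 := by
    intro h1
    apply hx
    rw [Algebra.mem_bot]
    exact minpoly.mem_range_of_degree_eq_one K x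
      ((Polynomial.degree_eq_iff_natDegree_eq_of_pos one_pos).2 h1)
  have hn4 : (minpoly K x).natDegree ≠ 4 := by
    intro h4'
    let gl : AdjoinRoot (minpoly K x) →ₗ[K] D :=
      { toFun := g, map_add' := map_add g, map_smul' := by
          intro k c
          rw [Algebra.smul_def k c, map_mul, hgk, Algebra.smul_def]; rfl }
    have : FiniteDimensional K (AdjoinRoot (minpoly K x)) :=
      (AdjoinRoot.powerBasis hirr.ne_zero).finite
    have hs : Function.Surjective gl :=
      (LinearMap.injective_iff_surjective_of_finrank_eq_finrank (f := gl)
        (by rw [hdeg, h4, h4'])).1 g.injective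
    apply hx
    rw [← hc, Subalgebra.mem_center_iff]
    intro y
    obtain ⟨u, rfl⟩ := hs y
    obtain ⟨v, hv⟩ := hs x
    have hcomm : g u * g v = g v * g u := by rw [← map_mul, mul_comm, map_mul]
    change g v = x at hv
    rw [hv] at hcomm
    exact hcomm
  have hn2 : (minpoly K x).natDegree = 2 := by
    have hd : (minpoly K x).natDegree ∣ 4 := ⟨_, hmul.symm⟩
    have hle := Nat.le_of_dvd (by norm_num) hd
    interval_cases (minpoly K x).natDegree <;> first | rfl | omega
  have hq := minpoly.aeval K x
  have hmon := minpoly.monic hxi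
  rw [Polynomial.aeval_eq_sum_range, hn2, Finset.sum_range_succ, Finset.sum_range_succ,
    Finset.sum_range_one] at hq
  have hlead : (minpoly K x).coeff 2 = 1 := by rw [← hn2]; exact hmon
  rw [hlead] at hq
  generalize (minpoly K x).coeff 1 = p at hq
  generalize (minpoly K x).coeff 0 = q at hq
  simp only [pow_zero, pow_one, map_one, one_mul, Algebra.smul_def, mul_one] at hq
  have hi : (x + algebraMap K D (p / 2)) * (x + algebraMap K D (p / 2)) =
      algebraMap K D ((p / 2) ^ 2 - q) := by
    have hp : algebraMap K D p = algebraMap K D (p / 2) + algebraMap K D (p / 2) := by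
      rw [← map_add]; congr 1; ring
    rw [hp] at hq
    have hx2 : x * x = -(algebraMap K D q + (algebraMap K D (p / 2) + algebraMap K D (p / 2)) * x) := by
      rw [← pow_two]
      exact eq_neg_of_add_eq_zero_right hq
    rw [mul_add, add_mul, add_mul, hx2, map_sub, map_pow, pow_two, ← cs (p / 2) x]
    noncomm_ring
  refine ⟨_, _, ?_, hi⟩
  intro y hy
  rw [← hy] at hi
  apply hx
  rw [Algebra.mem_bot]
  rcases sq_eq_sq_D hi with h | h
  · exact ⟨y - p / 2, by rw [map_sub, ← h]; simp⟩
  · exact ⟨-y - p / 2, by rw [map_sub, ← h]; simp⟩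

end
end QH

namespace QH
set_option linter.unusedSectionVars false
set_option linter.unusedSimpArgs false
open scoped WithZero
open WithZero IsDedekindDomain NumberField Module

universe uu
section
variable {K : Type uu} [Field K] [NumberField K]

def RR (a b β : K) : Prop := ∃ x y z : K, β = a * x ^ 2 + b * (y ^ 2 - a * z ^ 2)

theorem pertP {S : Finset (HeightOneSpectrum (𝓞 K))} {a : Kˣ} (i : S ⊕ InfinitePlace K)
    (ha : a ∉ SqP S i) {q c : Kˣ} {α : K} (hq : q ∈ SqP S i)
    (h : (c : K) = q - a * α ^ 2) : c ∈ SqP S i ⊔ Nm (a : K) := by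
  rcases i with v | w
  · exact pert1 hq (m := 1) (n := α) (by rw [h]; ring)
  · change c ∈ SqI w ⊔ Nm (a : K)
    change a ∉ SqI w at ha
    change q ∈ SqI w at hq
    apply Subgroup.mem_sup_left
    rw [mem_SqI] at ha hq ⊢
    push Not at ha
    obtain ⟨hw, ha⟩ := ha
    intro hw
    have := hq hw
    rw [h, map_sub, map_mul, map_pow]
    nlinarith [sq_nonneg (InfinitePlace.embedding_of_isReal hw α)]

theorem not_aSq {S : Finset (HeightOneSpectrum (𝓞 K))} {a : Kˣ} (i : S ⊕ InfinitePlace K)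
    (ha : a ∉ SqP S i) {q : Kˣ} {α : K} (hq : q ∈ SqP S i) (h : (q : K) = a * α ^ 2) : False := by
  apply ha
  have hα : α ≠ 0 := by
    rintro rfl
    exact q.ne_zero (by rw [h]; simp)
  have e : a = q * ((Units.mk0 α hα)⁻¹) ^ 2 := by
    ext
    push_cast
    rw [h, Units.val_mk0]
    field_simp
  rw [e]
  apply mul_mem hq
  rcases i with v | w
  · exact sq_mem_Sq _
  · exact sq_mem_SqI w _

theorem half {S : Finset (HeightOneSpectrum (𝓞 K))} {a b c : Kˣ}
    (hb : b ∉ Nm (a : K)) (H : ∀ β : K, (∀ y : K, y ^ 2 ≠ β) → RR (a : K) b β → RR (a : K) c β)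
    (i : S ⊕ InfinitePlace K) (hai : a ∉ SqP S i) (h : b ∈ SqP S i ⊔ Nm (a : K)) :
    c ∈ SqP S i ⊔ Nm (a : K) := by
  obtain ⟨q, hq, n, hn, hqn⟩ := Subgroup.mem_sup.1 h
  obtain ⟨p, r, hpr⟩ := mem_Nm.1 hn
  have hbn : b * n ∈ SqP S i := by
    rw [← hqn, mul_assoc, ← pow_two]
    apply mul_mem hq
    rcases i with v | w
    · exact sq_mem_Sq _
    · exact sq_mem_SqI w _
  have hns : ∀ y : K, y ^ 2 ≠ (b : K) * n := by
    intro y hy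
    apply hb
    have hy0 : y ≠ 0 := by
      rintro rfl
      have : ((b * n : Kˣ) : K) = 0 := by push_cast; rw [← hy]; simp
      exact (b * n).ne_zero this
    have e : b = (Units.mk0 y hy0) ^ 2 * n⁻¹ := by
      rw [eq_mul_inv_iff_mul_eq]
      ext
      push_cast
      rw [← hy]; simp
    rw [e]
    exact mul_mem (sq_mem_Nm _ _) (inv_mem hn)
  obtain ⟨α, β, γ, he⟩ := H _ hns ⟨0, p, r, by rw [hpr]; ring⟩
  have hm : β ^ 2 - (a : K) * γ ^ 2 ≠ 0 := by
    intro h0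
    exact not_aSq i hai hbn (α := α) (by push_cast; rw [he, h0]; ring)
  have h1 : c * Units.mk0 _ hm ∈ SqP S i ⊔ Nm (a : K) := by
    apply pertP i hai hbn (α := α)
    push_cast
    rw [he, Units.val_mk0]; ring
  have h2 : Units.mk0 _ hm ∈ SqP S i ⊔ Nm (a : K) :=
    Subgroup.mem_sup_right (mem_Nm.2 ⟨β, γ, rfl⟩)
  exact (Subgroup.mul_mem_cancel_right _ h2).1 h1

theorem pureK {a b c : Kˣ} (ha : ∀ y : K, y ^ 2 ≠ a) (hb : b ∉ Nm (a : K)) (hc : c ∉ Nm (a : K))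
    (H : ∀ β : K, (∀ y : K, y ^ 2 ≠ β) → (RR (a : K) b β ↔ RR (a : K) c β)) :
    b * c ∈ Nm (a : K) := by
  classical
  obtain ⟨S, -, hS, hx⟩ := exists_US (K := K) ∅ {a, b, c}
  obtain ⟨m1, m2⟩ := main_count hS (hx a (by simp)) ha
  apply m2 _ (mul_mem (hx b (by simp)) (hx c (by simp)))
  intro i hai
  rw [Subgroup.mul_mem_iff_of_index_two (m1 i hai)]
  exact ⟨half hb (fun β h => (H β h).1) i hai, half hc (fun β h => (H β h).2) i hai⟩

theorem sq_iff {D : Type*} [DivisionRing D] [Algebra K D] {a b β : K}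
    (e : QuaternionAlgebra K a 0 b ≃ₐ[K] D) (hβ : ∀ y : K, y ^ 2 ≠ β) :
    (∃ x : D, x * x = algebraMap K D β) ↔ RR a b β := by
  constructor
  · rintro ⟨x, hx⟩
    obtain ⟨⟨r, x, y, z⟩, rfl⟩ := e.surjective x
    rw [← map_mul, ← e.commutes] at hx
    have hx := e.injective hx
    rw [QuaternionAlgebra.mk_mul_mk, QuaternionAlgebra.ext_iff] at hx
    obtain ⟨h0, h1, h2, h3⟩ := hx
    simp only [QuaternionAlgebra.algebraMap_eq] at h0 h1 h2 h3
    by_cases hr : r = 0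
    · subst hr
      exact ⟨x, y, z, by rw [← h0]; ring⟩
    · exfalso
      have hx : x = 0 := by
        have : 2 * r * x = 0 := by rw [← h1]; ring
        simpa [hr] using this
      have hy : y = 0 := by
        have : 2 * r * y = 0 := by rw [← h2]; ring
        simpa [hr] using this
      have hz : z = 0 := by
        have : 2 * r * z = 0 := by rw [← h3]; ring
        simpa [hr] using this
      subst hx hy hz
      exact hβ r (by rw [← h0]; ring)
  · rintro ⟨x, y, z, h⟩
    refine ⟨e ⟨0, x, y, z⟩, ?_⟩
    rw [← map_mul, ← e.commutes]
    congr 1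
    rw [QuaternionAlgebra.mk_mul_mk, QuaternionAlgebra.ext_iff]
    simp only [QuaternionAlgebra.algebraMap_eq]
    refine ⟨?_, ?_, ?_, ?_⟩
    · rw [h]; ring
    all_goals ring

theorem not_Nm {D : Type*} [DivisionRing D] [Algebra K D] {a : K} {b : Kˣ}
    (e : QuaternionAlgebra K a 0 (b : K) ≃ₐ[K] D) : b ∉ Nm a := by
  intro h
  obtain ⟨p, q, h⟩ := mem_Nm.1 h
  have e0 : (⟨p, q, 1, 0⟩ : QuaternionAlgebra K a 0 (b : K)) * ⟨p, -q, -1, 0⟩ = 0 := by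
    rw [QuaternionAlgebra.mk_mul_mk, QuaternionAlgebra.ext_iff]
    refine ⟨?_, ?_, ?_, ?_⟩
    · change _ = (0 : K)
      linear_combination -h
    all_goals change _ = (0 : K); ring
  have e1 : e ⟨p, q, 1, 0⟩ * e ⟨p, -q, -1, 0⟩ = 0 := by rw [← map_mul, e0, map_zero]
  rcases mul_eq_zero.1 e1 with h | h
  · have := congrArg QuaternionAlgebra.imJ ((map_eq_zero_iff e e.injective).1 h)
    simp at this
  · have := congrArg QuaternionAlgebra.imJ ((map_eq_zero_iff e e.injective).1 h)
    simp at this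

theorem emb_iff {D : Type*} [DivisionRing D] [Algebra K D] {β : K} :
    Nonempty (QuadraticAlgebra K β 0 →ₐ[K] D) ↔ ∃ x : D, x * x = algebraMap K D β := by
  constructor
  · rintro ⟨f⟩
    refine ⟨f QuadraticAlgebra.omega, ?_⟩
    rw [← map_mul, ← f.commutes, QuadraticAlgebra.omega_mul_omega_eq_add,
      Algebra.algebraMap_eq_smul_one]
    simp
  · rintro ⟨x, hx⟩
    have h1 : x * x = β • 1 + (0 : K) • x := by
      rw [hx, Algebra.algebraMap_eq_smul_one]; simp
    exact ⟨QuadraticAlgebra.lift ⟨_, h1⟩⟩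

universe vv ww

theorem final (D₁ : Type vv) [DivisionRing D₁] [Algebra K D₁] [FiniteDimensional K D₁]
    (hc₁ : Subalgebra.center K D₁ = ⊥) (hd₁ : Module.finrank K D₁ = 4)
    (D₂ : Type ww) [DivisionRing D₂] [Algebra K D₂] [FiniteDimensional K D₂]
    (hc₂ : Subalgebra.center K D₂ = ⊥) (hd₂ : Module.finrank K D₂ = 4)
    (hsub : ∀ (F : Type uu) [Field F] [Algebra K F], Module.finrank K F = 2 →
      (Nonempty (F →ₐ[K] D₁) ↔ Nonempty (F →ₐ[K] D₂))) :
    Nonempty (D₁ ≃ₐ[K] D₂) := by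
  have key : ∀ β : K, (∀ y : K, y ^ 2 ≠ β) →
      ((∃ x : D₁, x * x = algebraMap K D₁ β) ↔ ∃ x : D₂, x * x = algebraMap K D₂ β) := by
    intro β hβ
    have hf : Fact (∀ r : K, r ^ 2 ≠ β + 0 * r) := ⟨fun r => by simpa using hβ r⟩
    rw [← emb_iff, ← emb_iff]
    exact hsub (QuadraticAlgebra K β 0) (QuadraticAlgebra.finrank_eq_two _ _)
  obtain ⟨i₁, a, ha, hi₁⟩ := exists_i hd₁ hc₁
  obtain ⟨i₂, hi₂⟩ := (key a ha).1 ⟨i₁, hi₁⟩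
  obtain ⟨j₁, b, hj₁, hij₁, hb⟩ := exists_j hd₁ hc₁ ha hi₁
  obtain ⟨j₂, c, hj₂, hij₂, hc⟩ := exists_j hd₂ hc₂ ha hi₂
  have ha0 : a ≠ 0 := fun h => ha 0 (by rw [h]; simp)
  have hb0 : b ≠ 0 := by
    rintro rfl
    rw [map_zero] at hb
    exact hj₁ (mul_self_eq_zero.1 hb)
  have hc0 : c ≠ 0 := by
    rintro rfl
    rw [map_zero] at hc
    exact hj₂ (mul_self_eq_zero.1 hc)
  obtain ⟨a, rfl⟩ : ∃ a' : Kˣ, (a' : K) = a := ⟨Units.mk0 a ha0, rfl⟩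
  obtain ⟨b, rfl⟩ : ∃ b' : Kˣ, (b' : K) = b := ⟨Units.mk0 b hb0, rfl⟩
  obtain ⟨c, rfl⟩ : ∃ c' : Kˣ, (c' : K) = c := ⟨Units.mk0 c hc0, rfl⟩
  obtain ⟨e₁⟩ := isoD hd₁ ha hi₁ hj₁ hij₁ hb
  obtain ⟨e₂⟩ := isoD hd₂ ha hi₂ hj₂ hij₂ hc
  have hbc := pureK ha (not_Nm e₁) (not_Nm e₂) (fun β hβ => by
    rw [← sq_iff e₁ hβ, ← sq_iff e₂ hβ]; exact key β hβ)
  obtain ⟨p, q, hpq⟩ := mem_Nm.1 hbc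
  push_cast at hpq
  obtain ⟨t1, t2⟩ := twist (n := (b : K) / c) (p := p / c) (q := q / c) hi₂ hij₂ hc (by
    field_simp; linear_combination hpq)
  rw [div_mul_cancel₀ _ hc0] at t2
  have hj0 : (algebraMap K D₂ (p / c) + algebraMap K D₂ (q / c) * i₂) * j₂ ≠ 0 := by
    intro h
    rw [h, mul_zero] at t2
    exact hb0 ((algebraMap K D₂).injective (by rw [← t2, map_zero]))
  obtain ⟨e₃⟩ := isoD hd₂ ha hi₂ hj0 t1 t2
  exact ⟨e₁.symm.trans e₃⟩

end
end QH

universe u v w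

/-- over a number field `K`, two quaternion division algebras (central
division `K`-algebras of degree 2) with the same quadratic subfields are `K`-isomorphic. -/
theorem quaternion_algebras_over_number_field_with_same_quadratic_subfields_isomorphic
    (K : Type u) [Field K] [NumberField K]
    (D₁ : Type v) [DivisionRing D₁] [Algebra K D₁] [FiniteDimensional K D₁]
    (hc₁ : Subalgebra.center K D₁ = ⊥) (hd₁ : Module.finrank K D₁ = 4)
    (D₂ : Type w) [DivisionRing D₂] [Algebra K D₂] [FiniteDimensional K D₂]
    (hc₂ : Subalgebra.center K D₂ = ⊥) (hd₂ : Module.finrank K D₂ = 4)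
    (hsub : ∀ (F : Type u) [Field F] [Algebra K F], Module.finrank K F = 2 →
      (Nonempty (F →ₐ[K] D₁) ↔ Nonempty (F →ₐ[K] D₂))) :
    Nonempty (D₁ ≃ₐ[K] D₂) := by
  exact QH.final D₁ hc₁ hd₁ D₂ hc₂ hd₂ hsub
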